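/- For i = 1, …, n−1 let f_i ∈ K[z_{i+1}, …, z_n], and let F ∈ R^{l×m} with l < m and rank r (1 ≤ r ≤ l), and suppose d_r(F) is associated to (z_1 − f_1)(z_2 − f_2)⋯(z_{n−1} − f_{n−1}) h, where h ∈ K[z_n]. Then F is equivalent to its Smith form if and only if J_k(F) = R for every k = 1, …, r. -/

import Mathlib

open MvPolynomial Matrix

section Defs

variable {A : Type*} [CommRing A]

/-- The set of all `k × k` minors of a matrix. -/
def minorsSet {l m : ℕ} (F : Matrix (Fin l) (Fin m) A) (k : ℕ) : Set A :=
  { p | ∃ (r : Fin k ↪ Fin l) (c : Fin k ↪ Fin m), p = (F.submatrix ⇑r ⇑c).det }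

/-- `d` is a greatest common divisor of the `k × k` minors of `F`. -/
def IsGcdMinors {l m : ℕ} (F : Matrix (Fin l) (Fin m) A) (k : ℕ) (d : A) : Prop :=
  (∀ p ∈ minorsSet F k, d ∣ p) ∧ ∀ e : A, (∀ p ∈ minorsSet F k, e ∣ p) → e ∣ d

/-- The ideal generated by the `k × k` reduced minors of `F`, relative to a gcd `d`
of the `k × k` minors (the reduced minors are the `v` with `d * v` a minor). -/
def reducedIdeal {l m : ℕ} (F : Matrix (Fin l) (Fin m) A) (k : ℕ) (d : A) : Ideal A :=
  Ideal.span { v : A | d * v ∈ minorsSet F k }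

/-- `J_k(F) = R`: the `k × k` reduced minors of `F` generate the unit ideal. -/
def JkUnit {l m : ℕ} (F : Matrix (Fin l) (Fin m) A) (k : ℕ) : Prop :=
  ∃ d : A, IsGcdMinors F k d ∧ reducedIdeal F k d = ⊤

/-- `F` has rank `r`: some `r × r` minor is nonzero and all `(r+1) × (r+1)` minors vanish. -/
def HasRank {l m : ℕ} (F : Matrix (Fin l) (Fin m) A) (r : ℕ) : Prop :=
  (∃ p ∈ minorsSet F r, p ≠ 0) ∧ ∀ p ∈ minorsSet F (r + 1), p = 0

/-- Equivalence of matrices: `F₁ = U * F₂ * V` for unimodular `U`, `V`. -/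
def MatEquiv {l m : ℕ} (F₁ F₂ : Matrix (Fin l) (Fin m) A) : Prop :=
  ∃ (U : Matrix (Fin l) (Fin l) A) (V : Matrix (Fin m) (Fin m) A),
    IsUnit U.det ∧ IsUnit V.det ∧ F₁ = U * F₂ * V

/-- The rectangular diagonal matrix with diagonal entries `Φ`. -/
def smithDiag {l m : ℕ} (Φ : Fin l → A) : Matrix (Fin l) (Fin m) A :=
  Matrix.of fun i j => if (i : ℕ) = (j : ℕ) then Φ i else 0

/-- `F` (of rank `r`) is equivalent to its Smith form: there are diagonal entries `Φ` such that
for each `i ≤ r` the product `Φ_1 ⋯ Φ_i` is a gcd of the `i × i` minors of `F`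
(i.e. `Φ_i = d_i(F)/d_{i-1}(F)`), `Φ_i = 0` for `i > r`, and `F` is equivalent to
the diagonal matrix with entries `Φ`. -/
def SmithEquivAt {l m : ℕ} (F : Matrix (Fin l) (Fin m) A) (r : ℕ) : Prop :=
  ∃ Φ : Fin l → A,
    (∀ i : Fin l, (i : ℕ) < r →
      IsGcdMinors F ((i : ℕ) + 1) (∏ j ∈ Finset.Iic i, Φ j)) ∧
    (∀ i : Fin l, r ≤ (i : ℕ) → Φ i = 0) ∧
    MatEquiv F (smithDiag Φ)

/-- `F` is equivalent to its Smith form. -/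
def EquivToSmith {l m : ℕ} (F : Matrix (Fin l) (Fin m) A) : Prop :=
  ∃ r : ℕ, HasRank F r ∧ SmithEquivAt F r

end Defs


namespace SF

section DetIdeal
variable {A : Type*} [CommRing A] {ι κ ν : Type*}

/-- ideal generated by all `k × k` minors -/
def detIdeal (F : Matrix ι κ A) (k : ℕ) : Ideal A :=
  Ideal.span {p | ∃ (f : Fin k → ι) (g : Fin k → κ), (F.submatrix f g).det = p}

lemma minor_mem (F : Matrix ι κ A) {k : ℕ} (f : Fin k → ι) (g : Fin k → κ) :
    (F.submatrix f g).det ∈ detIdeal F k := Ideal.subset_span ⟨f, g, rfl⟩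

lemma detIdeal_le {F : Matrix ι κ A} {k : ℕ} {I : Ideal A}
    (h : ∀ (f : Fin k → ι) (g : Fin k → κ), (F.submatrix f g).det ∈ I) : detIdeal F k ≤ I := by
  refine Ideal.span_le.2 ?_
  rintro _ ⟨f, g, rfl⟩
  exact h f g

lemma detIdeal_transpose (F : Matrix ι κ A) (k : ℕ) : detIdeal Fᵀ k = detIdeal F k := by
  apply le_antisymm
  · refine detIdeal_le fun f g => ?_
    rw [← transpose_submatrix, det_transpose]; exact minor_mem _ _ _
  · refine detIdeal_le fun f g => ?_
    rw [← det_transpose, transpose_submatrix]; exact minor_mem _ _ _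

lemma detIdeal_mul_le_right [Fintype κ] (M : Matrix ι κ A) (F : Matrix κ ν A) (k : ℕ) :
    detIdeal (M * F) k ≤ detIdeal F k := by
  classical
  refine detIdeal_le fun f g => ?_
  have h : ((M * F).submatrix f g).det = Matrix.detRowAlternating
      (fun i => ∑ j, M (f i) j • (fun c => F j (g c))) := by
    change Matrix.det _ = Matrix.det _
    congr 1
    ext i c
    simp [Matrix.mul_apply]
  rw [h]
  rw [← AlternatingMap.coe_multilinearMap, MultilinearMap.map_sum]
  refine Ideal.sum_mem _ fun r _ => ?_
  rw [MultilinearMap.map_smul_univ]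
  refine Ideal.mul_mem_left _ _ ?_
  exact minor_mem F r g

lemma detIdeal_mul_le_left [Fintype κ] (M : Matrix ι κ A) (F : Matrix κ ν A) (k : ℕ) :
    detIdeal (M * F) k ≤ detIdeal M k := by
  rw [← detIdeal_transpose, Matrix.transpose_mul, ← detIdeal_transpose M]
  exact detIdeal_mul_le_right _ _ _

lemma detIdeal_submatrix_le {ι' κ' : Type*} (F : Matrix ι κ A) (f : ι' → ι) (g : κ' → κ) (k : ℕ) :
    detIdeal (F.submatrix f g) k ≤ detIdeal F k :=
  detIdeal_le fun f' g' => by rw [submatrix_submatrix]; exact minor_mem _ _ _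

lemma detIdeal_equiv {ι' κ' : Type*} (F : Matrix ι κ A) (f : ι' ≃ ι) (g : κ' ≃ κ) (k : ℕ) :
    detIdeal (F.submatrix f g) k = detIdeal F k := by
  apply le_antisymm (detIdeal_submatrix_le _ _ _ _)
  have := detIdeal_submatrix_le (F.submatrix f g) f.symm g.symm k
  simpa using this

lemma detIdeal_map {B : Type*} [CommRing B] (φ : A →+* B) (F : Matrix ι κ A) (k : ℕ) :
    detIdeal (F.map φ) k = (detIdeal F k).map φ := by
  unfold detIdeal
  rw [Ideal.map_span]
  congr 1
  ext p
  constructor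
  · rintro ⟨f, g, rfl⟩
    refine ⟨_, ⟨f, g, rfl⟩, ?_⟩
    rw [RingHom.map_det]; rfl
  · rintro ⟨_, ⟨f, g, rfl⟩, rfl⟩
    refine ⟨f, g, ?_⟩
    rw [RingHom.map_det]; rfl

lemma detIdeal_zero (F : Matrix ι κ A) : detIdeal F 0 = ⊤ := by
  rw [Ideal.eq_top_iff_one]
  have := minor_mem F (k := 0) Fin.elim0 Fin.elim0
  simpa using this

lemma detIdeal_succ_le (F : Matrix ι κ A) (k : ℕ) : detIdeal F (k+1) ≤ detIdeal F k := by
  refine detIdeal_le fun f g => ?_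
  rw [det_succ_row_zero]
  refine Ideal.sum_mem _ fun j _ => Ideal.mul_mem_left _ _ ?_
  rw [submatrix_submatrix]
  exact minor_mem _ _ _

lemma detIdeal_anti (F : Matrix ι κ A) {k k' : ℕ} (h : k ≤ k') : detIdeal F k' ≤ detIdeal F k := by
  induction h with
  | refl => exact le_rfl
  | step _ ih => exact (detIdeal_succ_le F _).trans ih

lemma detIdeal_eq_bot_of_card [Fintype ι] (F : Matrix ι κ A) {k : ℕ} (h : Fintype.card ι < k) :
    detIdeal F k = ⊥ := by
  rw [eq_bot_iff]
  refine detIdeal_le fun f g => ?_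
  obtain ⟨i, j, hij, hf⟩ := Fintype.exists_ne_map_eq_of_card_lt f (by simpa using h)
  rw [det_zero_of_row_eq hij]
  · simp
  · ext c; simp [hf]

lemma detIdeal_card {n : ℕ} (F : Matrix (Fin n) (Fin n) A) : detIdeal F n = Ideal.span {F.det} := by
  apply le_antisymm
  · refine detIdeal_le fun f g => ?_
    have : F.submatrix f g = (1 : Matrix (Fin n) (Fin n) A).submatrix f id * F *
        (1 : Matrix (Fin n) (Fin n) A).submatrix id g := by
      ext i j; simp [Matrix.mul_apply, one_apply]
    rw [this, det_mul, det_mul, Ideal.mem_span_singleton]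
    exact Dvd.dvd.mul_right (Dvd.intro_left _ rfl) _
  · rw [Ideal.span_le, Set.singleton_subset_iff]
    have := minor_mem F (k := n) id id
    simpa using this

lemma detIdeal_smul (c : A) (F : Matrix ι κ A) (k : ℕ) :
    detIdeal (c • F) k = Ideal.span {c ^ k} * detIdeal F k := by
  apply le_antisymm
  · refine detIdeal_le fun f g => ?_
    have : (c • F).submatrix f g = c • (F.submatrix f g) := rfl
    rw [this, det_smul, Fintype.card_fin]
    exact Ideal.mul_mem_mul (Ideal.mem_span_singleton_self _) (minor_mem _ _ _)
  · unfold detIdeal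
    rw [Ideal.span_mul_span, Ideal.span_le]
    rintro x ⟨_, rfl, _, ⟨f, g, rfl⟩, hx⟩
    refine Ideal.subset_span ⟨f, g, ?_⟩
    have : (c • F).submatrix f g = c • (F.submatrix f g) := rfl
    rw [this, det_smul, Fintype.card_fin]
    simpa using hx

lemma detIdeal_fromBlocks_zero {ι' κ' : Type*} [Fintype ι] [Fintype κ]
    (F : Matrix ι κ A) (k : ℕ) :
    detIdeal (fromBlocks F 0 0 (0 : Matrix ι' κ' A)) k = detIdeal F k := by
  classical
  apply le_antisymm
  · have : fromBlocks F 0 0 (0 : Matrix ι' κ' A) =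
        fromRows (1 : Matrix ι ι A) 0 * (F * fromCols (1 : Matrix κ κ A) 0) := by
      rw [Matrix.mul_fromCols, Matrix.fromRows_mul_fromCols]
      simp
    rw [this]
    exact (detIdeal_mul_le_right _ _ _).trans (detIdeal_mul_le_left _ _ _)
  · have : F = (fromBlocks F 0 0 (0 : Matrix ι' κ' A)).submatrix Sum.inl Sum.inl := by
      ext; simp
    conv_lhs => rw [this]
    exact detIdeal_submatrix_le _ _ _ _

lemma detIdeal_fromBlocks_one (F : Matrix ι κ A) (k : ℕ) :
    detIdeal (fromBlocks (1 : Matrix Unit Unit A) 0 0 F) (k+1) = detIdeal F k := by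
  apply le_antisymm
  · refine detIdeal_le fun f g => ?_
    by_cases hf : Function.Injective f
    swap
    · simp only [Function.Injective, not_forall] at hf
      obtain ⟨i, j, h1, h2⟩ := hf
      rw [det_zero_of_row_eq h2]
      · simp
      · ext c; simp [h1]
    by_cases hg : Function.Injective g
    swap
    · simp only [Function.Injective, not_forall] at hg
      obtain ⟨i, j, h1, h2⟩ := hg
      rw [det_zero_of_column_eq h2]
      · simp
      · intro c; simp [h1]
    by_cases h0 : ∃ i, f i = Sum.inl ()
    · obtain ⟨i, hi⟩ := h0
      rw [det_succ_row _ i]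
      refine Ideal.sum_mem _ fun j _ => ?_
      rcases hgj : g j with ⟨⟩ | c
      · refine Ideal.mul_mem_left _ _ ?_
        have h1 : ∀ i' : Fin k, ∃ a, f (i.succAbove i') = Sum.inr a := by
          intro i'
          rcases hfi : f (i.succAbove i') with ⟨⟩ | a
          · exact absurd (hf (hfi.trans hi.symm)) (Fin.succAbove_ne _ _)
          · exact ⟨a, rfl⟩
        have h2 : ∀ i' : Fin k, ∃ a, g (j.succAbove i') = Sum.inr a := by
          intro i'
          rcases hfi : g (j.succAbove i') with ⟨⟩ | a
          · exact absurd (hg (hfi.trans hgj.symm)) (Fin.succAbove_ne _ _)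
          · exact ⟨a, rfl⟩
        choose f' hf' using h1
        choose g' hg' using h2
        have : ((fromBlocks (1 : Matrix Unit Unit A) 0 0 F).submatrix f g).submatrix
          i.succAbove j.succAbove = F.submatrix f' g' := by
          ext a b
          simp [hf', hg']
        rw [this]
        exact minor_mem _ _ _
      · simp [hi, hgj]
    · have h1 : ∀ i' , ∃ a, f i' = Sum.inr a := by
        intro i'
        rcases hfi : f i' with ⟨⟩ | a
        · exact absurd ⟨i', hfi⟩ h0
        · exact ⟨a, rfl⟩
      choose f' hf' using h1
      by_cases h2 : ∃ i, g i = Sum.inl ()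
      · obtain ⟨j, hj⟩ := h2
        rw [det_eq_zero_of_column_eq_zero j]
        · simp
        · intro i; simp [hf', hj]
      · have h1 : ∀ i' , ∃ a, g i' = Sum.inr a := by
          intro i'
          rcases hfi : g i' with ⟨⟩ | a
          · exact absurd ⟨i', hfi⟩ h2
          · exact ⟨a, rfl⟩
        choose g' hg' using h1
        have : ((fromBlocks (1 : Matrix Unit Unit A) 0 0 F).submatrix f g) = F.submatrix f' g' := by
          ext a b
          simp [hf', hg']
        rw [this]
        exact detIdeal_succ_le _ _ (minor_mem _ _ _)
  · refine detIdeal_le fun f g => ?_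
    have : (F.submatrix f g).det = ((fromBlocks (1 : Matrix Unit Unit A) 0 0 F).submatrix
        (Fin.cons (Sum.inl ()) (fun i => Sum.inr (f i)) : Fin (k+1) → _)
        (Fin.cons (Sum.inl ()) (fun i => Sum.inr (g i)) : Fin (k+1) → _)).det := by
      rw [det_succ_row_zero, Fin.sum_univ_succ]
      simp
      congr 1
    rw [this]
    exact minor_mem _ _ _

end DetIdeal

section MEq
variable {A : Type*} [CommRing A] {ι κ : Type*} [Fintype ι] [Fintype κ] [DecidableEq ι] [DecidableEq κ]

/-- matrix equivalence over general index types -/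
def MEq (F G : Matrix ι κ A) : Prop :=
  ∃ (U : Matrix ι ι A) (V : Matrix κ κ A), IsUnit U.det ∧ IsUnit V.det ∧ F = U * G * V

lemma MEq.refl (F : Matrix ι κ A) : MEq F F := ⟨1, 1, by simp, by simp, by simp⟩

lemma MEq.symm {F G : Matrix ι κ A} (h : MEq F G) : MEq G F := by
  obtain ⟨U, V, hU, hV, rfl⟩ := h
  refine ⟨U⁻¹, V⁻¹, ?_, ?_, ?_⟩
  · exact Matrix.isUnit_nonsing_inv_det U hU
  · exact Matrix.isUnit_nonsing_inv_det V hV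
  · rw [Matrix.mul_assoc U G V, Matrix.nonsing_inv_mul_cancel_left _ _ hU,
      Matrix.mul_nonsing_inv_cancel_right _ _ hV]

lemma MEq.trans {F G H : Matrix ι κ A} (h : MEq F G) (h' : MEq G H) : MEq F H := by
  obtain ⟨U, V, hU, hV, rfl⟩ := h
  obtain ⟨U', V', hU', hV', rfl⟩ := h'
  refine ⟨U * U', V' * V, ?_, ?_, ?_⟩
  · rw [det_mul]; exact hU.mul hU'
  · rw [det_mul]; exact hV'.mul hV
  · simp only [Matrix.mul_assoc]

lemma MEq.left {U : Matrix ι ι A} (hU : IsUnit U.det) (F : Matrix ι κ A) : MEq (U * F) F :=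
  ⟨U, 1, hU, by simp, by simp⟩

lemma MEq.right {V : Matrix κ κ A} (hV : IsUnit V.det) (F : Matrix ι κ A) : MEq (F * V) F :=
  ⟨1, V, by simp, hV, by simp⟩

lemma MEq.transpose {F G : Matrix ι κ A} (h : MEq F G) : MEq Fᵀ Gᵀ := by
  obtain ⟨U, V, hU, hV, rfl⟩ := h
  exact ⟨Vᵀ, Uᵀ, by rwa [det_transpose], by rwa [det_transpose],
    by simp [Matrix.transpose_mul, Matrix.mul_assoc]⟩

lemma MEq.smul {F G : Matrix ι κ A} (c : A) (h : MEq F G) : MEq (c • F) (c • G) := by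
  obtain ⟨U, V, hU, hV, rfl⟩ := h
  exact ⟨U, V, hU, hV, by simp⟩

lemma MEq.map {B : Type*} [CommRing B] (φ : A →+* B) {F G : Matrix ι κ A} (h : MEq F G) :
    MEq (F.map φ) (G.map φ) := by
  obtain ⟨U, V, hU, hV, rfl⟩ := h
  refine ⟨U.map φ, V.map φ, ?_, ?_, by simp [Matrix.map_mul]⟩
  · have := hU.map φ; rwa [RingHom.map_det] at this
  · have := hV.map φ; rwa [RingHom.map_det] at this

lemma MEq.submatrix {ι' κ' : Type*} [Fintype ι'] [Fintype κ'] [DecidableEq ι'] [DecidableEq κ']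
    {F G : Matrix ι κ A} (h : MEq F G) (e : ι' ≃ ι) (e' : κ' ≃ κ) :
    MEq (F.submatrix e e') (G.submatrix e e') := by
  obtain ⟨U, V, hU, hV, rfl⟩ := h
  refine ⟨U.submatrix e e, V.submatrix e' e', by simpa, by simpa, ?_⟩
  rw [Matrix.submatrix_mul_equiv, Matrix.submatrix_mul_equiv]

lemma MEq.fromBlocks {ι' κ' : Type*} [Fintype ι'] [Fintype κ'] [DecidableEq ι'] [DecidableEq κ']
    {F G : Matrix ι κ A} {F' G' : Matrix ι' κ' A} (h : MEq F G) (h' : MEq F' G') :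
    MEq (fromBlocks F 0 0 F') (fromBlocks G 0 0 G') := by
  obtain ⟨U, V, hU, hV, rfl⟩ := h
  obtain ⟨U', V', hU', hV', rfl⟩ := h'
  refine ⟨Matrix.fromBlocks U 0 0 U', Matrix.fromBlocks V 0 0 V', ?_, ?_, ?_⟩
  · rw [det_fromBlocks_zero₂₁]; exact hU.mul hU'
  · rw [det_fromBlocks_zero₂₁]; exact hV.mul hV'
  · simp [Matrix.fromBlocks_multiply]

lemma MEq.detIdeal_le {F G : Matrix ι κ A} (h : MEq F G) (k : ℕ) :
    detIdeal F k ≤ detIdeal G k := by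
  obtain ⟨U, V, hU, hV, rfl⟩ := h
  exact (detIdeal_mul_le_left _ _ _).trans (detIdeal_mul_le_right _ _ _)

lemma MEq.detIdeal_eq {F G : Matrix ι κ A} (h : MEq F G) (k : ℕ) :
    detIdeal F k = detIdeal G k := le_antisymm (h.detIdeal_le k) (h.symm.detIdeal_le k)

lemma isUnit_det_of_mul {U W : Matrix ι ι A} (h : U * W = 1) : IsUnit U.det :=
  (Matrix.isUnit_iff_isUnit_det U).1 (IsUnit.of_mul_eq_one W h)

end MEq

section Left

/-- idempotent matrices split -/
def HQ (A : Type*) [CommRing A] : Prop :=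
  ∀ (l : ℕ) (E : Matrix (Fin l) (Fin l) A), E * E = E →
    ∃ (r : ℕ) (P : Matrix (Fin l) (Fin r) A) (Q : Matrix (Fin r) (Fin l) A), P * Q = E ∧ Q * P = 1

lemma HQ.of_equiv {A B : Type*} [CommRing A] [CommRing B] (e : A ≃+* B) (h : HQ A) : HQ B := by
  intro l E hE
  obtain ⟨r, P, Q, h1, h2⟩ := h l (E.map e.symm) (by
    rw [← Matrix.map_mul, hE])
  refine ⟨r, P.map e, Q.map e, ?_, ?_⟩
  · rw [← Matrix.map_mul, h1]; ext; simp
  · rw [← Matrix.map_mul, h2]; simp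

variable {A : Type*} [CommRing A] {ι κ : Type*}

lemma rank_identity [IsDomain A] (F : Matrix ι κ A) {r : ℕ}
    (h0 : detIdeal F (r+1) = ⊥) (f : Fin r → ι) (g : Fin r → κ)
    (hμ : (F.submatrix f g).det ≠ 0) :
    F.submatrix id g * (F.submatrix f g).adjugate * F.submatrix f id =
      (F.submatrix f g).det • F := by
  ext i j
  set M := F.submatrix f g with hM
  let b : Matrix (Fin r) Unit A := F.submatrix f (fun _ => j)
  let c : Matrix Unit (Fin r) A := F.submatrix (fun _ => i) g
  let N := fromBlocks M b c (F.submatrix (fun _ => i) (fun _ => j) : Matrix Unit Unit A)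
  have hN : N.det = 0 := by
    let e : Fin (r+1) ≃ Fin r ⊕ Unit := finSumFinEquiv.symm.trans
      (Equiv.sumCongr (Equiv.refl _) (Equiv.ofUnique _ _))
    have h1 : N = F.submatrix (Sum.elim f fun _ => i) (Sum.elim g fun _ => j) := by
      ext (a | a) (a' | a') <;> rfl
    have h2 := minor_mem F (k := r+1) ((Sum.elim f fun _ => i) ∘ e) ((Sum.elim g fun _ => j) ∘ e)
    rw [h0, ← submatrix_submatrix, ← h1, det_submatrix_equiv_self] at h2
    simpa using h2
  have h3 : N * fromBlocks 1 (-(M.adjugate * b)) 0 (M.det • (1 : Matrix Unit Unit A)) =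
      fromBlocks M 0 c (M.det • (F.submatrix (fun _ => i) (fun _ => j) : Matrix Unit Unit A)
        - c * (M.adjugate * b)) := by
    simp only [N, Matrix.fromBlocks_multiply]
    congr 1
    · simp
    · rw [Matrix.mul_neg, ← Matrix.mul_assoc, Matrix.mul_adjugate]
      simp
    · simp
    · rw [Matrix.mul_neg, Matrix.mul_smul, Matrix.mul_one]; abel
  have h4 := congrArg Matrix.det h3
  rw [det_mul, hN, zero_mul, det_fromBlocks_zero₁₂, eq_comm, mul_eq_zero] at h4
  have h5 := h4.resolve_left hμ
  rw [det_unique, Matrix.sub_apply, sub_eq_zero] at h5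
  rw [← Matrix.mul_assoc] at h5
  exact h5.symm

lemma smul_inj [IsDomain A] {d : A} (hd0 : d ≠ 0) {X Y : Matrix ι κ A} (h : d • X = d • Y) : X = Y := by
  ext i j
  have := congrFun (congrFun h i) j
  simpa [hd0] using this

lemma left_aux [IsDomain A] [Fintype ι] [Fintype κ] (F : Matrix ι κ A) {r : ℕ} {d : A}
    (hd : detIdeal F r = Ideal.span {d}) (hd0 : d ≠ 0) (h0 : detIdeal F (r+1) = ⊥) :
    ∃ (G : Matrix κ ι A) (E : Matrix ι ι A), F * G = d • E ∧ E * E = E ∧ E * F = F := by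
  classical
  let S : Ideal A :=
    { carrier := {x | ∃ G : Matrix κ ι A, F * G * F = x • F ∧ ∀ i j, d ∣ (F * G) i j}
      add_mem' := by
        rintro x y ⟨G, h1, h2⟩ ⟨G', h1', h2'⟩
        refine ⟨G + G', ?_, ?_⟩
        · rw [Matrix.mul_add, Matrix.add_mul, h1, h1', add_smul]
        · intro i j
          rw [Matrix.mul_add]
          exact dvd_add (h2 i j) (h2' i j)
      zero_mem' := ⟨0, by simp, by simp⟩
      smul_mem' := by
        rintro c x ⟨G, h1, h2⟩
        refine ⟨c • G, ?_, ?_⟩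
        · rw [Matrix.mul_smul, Matrix.smul_mul, h1, smul_smul]; rfl
        · intro i j
          rw [Matrix.mul_smul]
          exact Dvd.dvd.mul_left (h2 i j) _ }
  have hS : detIdeal F r ≤ S := by
    refine detIdeal_le fun f g => ?_
    by_cases hμ : (F.submatrix f g).det = 0
    · rw [hμ]; exact S.zero_mem
    refine ⟨(1 : Matrix κ κ A).submatrix id g * (F.submatrix f g).adjugate *
      (1 : Matrix ι ι A).submatrix f id, ?_, ?_⟩
    · rw [← rank_identity F h0 f g hμ]
      have h1 : F * (1 : Matrix κ κ A).submatrix id g = F.submatrix id g := by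
        ext i j; simp [Matrix.mul_apply, one_apply]
      have h2 : (1 : Matrix ι ι A).submatrix f id * F = F.submatrix f id := by
        ext i j; simp [Matrix.mul_apply, one_apply]
      rw [← Matrix.mul_assoc, ← Matrix.mul_assoc, h1, Matrix.mul_assoc _ _ F, h2]
    · intro i j
      have h1 : F * (1 : Matrix κ κ A).submatrix id g = F.submatrix id g := by
        ext i j; simp [Matrix.mul_apply, one_apply]
      rw [← Matrix.mul_assoc, ← Matrix.mul_assoc, h1, Matrix.mul_apply]
      refine Finset.dvd_sum fun t _ => Dvd.dvd.mul_right ?_ _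
      have h2 : (F.submatrix id g * (F.submatrix f g).adjugate) i t =
          (F.submatrix (Function.update f t i) g).det := by
        have h3 : (F.submatrix (Function.update f t i) g) =
          (F.submatrix f g).updateRow t (fun c => F i (g c)) := by
          ext a b
          by_cases hat : a = t
          · subst hat; simp
          · simp [hat, updateRow_ne]
        rw [h3, ← cramer_transpose_apply, cramer_eq_adjugate_mulVec, ← adjugate_transpose]
        simp [Matrix.mul_apply, mulVec, dotProduct, mul_comm]
      rw [h2, ← Ideal.mem_span_singleton, ← hd]
      exact minor_mem _ _ _
  obtain ⟨G, h1, h2⟩ : d ∈ S := hS (hd ▸ Ideal.mem_span_singleton_self d)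
  choose E hE using h2
  have hE' : F * G = d • Matrix.of E := by
    ext i j; simp [hE i j]
  have hEF : Matrix.of E * F = F := by
    apply smul_inj hd0
    rw [← Matrix.smul_mul, ← hE', h1]
  refine ⟨G, Matrix.of E, hE', ?_, hEF⟩
  apply smul_inj hd0
  rw [← Matrix.mul_smul, ← hE', ← Matrix.mul_assoc, hEF]

lemma HQ.split {l : ℕ} (hQ : HQ A) (E : Matrix (Fin l) (Fin l) A) (hE : E * E = E) :
    ∃ (r s : ℕ) (P : Matrix (Fin l) (Fin r) A) (Q : Matrix (Fin r) (Fin l) A)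
      (P' : Matrix (Fin l) (Fin s) A) (Q' : Matrix (Fin s) (Fin l) A),
      P * Q = E ∧ Q * P = 1 ∧ P' * Q' = 1 - E ∧ Q' * P' = 1 ∧ Q * P' = 0 ∧ Q' * P = 0 := by
  obtain ⟨r, P, Q, h1, h2⟩ := hQ l E hE
  obtain ⟨s, P', Q', h1', h2'⟩ := hQ l (1 - E) (by
    rw [Matrix.mul_sub, Matrix.sub_mul, Matrix.sub_mul]; simp [hE])
  refine ⟨r, s, P, Q, P', Q', h1, h2, h1', h2', ?_, ?_⟩
  · have : Q * P' = (Q * P) * (Q * P') * (Q' * P') := by rw [h2, h2']; simp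
    rw [this]
    have : Q * P * (Q * P') * (Q' * P') = Q * ((P * Q) * (P' * Q')) * P' := by
      simp only [Matrix.mul_assoc]
    rw [this, h1, h1', Matrix.mul_sub, hE]; simp
  · have : Q' * P = (Q' * P') * (Q' * P) * (Q * P) := by rw [h2, h2']; simp
    rw [this]
    have : Q' * P' * (Q' * P) * (Q * P) = Q' * ((P' * Q') * (P * Q)) * P := by
      simp only [Matrix.mul_assoc]
    rw [this, h1, h1', Matrix.sub_mul, hE]; simp

/-- Left factorisation. -/
lemma left_split [IsDomain A] (hQ : HQ A) {l m : ℕ} (F : Matrix (Fin l) (Fin m) A) {r : ℕ} {d : A}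
    (hd : detIdeal F r = Ideal.span {d}) (hd0 : d ≠ 0) (h0 : detIdeal F (r+1) = ⊥) :
    ∃ (s : ℕ) (P : Matrix (Fin l) (Fin r) A) (Q : Matrix (Fin r) (Fin l) A)
      (P' : Matrix (Fin l) (Fin s) A) (Q' : Matrix (Fin s) (Fin l) A) (G : Matrix (Fin m) (Fin r) A),
      P * Q + P' * Q' = 1 ∧ Q * P = 1 ∧ Q' * P' = 1 ∧ Q * P' = 0 ∧ Q' * P = 0 ∧ Q' * F = 0 ∧
      F * G = d • P := by
  obtain ⟨G, E, hG, hE, hEF⟩ := left_aux F hd hd0 h0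
  obtain ⟨ρ, s, P, Q, P', Q', h1, h2, h1', h2', h3, h4⟩ := hQ.split E hE
  have hk0 : ∀ k, r < k → detIdeal F k = ⊥ := fun k hk =>
    eq_bot_iff.2 (h0 ▸ detIdeal_anti F hk)
  have hρ : ρ = r := by
    apply le_antisymm
    · by_contra! hlt
      have h5 : detIdeal (d • E) ρ ≤ detIdeal F ρ := by
        rw [← hG]; exact detIdeal_mul_le_left _ _ _
      rw [detIdeal_smul, hk0 _ hlt] at h5
      have h6 : detIdeal E ρ = ⊤ := by
        rw [eq_top_iff]
        have : (1 : Matrix (Fin ρ) (Fin ρ) A) = Q * E * P := by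
          rw [← h1, ← Matrix.mul_assoc, h2, Matrix.one_mul, h2]
        have h7 := detIdeal_card (1 : Matrix (Fin ρ) (Fin ρ) A)
        rw [det_one, Ideal.span_singleton_one] at h7
        rw [← h7, this]
        exact (detIdeal_mul_le_left _ _ _).trans (detIdeal_mul_le_right _ _ _)
      rw [h6, Ideal.mul_top, le_bot_iff, Ideal.span_singleton_eq_bot] at h5
      exact pow_ne_zero _ hd0 h5
    · by_contra! hlt
      have h5 : F = P * (Q * F) := by rw [← Matrix.mul_assoc, h1, hEF]
      have h6 : detIdeal F r ≤ detIdeal (Q * F) r := by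
        conv_lhs => rw [h5]
        exact detIdeal_mul_le_right _ _ _
      rw [detIdeal_eq_bot_of_card (Q * F) (by simpa using hlt), hd, le_bot_iff,
        Ideal.span_singleton_eq_bot] at h6
      exact hd0 h6
  subst hρ
  refine ⟨s, P, Q, P', Q', G * P, ?_, h2, h2', h3, h4, ?_, ?_⟩
  · rw [h1, h1']; abel
  · have : Q' * F = (Q' * P') * (Q' * F) := by rw [h2']; simp
    rw [this, ← Matrix.mul_assoc, Matrix.mul_assoc Q' P' Q', h1', Matrix.mul_assoc, Matrix.sub_mul,
      hEF]; simp
  · rw [← Matrix.mul_assoc, hG, ← h1, Matrix.smul_mul, Matrix.mul_assoc, h2]; simp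

/-- the splitting of `Fin l` into two blocks -/
def blk {r s l : ℕ} (h : r + s = l) : Fin r ⊕ Fin s ≃ Fin l := finSumFinEquiv.trans (finCongr h)

lemma detIdeal_fromRows_zero {ν : Type*} [Fintype ι] (F : Matrix ι κ A) (k : ℕ) :
    detIdeal (fromRows F (0 : Matrix ν κ A)) k = detIdeal F k := by
  classical
  apply le_antisymm
  · have : fromRows F (0 : Matrix ν κ A) = fromRows (1 : Matrix ι ι A) 0 * F := by
      rw [Matrix.fromRows_mul]; simp
    rw [this]
    exact detIdeal_mul_le_right _ _ _
  · have : F = (fromRows F (0 : Matrix ν κ A)).submatrix Sum.inl id := by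
      ext; simp
    conv_lhs => rw [this]
    exact detIdeal_submatrix_le _ _ _ _

lemma left_form [IsDomain A] (hQ : HQ A) {l m : ℕ} (F : Matrix (Fin l) (Fin m) A) {r : ℕ} {d : A}
    (hd : detIdeal F r = Ideal.span {d}) (hd0 : d ≠ 0) (h0 : detIdeal F (r+1) = ⊥) :
    ∃ (s : ℕ) (hs : r + s = l) (U : Matrix (Fin l) (Fin l) A) (F1 : Matrix (Fin r) (Fin m) A),
      IsUnit U.det ∧ (U * F).submatrix (blk hs) id = fromRows F1 0 := by
  have : Nontrivial A := inferInstance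
  obtain ⟨s, P, Q, P', Q', G, h1, h2, h3, h4, h5, h6, h7⟩ := left_split hQ F hd hd0 h0
  have e1 : fromCols P P' * fromRows Q Q' = 1 := by rw [fromCols_mul_fromRows, h1]
  have e2 : fromRows Q Q' * fromCols P P' = 1 := by
    rw [fromRows_mul_fromCols, h2, h3, h4, h5, fromBlocks_one]
  have hs : r + s = l := by
    have := Matrix.square_of_invertible _ _ e2 e1
    simpa using this
  refine ⟨s, hs, (fromRows Q Q').submatrix (blk hs).symm id, Q * F, ?_, ?_⟩
  · refine isUnit_det_of_mul (W := (fromCols P P').submatrix id (blk hs).symm) ?_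
    have := Matrix.submatrix_mul (fromRows Q Q') (fromCols P P') (blk hs).symm id (blk hs).symm
      Function.bijective_id
    rw [← this, e2, submatrix_one_equiv]
  · ext (i | i) j
    · simp [Matrix.mul_apply]
    · have := congrFun (congrFun h6 i) j
      simpa [Matrix.mul_apply] using this

lemma right_form [IsDomain A] (hQ : HQ A) {l m : ℕ} (F : Matrix (Fin l) (Fin m) A) {r : ℕ} {d : A}
    (hd : detIdeal F r = Ideal.span {d}) (hd0 : d ≠ 0) (h0 : detIdeal F (r+1) = ⊥) :
    ∃ (s : ℕ) (hs : r + s = m) (V : Matrix (Fin m) (Fin m) A) (F1 : Matrix (Fin l) (Fin r) A),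
      IsUnit V.det ∧ (F * V).submatrix id (blk hs) = fromCols F1 0 := by
  obtain ⟨s, hs, U, F1, hU, h⟩ := left_form hQ Fᵀ (by rwa [detIdeal_transpose]) hd0
    (by rwa [detIdeal_transpose])
  refine ⟨s, hs, Uᵀ, F1ᵀ, by rwa [det_transpose], ?_⟩
  have := congrArg Matrix.transpose h
  rw [transpose_submatrix, Matrix.transpose_mul, transpose_transpose, transpose_fromRows] at this
  simpa using this

/-- unimodular vector in the image when the top determinantal ideal is trivial -/
lemma unimodular_image [IsDomain A] (hQ : HQ A) {l m : ℕ} (F : Matrix (Fin l) (Fin m) A) {r : ℕ}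
    (hd : detIdeal F (r+1) = ⊤) (h0 : detIdeal F (r+2) = ⊥) :
    ∃ (v : Fin m → A), Ideal.span (Set.range (F *ᵥ v)) = ⊤ := by
  obtain ⟨s, P, Q, P', Q', G, h1, h2, h3, h4, h5, h6, h7⟩ := left_split hQ F (d := 1)
    (by rw [hd, Ideal.span_singleton_one]) one_ne_zero h0
  refine ⟨fun i => G i 0, ?_⟩
  have : F *ᵥ (fun i => G i 0) = fun i => P i 0 := by
    ext i
    have := congrFun (congrFun h7 i) 0
    simpa [Matrix.mul_apply, mulVec, dotProduct] using this
  rw [this, Ideal.eq_top_iff_one]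
  have h8 := congrFun (congrFun h2 0) 0
  rw [Matrix.mul_apply, one_apply_eq] at h8
  rw [← h8]
  exact Ideal.sum_mem _ fun i _ => Ideal.mul_mem_left _ _ (Ideal.subset_span ⟨i, rfl⟩)

lemma complete_aux [Nontrivial A] (hQ : HQ A) {r : ℕ} (a v : Fin (r+1) → A) (hav : a ⬝ᵥ v = 1) :
    ∃ V : Matrix (Fin (r+1)) (Fin (r+1)) A, IsUnit V.det ∧ (∀ i, V i 0 = v i) ∧
      a ᵥ* V = Pi.single 0 1 := by
  let E : Matrix (Fin (r+1)) (Fin (r+1)) A := 1 - vecMulVec v a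
  have hvv : vecMulVec v a * vecMulVec v a = vecMulVec v a := by
    rw [vecMulVec_mul_vecMulVec, hav]; simp
  obtain ⟨ρ, P, Q, h1, h2⟩ := hQ _ E (by
    simp only [E]
    rw [Matrix.mul_sub, Matrix.sub_mul, Matrix.sub_mul, hvv]; simp)
  let v' : Matrix (Fin (r+1)) (Fin 1) A := Matrix.of fun i _ => v i
  let a' : Matrix (Fin 1) (Fin (r+1)) A := Matrix.of fun _ i => a i
  have hva : v' * a' = vecMulVec v a := by
    ext i j; simp [Matrix.mul_apply, v', a', vecMulVec_apply]
  have hav' : a' * v' = 1 := by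
    ext i j
    rw [Subsingleton.elim i j, one_apply_eq]
    exact hav
  have haE : a' * E = 0 := by
    simp only [E]
    rw [Matrix.mul_sub, ← hva, ← Matrix.mul_assoc, hav']; simp
  have hEv : E * v' = 0 := by
    simp only [E]
    rw [Matrix.sub_mul, ← hva, Matrix.mul_assoc, hav']; simp
  have haP : a' * P = 0 := by
    have : a' * P = a' * (P * Q) * P := by rw [Matrix.mul_assoc, Matrix.mul_assoc, h2]; simp
    rw [this, h1, haE]; simp
  have hQv : Q * v' = 0 := by
    have : Q * v' = Q * ((P * Q) * v') := by
      rw [← Matrix.mul_assoc, ← Matrix.mul_assoc, h2]; simp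
    rw [this, h1, hEv]; simp
  have e1 : fromCols v' P * fromRows a' Q = 1 := by
    rw [fromCols_mul_fromRows, h1, hva]; simp [E]
  have e2 : fromRows a' Q * fromCols v' P = 1 := by
    rw [fromRows_mul_fromCols, hav', haP, hQv, h2, fromBlocks_one]
  have hs : 1 + ρ = r + 1 := by
    have := Matrix.square_of_invertible _ _ e2 e1
    simpa using this
  have hb0 : (blk hs).symm 0 = Sum.inl 0 := by
    rw [Equiv.symm_apply_eq]; ext; simp [blk]
  refine ⟨(fromCols v' P).submatrix id (blk hs).symm, ?_, ?_, ?_⟩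
  · refine isUnit_det_of_mul (W := (fromRows a' Q).submatrix (blk hs).symm id) ?_
    rw [Matrix.submatrix_mul_equiv, e1, submatrix_id_id]
  · intro i
    simp [hb0, v']
  · ext j
    obtain ⟨x, rfl⟩ := (blk hs).surjective j
    have h3 : a' * fromCols v' P = fromCols 1 0 := by rw [mul_fromCols, hav', haP]
    have h4 := congrFun (congrFun h3 0) x
    have h5 : (a ᵥ* (fromCols v' P).submatrix id (blk hs).symm) (blk hs x) =
      (a' * fromCols v' P) 0 x := by
      simp [vecMul, dotProduct, Matrix.mul_apply, a']
    rw [h5, h4]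
    rcases x with x | x
    · rw [Subsingleton.elim x 0]
      have : blk hs (Sum.inl 0) = 0 := by rw [← hb0]; simp
      rw [this]; simp
    · have : blk hs (Sum.inr x) ≠ 0 := by
        rw [Ne, ← Equiv.eq_symm_apply, hb0]; simp
      rw [Pi.single_eq_of_ne this]; simp

end Left
end SF


set_option linter.unusedSectionVars false
set_option linter.unusedSimpArgs false

namespace SF

section Orb
variable {A : Type*} [CommRing A] {ι : Type*} [Fintype ι] [DecidableEq ι]

/-- `v` can be moved to `w` modulo `J` by a matrix of determinant one -/
def Orb (J : Ideal A) (v w : ι → A) : Prop :=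
  ∃ U : Matrix ι ι A, U.det = 1 ∧ ∀ i, (U *ᵥ v) i - w i ∈ J

lemma mulVec_mem {J : Ideal A} (U : Matrix ι ι A) {x : ι → A} (h : ∀ i, x i ∈ J) (i : ι) :
    (U *ᵥ x) i ∈ J :=
  Ideal.sum_mem _ fun j _ => Ideal.mul_mem_left _ _ (h j)

lemma Orb.of_congr {J : Ideal A} {v w : ι → A} (h : ∀ i, v i - w i ∈ J) : Orb J v w :=
  ⟨1, det_one, by simpa using h⟩

lemma Orb.refl (J : Ideal A) (v : ι → A) : Orb J v v := Orb.of_congr (by simp)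

lemma Orb.of_eq {J : Ideal A} {v w : ι → A} {U : Matrix ι ι A} (hU : U.det = 1)
    (h : U *ᵥ v = w) : Orb J v w := ⟨U, hU, by simp [h]⟩

lemma Orb.trans {J : Ideal A} {u v w : ι → A} (h : Orb J u v) (h' : Orb J v w) : Orb J u w := by
  obtain ⟨U, hU, h⟩ := h
  obtain ⟨V, hV, h'⟩ := h'
  refine ⟨V * U, by rw [det_mul, hU, hV, one_mul], fun i => ?_⟩
  have h1 := mulVec_mem V (x := U *ᵥ u - v) h i
  rw [mulVec_sub, mulVec_mulVec] at h1
  have := J.add_mem h1 (h' i)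
  simpa using this

lemma Orb.symm {J : Ideal A} {v w : ι → A} (h : Orb J v w) : Orb J w v := by
  obtain ⟨U, hU, h⟩ := h
  refine ⟨U.adjugate, by rw [det_adjugate, hU, one_pow], fun i => ?_⟩
  have h1 := mulVec_mem U.adjugate (x := U *ᵥ v - w) h i
  rw [mulVec_sub, mulVec_mulVec, adjugate_mul, hU, one_smul, one_mulVec] at h1
  have := J.neg_mem h1
  simpa using this

lemma Orb.mono {J J' : Ideal A} (hJ : J ≤ J') {v w : ι → A} (h : Orb J v w) : Orb J' v w := by
  obtain ⟨U, hU, h⟩ := h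
  exact ⟨U, hU, fun i => hJ (h i)⟩

lemma Orb.map {B : Type*} [CommRing B] (φ : A →+* B) {J : Ideal A} {v w : ι → A}
    (h : Orb J v w) : Orb (J.map φ) (fun i => φ (v i)) (fun i => φ (w i)) := by
  obtain ⟨U, hU, h⟩ := h
  refine ⟨U.map φ, ?_, fun i => ?_⟩
  · have := congrArg φ hU
    rw [RingHom.map_det, map_one] at this
    exact this
  · have := Ideal.mem_map_of_mem φ (h i)
    rw [map_sub] at this
    simpa [mulVec, dotProduct] using this

lemma Orb.span_le {J : Ideal A} {v w : ι → A} (h : Orb J v w) :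
    Ideal.span (Set.range w) ≤ Ideal.span (Set.range v) ⊔ J := by
  obtain ⟨U, hU, h⟩ := h
  rw [Ideal.span_le]
  rintro _ ⟨i, rfl⟩
  have : w i = (U *ᵥ v) i - ((U *ᵥ v) i - w i) := by ring
  rw [this]
  refine Ideal.sub_mem _ (Ideal.mem_sup_left ?_) (Ideal.mem_sup_right (h i))
  exact mulVec_mem (J := Ideal.span (Set.range v)) U (fun j => Ideal.subset_span ⟨j, rfl⟩) i

lemma Orb.span_top {J : Ideal A} {v w : ι → A} (h : Orb J v w)
    (hv : Ideal.span (Set.range v) ⊔ J = ⊤) : Ideal.span (Set.range w) ⊔ J = ⊤ := by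
  rw [eq_top_iff, ← hv]
  exact sup_le h.symm.span_le le_sup_right

lemma Orb.row {J : Ideal A} (v : ι → A) (i : ι) (c : ι → A) (hc : c i = 1) :
    Orb J v (Function.update v i (c ⬝ᵥ v)) := by
  refine Orb.of_eq (U := (1 : Matrix ι ι A).updateRow i (∑ k, c k • (1 : Matrix ι ι A) k)) ?_ ?_
  · rw [det_updateRow_sum, hc, det_one, smul_eq_mul, one_mul]
  · have : (∑ k, c k • (1 : Matrix ι ι A) k) = c := by
      ext j; simp [one_apply]
    rw [this]
    ext j
    by_cases hj : j = i
    · subst hj; simp [mulVec]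
    · have h1 : (updateRow (1 : Matrix ι ι A) i c) j = (1 : Matrix ι ι A) j := by
        ext; rw [updateRow_ne hj]
      rw [Function.update_of_ne hj, mulVec, h1]
      have := congrFun (one_mulVec v) j
      exact this

lemma Orb.col {J : Ideal A} (v : ι → A) (i : ι) (c : ι → A) (hc : c i = 0) :
    Orb J v (fun j => v j + c j * v i) := by
  let c' : ι → A := fun j => if j = i then 1 else c j
  refine Orb.of_eq (U := (1 : Matrix ι ι A).updateCol i
    (fun k => ∑ j, c' j • (1 : Matrix ι ι A) k j)) ?_ ?_
  · rw [det_updateCol_sum]; simp [c']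
  · have : (fun k => ∑ j, c' j • (1 : Matrix ι ι A) k j) = c' := by
      ext j; simp [one_apply]
    rw [this]
    have : (1 : Matrix ι ι A).updateCol i c' = 1 + Matrix.of (fun a b => if b = i then c a else 0) := by
      ext a b
      by_cases hb : b = i
      · subst hb
        by_cases ha : a = b
        · subst ha; simp [c', hc]
        · simp [c', ha]
      · simp [updateCol_ne hb, hb]
    rw [this, add_mulVec, one_mulVec]
    ext j
    simp [mulVec, dotProduct]

end Orb

section SR
variable {A : Type*} [CommRing A] {ι : Type*} [Fintype ι] [DecidableEq ι]

lemma sr_lemma {τ : Type*} [Finite τ] (M : τ → Ideal A) (hM : Pairwise fun i j => IsCoprime (M i) (M j))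
    (v : ι → A) (i0 : ι) (S : Set ι) (hi0 : i0 ∈ S) (hv : ∀ j, ∃ i ∈ S, v i ∉ M j) :
    ∃ c : ι → A, c i0 = 1 ∧ (∀ i, i ∉ S → c i = 0) ∧ ∀ j, c ⬝ᵥ v ∉ M j := by
  classical
  choose t htS ht using hv
  have hx : ∀ i : ι, ∃ x : A, ∀ j, x - (if v i0 ∉ M j then 0 else if t j = i then 1 else 0) ∈ M j := by
    intro i
    obtain ⟨x, hx⟩ := Ideal.exists_forall_sub_mem_ideal hM
      (fun j => (if v i0 ∉ M j then 0 else if t j = i then 1 else 0 : A))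
    exact ⟨x, hx⟩
  choose x hx using hx
  refine ⟨fun i => if i = i0 then 1 else if i ∈ S then x i else 0, by simp, ?_, ?_⟩
  · intro i hi
    have : i ≠ i0 := fun h => hi (h ▸ hi0)
    simp [this, hi]
  · intro j hj
    have h1 : ∀ i, (if i = i0 then 1 else if i ∈ S then x i else 0) * v i -
        (if v i0 ∉ M j then (if i = i0 then v i0 else 0) else if i = t j then v (t j) else 0) ∈ M j := by
      intro i
      by_cases hvi : v i0 ∈ M j
      · have hti : t j ≠ i0 := fun h => ht j (h ▸ hvi)
        by_cases hi : i = i0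
        · subst hi
          simp [hvi, hti.symm]
        · have h2 := hx i j
          by_cases hiS : i ∈ S
          · simp only [hvi, not_true_eq_false, if_false, hi, hiS, if_true] at h2 ⊢
            have h3 := (M j).mul_mem_right (v i) h2
            rw [sub_mul] at h3
            by_cases hit : i = t j
            · subst hit; simpa using h3
            · have : t j ≠ i := fun h => hit h.symm
              simpa [hit, this] using h3
          · have : i ≠ t j := fun h => hiS (h ▸ htS j)
            simp [hi, hiS, hvi, this]
      · by_cases hi : i = i0
        · subst hi
          simp [hvi]
        · have h2 := hx i j
          simp only [hvi, not_false_eq_true, if_true, sub_zero] at h2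
          by_cases hiS : i ∈ S
          · simpa [hi, hiS, hvi] using (M j).mul_mem_right (v i) h2
          · simp [hi, hiS, hvi]
    have h3 := (M j).sum_mem (fun i (_ : i ∈ Finset.univ) => h1 i)
    rw [Finset.sum_sub_distrib] at h3
    have h4 := (M j).sub_mem hj h3
    simp only [dotProduct, sub_sub_cancel] at h4
    by_cases hvi : v i0 ∈ M j
    · simp only [hvi, not_true_eq_false, if_false, Finset.sum_ite_eq', Finset.mem_univ, if_true] at h4
      exact ht j h4
    · simp only [hvi, not_false_eq_true, if_true, Finset.sum_ite_eq', Finset.mem_univ, if_true] at h4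

end SR
end SF


set_option linter.unusedSectionVars false
set_option linter.unusedSimpArgs false

namespace SF
open Polynomial in
lemma comp_sub_dvd {A : Type*} [CommRing A] (p a b : Polynomial A) : a - b ∣ p.comp a - p.comp b := by
  have := Polynomial.sub_dvd_eval_sub a b (p.map Polynomial.C)
  rwa [Polynomial.eval_map, Polynomial.eval_map] at this

/-- a nonzero constant in `(p, w)` when `p` is monic and `p, w` generate modulo a maximal ideal -/
lemma exists_const {A : Type*} [CommRing A] (p w : Polynomial A) (hp : p.Monic) (m : Ideal A)
    (hm : m.map Polynomial.C ⊔ Ideal.span {p, w} = ⊤) :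
    ∃ c : A, c - 1 ∈ m ∧ ∃ g h, g * p + h * w = Polynomial.C c := by
  set I : Ideal (Polynomial A) := Ideal.span {p, w} with hI
  have hfin0 : Module.Finite A (Polynomial A ⧸ Ideal.span {p}) := hp.finite_quotient
  have hle : Ideal.span {p} ≤ I := Ideal.span_mono (by simp)
  have hfin : Module.Finite A (Polynomial A ⧸ I) :=
    Module.Finite.of_surjective (Ideal.Quotient.factorₐ A hle).toLinearMap
      (Ideal.Quotient.factor_surjective hle)
  obtain ⟨c, hc1, hc⟩ := Submodule.exists_sub_one_mem_and_smul_eq_zero_of_fg_of_le_smul m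
    (⊤ : Submodule A (Polynomial A ⧸ I)) hfin.1 (by
      rw [Ideal.smul_top_eq_map]
      have : m.map (algebraMap A (Polynomial A ⧸ I)) = ⊤ := by
        rw [IsScalarTower.algebraMap_eq A (Polynomial A) (Polynomial A ⧸ I), ← Ideal.map_map,
          Ideal.Quotient.algebraMap_eq, Polynomial.algebraMap_eq]
        rw [← Ideal.comap_eq_top_iff (f := Ideal.Quotient.mk I),
          Ideal.comap_map_of_surjective _ Ideal.Quotient.mk_surjective]
        rw [← RingHom.ker_eq_comap_bot, Ideal.mk_ker]
        exact hm
      rw [this]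
      intro x _; trivial)
  refine ⟨c, hc1, ?_⟩
  have h1 := hc 1 trivial
  have h2 : Polynomial.C c ∈ I := by
    rw [← Ideal.Quotient.eq_zero_iff_mem, ← h1]
    exact Algebra.algebraMap_eq_smul_one (A := Polynomial A ⧸ I) c
  rw [hI, Ideal.mem_span_pair] at h2
  exact h2

/-- the evaluation of a vector of polynomials -/
noncomputable def vcomp {A ι : Type*} [CommRing A] (v : ι → Polynomial A) (b : Polynomial A) : ι → Polynomial A :=
  fun i => (v i).comp b

lemma dot_comp {A ι : Type*} [CommRing A] [Fintype ι] (d v : ι → Polynomial A) (y : Polynomial A) :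
    (d ⬝ᵥ v).comp y = vcomp d y ⬝ᵥ vcomp v y := by
  simp only [dotProduct, vcomp]
  rw [← Polynomial.coe_compRingHom_apply, map_sum]
  simp

/-- the key step -/
lemma const_move {A σ : Type*} [CommRing A] [IsDomain A] [Fintype σ] [DecidableEq σ]
    (u : Fin 2 ⊕ σ → Polynomial A) (c : A) (hc : c ≠ 0) (g h : Polynomial A)
    (hgh : g * u (Sum.inl 0) + h * u (Sum.inl 1) = Polynomial.C c) (b z : Polynomial A) :
    Orb ⊥ (vcomp u b) (vcomp u (b + Polynomial.C c * z)) := by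
  set b' := b + Polynomial.C c * z with hb'
  have hq : ∀ p : Polynomial A, ∃ q, p.comp b' = p.comp b + Polynomial.C c * (z * q) := by
    intro p
    obtain ⟨q, hq⟩ := comp_sub_dvd p b' b
    refine ⟨q, ?_⟩
    rw [hb', add_sub_cancel_left] at hq
    rw [← mul_assoc, ← hq]; ring
  choose q hq using hq
  have hghb : ∀ y : Polynomial A, g.comp y * (u (Sum.inl 0)).comp y + h.comp y * (u (Sum.inl 1)).comp y = Polynomial.C c := by
    intro y
    have := congrArg (fun p => p.comp y) hgh
    simpa using this
  let p0 := u (Sum.inl 0)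
  let p1 := u (Sum.inl 1)
  let N : Polynomial A → Matrix (Fin 2) (Fin 2) (Polynomial A) := fun y =>
    !![p0.comp y, -h.comp y; p1.comp y, g.comp y]
  let Q : Matrix (Fin 2) (Fin 2) (Polynomial A) := !![q p0, - q h; q p1, q g]
  have hN : ∀ y, (N y).det = Polynomial.C c := by
    intro y
    rw [← hghb y]
    simp only [N, det_fin_two_of, p0, p1]; ring
  let M : Matrix (Fin 2) (Fin 2) (Polynomial A) := 1 + z • (Q * (N b).adjugate)
  have hMN : M * N b = N b' := by
    simp only [M]
    rw [Matrix.add_mul, Matrix.smul_mul, Matrix.mul_assoc, adjugate_mul, hN, Matrix.one_mul]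
    refine Matrix.ext fun i j => ?_
    fin_cases i <;> fin_cases j <;> simp [N, Q, hq] <;> ring
  have hM : M.det = 1 := by
    have := congrArg Matrix.det hMN
    rw [det_mul, hN, hN] at this
    exact mul_right_cancel₀ (Polynomial.C_ne_zero.2 hc) (by rw [this, one_mul])
  let L : Matrix σ (Fin 2) (Polynomial A) := Matrix.of fun i j =>
    z * q (u (Sum.inr i)) * ![g.comp b, h.comp b] j
  refine Orb.of_eq (U := fromBlocks M 0 L 1) ?_ ?_
  · rw [det_fromBlocks_zero₁₂, hM, det_one, one_mul]
  · rw [fromBlocks_mulVec]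
    ext1 (i | i)
    · have h1 := congrFun (congrFun hMN i) 0
      have h2 : ∀ y, vcomp u y ∘ Sum.inl = fun i => N y i 0 := by
        intro y; ext1 i; fin_cases i <;> simp [N, vcomp, p0, p1]
      have h3 := congrFun (h2 b') i
      simp only [Function.comp] at h3
      rw [h3, ← h1, Sum.elim_inl, h2 b]
      rw [Matrix.mul_apply, zero_mulVec, add_zero]; rfl
    · simp only [Sum.elim_inr, one_mulVec, Pi.add_apply, mulVec, dotProduct, Function.comp,
        Fin.sum_univ_two, L, vcomp, Matrix.of_apply, cons_val_zero, cons_val_one]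
      rw [hq (u (Sum.inr i)), ← hghb b]
      ring

lemma suslin_lemma {A σ : Type*} [CommRing A] [IsDomain A] [Fintype σ] [DecidableEq σ]
    (H : Ideal A) (v : Fin 2 ⊕ σ → Polynomial A) (hv0 : (v (Sum.inl 0)).Monic)
    (hv : Ideal.span (Set.range v) ⊔ H.map Polynomial.C = ⊤) :
    Orb (H.map Polynomial.C) v (fun i => Polynomial.C ((v i).eval 0)) := by
  classical
  let 𝔠 : Ideal A :=
    { carrier := {c | ∀ b z, Orb ⊥ (vcomp v b) (vcomp v (b + Polynomial.C c * z))}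
      add_mem' := by
        intro c c' hc hc' b z
        have := (hc b z).trans (hc' (b + Polynomial.C c * z) z)
        rw [map_add, add_mul, ← add_assoc]
        exact this
      zero_mem' := by
        intro b z
        simp only [map_zero, zero_mul, add_zero]
        exact Orb.refl _ _
      smul_mem' := by
        intro a c hc b z
        have := hc b (Polynomial.C a * z)
        rw [← mul_assoc, ← map_mul, mul_comm c a] at this
        exact this }
  have htop : 𝔠 ⊔ H = ⊤ := by
    by_contra hne
    obtain ⟨m, hm, hle⟩ := Ideal.exists_le_maximal _ hne
    have hmH : H ≤ m := le_sup_right.trans hle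
    let _ := Ideal.Quotient.field m
    let φ : Polynomial A →+* Polynomial (A ⧸ m) := Polynomial.mapRingHom (Ideal.Quotient.mk m)
    have hφ : Function.Surjective φ := Polynomial.map_surjective _ Ideal.Quotient.mk_surjective
    have hker : RingHom.ker φ = m.map Polynomial.C := by
      simp only [φ, Polynomial.ker_mapRingHom, Ideal.mk_ker]
    have hv0' : φ (v (Sum.inl 0)) ≠ 0 := (hv0.map _).ne_zero
    have hvtop : Ideal.span (Set.range fun i => φ (v i)) = ⊤ := by
      have := congrArg (Ideal.map φ) hv
      rw [Ideal.map_sup, Ideal.map_top, Ideal.map_span, ← Set.range_comp] at this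
      have h2 : (H.map Polynomial.C).map φ = ⊥ := by
        rw [eq_bot_iff, Ideal.map_le_iff_le_comap, ← RingHom.ker_eq_comap_bot, hker]
        exact Ideal.map_mono hmH
      rw [h2, sup_bot_eq] at this
      exact this
    let T := (UniqueFactorizationMonoid.primeFactors (φ (v (Sum.inl 0))))
    have hTmem : ∀ π ∈ UniqueFactorizationMonoid.normalizedFactors (φ (v (Sum.inl 0))), π ∈ T := by
      intro π hπ
      simp only [T, UniqueFactorizationMonoid.primeFactors, Multiset.mem_toFinset]
      exact hπ
    have hT : ∀ π ∈ T, Prime π ∧ π ∣ φ (v (Sum.inl 0)) := by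
      intro π hπ
      simp only [T, UniqueFactorizationMonoid.primeFactors, Multiset.mem_toFinset] at hπ
      exact ⟨UniqueFactorizationMonoid.prime_of_normalized_factor _ hπ,
        UniqueFactorizationMonoid.dvd_of_mem_normalizedFactors hπ⟩
    let Mi : T → Ideal (Polynomial (A ⧸ m)) := fun π => Ideal.span {π.1}
    have hmax : ∀ j, (Mi j).IsMaximal := fun j =>
      PrincipalIdealRing.isMaximal_of_irreducible (hT j.1 j.2).1.irreducible
    obtain ⟨c, hc0, hcS, hcM⟩ := sr_lemma Mi (by
      intro i j hij
      rw [Ideal.isCoprime_iff_sup_eq]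
      refine Ideal.IsMaximal.coprime_of_ne (hmax i) (hmax j) ?_
      intro h
      apply hij
      simp only [Mi] at h
      rw [Ideal.span_singleton_eq_span_singleton] at h
      ext1
      have hi := i.2
      have hj := j.2
      simp only [T, UniqueFactorizationMonoid.primeFactors, Multiset.mem_toFinset] at hi hj
      exact (UniqueFactorizationMonoid.normalize_normalized_factor _ hi).symm.trans
        ((normalize_eq_normalize_iff_associated.2 h).trans
        (UniqueFactorizationMonoid.normalize_normalized_factor _ hj)))
      (fun i => φ (v i)) (Sum.inl 1) {Sum.inl 0}ᶜ (by simp) (by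
        intro j
        by_contra! hcon
        apply (hmax j).ne_top
        rw [eq_top_iff, ← hvtop, Ideal.span_le]
        rintro _ ⟨i, rfl⟩
        by_cases hi : i = Sum.inl 0
        · subst hi
          exact Ideal.mem_span_singleton.2 (hT j.1 j.2).2
        · exact hcon i hi)
    have hlift : ∀ i, ∃ d : Polynomial A, φ d = c i ∧ (i = Sum.inl 1 → d = 1) := by
      intro i
      by_cases hi : i = Sum.inl 1
      · exact ⟨1, by rw [hi, hc0, map_one], fun _ => rfl⟩
      · obtain ⟨d, hd⟩ := hφ (c i)
        exact ⟨d, hd, fun h => absurd h hi⟩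
    choose d hd hd1 using hlift
    let w := d ⬝ᵥ v
    have hφw : φ w = c ⬝ᵥ (fun i => φ (v i)) := by
      simp only [w, dotProduct, map_sum, map_mul, hd]
    have hcop : IsCoprime (φ (v (Sum.inl 0))) (φ w) := by
      rw [← Ideal.isCoprime_span_singleton_iff, Ideal.isCoprime_iff_sup_eq]
      by_contra hne'
      obtain ⟨n, hn, hnle⟩ := Ideal.exists_le_maximal _ hne'
      have h1 : φ (v (Sum.inl 0)) ∈ n := hnle (Ideal.mem_sup_left (Ideal.mem_span_singleton_self _))
      have h2 : φ w ∈ n := hnle (Ideal.mem_sup_right (Ideal.mem_span_singleton_self _))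
      have hnp := hn.isPrime
      obtain ⟨π, hπ⟩ : ∃ π ∈ T, π ∈ n := by
        have h3 := UniqueFactorizationMonoid.prod_normalizedFactors hv0'
        have h4 : (UniqueFactorizationMonoid.normalizedFactors (φ (v (Sum.inl 0)))).prod ∈ n :=
          Ideal.mem_of_dvd n h3.symm.dvd h1 
        obtain ⟨π, h5, h6⟩ := (Ideal.IsPrime.multiset_prod_mem_iff_exists_mem hnp _).1 h4
        exact ⟨π, hTmem π h5, h6⟩
      have h7 : Mi ⟨π, hπ.1⟩ = n := (hmax ⟨π, hπ.1⟩).eq_of_le hn.ne_top (by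
        simp only [Mi]; rw [Ideal.span_singleton_le_iff_mem]; exact hπ.2)
      exact hcM ⟨π, hπ.1⟩ (by rw [h7, ← hφw]; exact h2)
    obtain ⟨k, hk1, g, h, hgh⟩ := exists_const (v (Sum.inl 0)) w hv0 m (by
      rw [← hker]
      obtain ⟨x, y, hxy⟩ := hcop
      obtain ⟨x, rfl⟩ := hφ x
      obtain ⟨y, rfl⟩ := hφ y
      rw [Ideal.eq_top_iff_one]
      have : (1 : Polynomial A) = (1 - (x * v (Sum.inl 0) + y * w)) + (x * v (Sum.inl 0) + y * w) := by ring
      rw [this]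
      refine Ideal.add_mem _ (Ideal.mem_sup_left ?_) (Ideal.mem_sup_right ?_)
      · rw [RingHom.mem_ker, map_sub, map_add, map_mul, map_mul, hxy, map_one, sub_self]
      · exact Ideal.mem_span_pair.2 ⟨x, y, rfl⟩)
    have hkm : k ∉ m := by
      intro hkm
      apply hm.ne_top
      rw [Ideal.eq_top_iff_one]
      have := m.sub_mem hkm hk1
      simpa using this
    apply hkm
    apply hle
    refine Ideal.mem_sup_left ?_
    intro b z
    let u := Function.update v (Sum.inl 1) w
    have hvu : ∀ y, Orb ⊥ (vcomp v y) (vcomp u y) := by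
      intro y
      have h1 := Orb.row (J := ⊥) (vcomp v y) (Sum.inl 1) (vcomp d y) (by
        simp [vcomp, hd1])
      have h2 : Function.update (vcomp v y) (Sum.inl 1) (vcomp d y ⬝ᵥ vcomp v y) = vcomp u y := by
        ext1 i
        by_cases hi : i = Sum.inl 1
        · subst hi
          rw [Function.update_self, ← dot_comp]
          simp [u, vcomp, w]
        · simp [hi, u, vcomp]
      rwa [h2] at h1
    refine (hvu b).trans (Orb.trans ?_ (hvu _).symm)
    have hk0 : k ≠ 0 := fun h => hkm (h ▸ m.zero_mem)
    refine const_move u k hk0 g h ?_ b z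
    simpa [u] using hgh
  obtain ⟨c, hc, h, hh, hch⟩ := Submodule.mem_sup.1 ((Ideal.eq_top_iff_one _).1 htop)
  have h1 := hc Polynomial.X (-Polynomial.X)
  have h2 : vcomp v Polynomial.X = v := by ext1 i; simp [vcomp]
  have h3 : Polynomial.X + Polynomial.C c * (-Polynomial.X) = Polynomial.C h * Polynomial.X := by
    have : c = 1 - h := by rw [← hch]; ring
    rw [this, map_sub, map_one]; ring
  rw [h2, h3] at h1
  refine (h1.mono bot_le).trans (Orb.of_congr fun i => ?_)
  have h4 := comp_sub_dvd (v i) (Polynomial.C h * Polynomial.X) 0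
  rw [sub_zero, Polynomial.comp_zero] at h4
  refine Ideal.mem_of_dvd _ h4 (Ideal.mul_mem_right _ _ (Ideal.mem_map_of_mem _ hh))

end SF

set_option linter.unusedSectionVars false
set_option linter.unusedSimpArgs false

namespace SF
section Shear
variable {B : Type*} [CommRing B] (N k : ℕ)

/-- shear substitution -/
noncomputable def shear (c : B) :
    MvPolynomial (Fin (k + 1)) B →ₐ[B] MvPolynomial (Fin (k + 1)) B :=
  aeval fun i ↦ if i = 0 then X 0 else X i + c • X 0 ^ (N ^ i.1)

lemma shear_comp (c : B) : (shear N k c).comp (shear N k (-c)) = AlgHom.id _ _ := by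
  unfold shear
  rw [comp_aeval, ← MvPolynomial.aeval_X_left]
  ext i v
  cases i using Fin.cases <;> simp

/-- the change of variables -/
noncomputable def theta (B : Type*) [CommRing B] (N k : ℕ) :
    MvPolynomial (Fin (k + 1)) B ≃ₐ[B] Polynomial (MvPolynomial (Fin k) B) :=
  (AlgEquiv.ofAlgHom (shear N k (1 : B)) (shear N k (-1))
  (shear_comp N k 1) (by simpa using shear_comp N k (-1 : B))).trans (finSuccEquiv B k)

lemma weight_inj (hN : 1 < N) {v w : Fin (k+1) →₀ ℕ} (hv : ∀ i, v i < N) (hw : ∀ i, w i < N)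
    (h : ∑ x : Fin (k + 1), N ^ x.1 * v x = ∑ x : Fin (k + 1), N ^ x.1 * w x) : v = w := by
  refine Finsupp.ext <| congrFun <| List.ofFn_inj.mp ?_
  apply Nat.ofDigits_inj_of_len_eq hN (by simp) (by intro x hx; obtain ⟨i, rfl⟩ := (List.mem_ofFn' _ _).1 hx; exact hv i)
    (by intro x hx; obtain ⟨i, rfl⟩ := (List.mem_ofFn' _ _).1 hx; exact hw i)
  simpa only [Nat.ofDigits_eq_sum_mapIdx, List.mapIdx_eq_ofFn, List.get_ofFn, List.length_ofFn,
    Fin.val_cast, mul_comm, List.sum_ofFn] using! h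

lemma theta_monomial [Nontrivial B] (hN : 1 < N) (v : Fin (k+1) →₀ ℕ) (a : B) :
    ∃ P : Polynomial (MvPolynomial (Fin k) B), P.Monic ∧
      P.natDegree = ∑ x : Fin (k + 1), N ^ x.1 * v x ∧
      theta B N k (monomial v a) = Polynomial.C (C a) * P := by
  have h1 : ∀ i : Fin k, ((Polynomial.X : Polynomial (MvPolynomial (Fin k) B)) ^ (N ^ (i.succ).1)
      + Polynomial.C (X i)).Monic := fun i =>
    Polynomial.monic_X_pow_add_C _ (by positivity)
  refine ⟨Polynomial.X ^ v 0 * ∏ i : Fin k,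
    (Polynomial.X ^ (N ^ (i.succ).1) + Polynomial.C (X i)) ^ v i.succ, ?_, ?_, ?_⟩
  · exact (Polynomial.monic_X_pow _).mul (Polynomial.monic_prod_of_monic _ _
      fun i _ => (h1 i).pow _)
  · rw [(Polynomial.monic_X_pow _).natDegree_mul (Polynomial.monic_prod_of_monic _ _
      fun i _ => (h1 i).pow _), Polynomial.natDegree_prod_of_monic _ _ (fun i _ => (h1 i).pow _),
      Fin.sum_univ_succ]
    congr 1
    · simp
    · refine Finset.sum_congr rfl fun i _ => ?_
      rw [(h1 i).natDegree_pow, Polynomial.natDegree_X_pow_add_C, mul_comm]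
  · rw [monomial_eq, Finsupp.prod_pow v fun a ↦ X a]
    simp only [theta, shear, Fin.prod_univ_succ, map_mul, map_prod, map_pow, AlgEquiv.trans_apply,
      AlgEquiv.ofAlgHom_apply, MvPolynomial.aeval_C, MvPolynomial.aeval_X, if_pos, Fin.succ_ne_zero,
      ite_false, one_smul, map_add, finSuccEquiv_X_zero, finSuccEquiv_X_succ, algebraMap_eq]
    congr 1
    · rw [finSuccEquiv_apply, eval₂Hom_C]; rfl
    · congr 1
      refine Finset.prod_congr rfl fun i _ => ?_
      rw [add_comm]

lemma theta_lead [Nontrivial B] (f : MvPolynomial (Fin (k+1)) B) (hN : 1 < N)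
    (hfN : f.totalDegree < N) (M : Ideal B) (hf : f ∉ M.map C) :
    ∃ (D : ℕ) (c : B), c ∉ M ∧ (theta B N k f).coeff D - C c ∈ M.map C ∧
      ∀ d, D < d → (theta B N k f).coeff d ∈ M.map (C : B →+* MvPolynomial (Fin k) B) := by
  classical
  let w : (Fin (k+1) →₀ ℕ) → ℕ := fun v => ∑ x : Fin (k + 1), N ^ x.1 * v x
  let S := f.support.filter fun v => f.coeff v ∉ M
  have hS : S.Nonempty := by
    rw [MvPolynomial.mem_map_C_iff] at hf
    push Not at hf
    obtain ⟨v, hv⟩ := hf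
    refine ⟨v, ?_⟩
    simp only [S, Finset.mem_filter]
    exact ⟨MvPolynomial.mem_support_iff.2 (fun h => hv (h ▸ M.zero_mem)), hv⟩
  obtain ⟨v0, hv0, hmax⟩ := S.exists_max_image w hS
  simp only [S, Finset.mem_filter] at hv0 hmax
  have hlt : ∀ v ∈ f.support, ∀ i, v i < N := fun v hv i =>
    lt_of_le_of_lt ((monomial_le_degreeOf i hv).trans (degreeOf_le_totalDegree f i)) hfN
  have hcoef : ∀ d, (theta B N k f).coeff d =
      ∑ v ∈ f.support, (theta B N k (monomial v (f.coeff v))).coeff d := by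
    intro d
    conv_lhs => rw [f.as_sum, map_sum, Polynomial.finsetSum_coeff]
  have hterm : ∀ v ∈ f.support, ∀ d, w v0 ≤ d → (v ≠ v0 ∨ w v0 < d) →
      (theta B N k (monomial v (f.coeff v))).coeff d ∈ M.map (C : B →+* MvPolynomial (Fin k) B) := by
    intro v hv d hd hor
    obtain ⟨P, hP, hPd, hPe⟩ := theta_monomial N k hN v (f.coeff v)
    rw [hPe, Polynomial.coeff_C_mul]
    by_cases hvM : f.coeff v ∈ M
    · exact Ideal.mul_mem_right _ _ (Ideal.mem_map_of_mem _ hvM)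
    · have hle : w v ≤ w v0 := hmax v ⟨hv, hvM⟩
      have hlt' : w v < d := by
        rcases hor with h | h
        · refine lt_of_lt_of_le (lt_of_le_of_ne hle fun he => h ?_) hd
          exact weight_inj N k hN (hlt v hv) (hlt v0 hv0.1) he
        · exact lt_of_le_of_lt hle h
      rw [Polynomial.coeff_eq_zero_of_natDegree_lt (by rw [hPd]; exact hlt'), mul_zero]
      exact Ideal.zero_mem _
  refine ⟨w v0, f.coeff v0, hv0.2, ?_, ?_⟩
  · rw [hcoef, ← Finset.add_sum_erase _ _ hv0.1]
    obtain ⟨P, hP, hPd, hPe⟩ := theta_monomial N k hN v0 (f.coeff v0)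
    have h2 : (theta B N k (monomial v0 (f.coeff v0))).coeff (w v0) = C (f.coeff v0) := by
      rw [hPe, Polynomial.coeff_C_mul]
      have : P.coeff (w v0) = 1 := by
        have := hP.coeff_natDegree
        rwa [hPd] at this
      rw [this, mul_one]
    rw [h2, add_sub_cancel_left]
    refine Ideal.sum_mem _ fun v hv => ?_
    rw [Finset.mem_erase] at hv
    exact hterm v hv.2 _ le_rfl (Or.inl hv.1)
  · intro d hd
    rw [hcoef]
    exact Ideal.sum_mem _ fun v hv => hterm v hv d hd.le (Or.inr hd)

end Shear

section PropP
variable {B : Type*} [CommRing B]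

lemma mem_map_C_iInf {τ σ : Type*} (M : τ → Ideal B) (f : MvPolynomial σ B) :
    f ∈ (⨅ j, M j).map C ↔ ∀ j, f ∈ (M j).map C := by
  simp only [MvPolynomial.mem_map_C_iff, Ideal.mem_iInf]
  exact forall_comm

lemma base_case {τ σ : Type*} [Finite τ] [Fintype σ] [DecidableEq σ] (M : τ → Ideal B)
    (hmax : ∀ j, (M j).IsMaximal) (hM : Pairwise fun i j => IsCoprime (M i) (M j))
    (v : Fin 2 ⊕ σ → B) (hv : Ideal.span (Set.range v) ⊔ (⨅ j, M j) = ⊤) :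
    Orb (⨅ j, M j) v (Pi.single (Sum.inl 0) 1) := by
  classical
  obtain ⟨c, hc1, -, hc⟩ := sr_lemma M hM v (Sum.inl 1) Set.univ trivial (by
    intro j
    by_contra! hcon
    apply (hmax j).ne_top
    rw [eq_top_iff, ← hv]
    refine sup_le ?_ (iInf_le _ j)
    rw [Ideal.span_le]
    rintro _ ⟨i, rfl⟩
    exact hcon i trivial)
  refine (Orb.row v (Sum.inl 1) c hc1).trans ?_
  set u := Function.update v (Sum.inl 1) (c ⬝ᵥ v) with hu
  have hu1 : ∀ j, u (Sum.inl 1) ∉ M j := by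
    intro j; simp only [hu, Function.update_self]; exact hc j
  have hinv : ∀ j, ∃ y, u (Sum.inl 1) * y - 1 ∈ M j := by
    intro j
    obtain ⟨y, z, hz, hyz⟩ := (hmax j).exists_inv (hu1 j)
    refine ⟨y, ?_⟩
    rw [← hyz]
    have : u (Sum.inl 1) * y - (y * u (Sum.inl 1) + z) = - z := by ring
    rw [this]; exact (M j).neg_mem hz
  choose y hy using hinv
  obtain ⟨x, hx⟩ := Ideal.exists_forall_sub_mem_ideal hM y
  have hxu : u (Sum.inl 1) * x - 1 ∈ ⨅ j, M j := by
    rw [Ideal.mem_iInf]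
    intro j
    have := (M j).add_mem ((M j).mul_mem_left (u (Sum.inl 1)) (hx j)) (hy j)
    rw [mul_sub] at this
    simpa using this
  refine (Orb.col u (Sum.inl 1) (Pi.single (Sum.inl 0) (x * (1 - u (Sum.inl 0)))) (by simp)).trans ?_
  set u' : Fin 2 ⊕ σ → B := (fun j => u j +
    (Pi.single (Sum.inl 0) (x * (1 - u (Sum.inl 0))) : Fin 2 ⊕ σ → B) j * u (Sum.inl 1)) with hu'
  have hu'0 : u' (Sum.inl 0) - 1 ∈ ⨅ j, M j := by
    have : u' (Sum.inl 0) - 1 = (1 - u (Sum.inl 0)) * (u (Sum.inl 1) * x - 1) := by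
      simp [hu']; ring
    rw [this]
    exact Ideal.mul_mem_left _ _ hxu
  refine (Orb.col u' (Sum.inl 0) (fun j => if j = Sum.inl 0 then 0 else - u' j) (by simp)).trans ?_
  refine Orb.of_congr fun i => ?_
  by_cases hi : i = Sum.inl 0
  · subst hi; simpa using hu'0
  · simp only [hi, if_false, Pi.single_eq_of_ne hi]
    have := Ideal.mul_mem_left _ (- u' i) hu'0
    convert! this using 1
    ring

lemma Orb.of_equiv {A A' ι : Type*} [CommRing A] [CommRing A'] [Algebra B A] [Algebra B A'] [Fintype ι]
    [DecidableEq ι] (e : A ≃ₐ[B] A') (H : Ideal B) (v w : ι → A)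
    (h : Orb (H.map (algebraMap B A')) (fun i => e (v i)) (fun i => e (w i))) :
    Orb (H.map (algebraMap B A)) v w := by
  have := h.map (e.symm : A' →+* A)
  rw [Ideal.map_map] at this
  have h2 : ((e.symm : A' →+* A).comp (algebraMap B A')) = algebraMap B A := by
    ext x; simp
  rw [h2] at this
  simpa using this

lemma span_equiv {A A' ι : Type*} [CommRing A] [CommRing A'] [Algebra B A] [Algebra B A']
    (e : A →ₐ[B] A') (H : Ideal B) (v : ι → A)
    (h : Ideal.span (Set.range v) ⊔ H.map (algebraMap B A) = ⊤) :
    Ideal.span (Set.range fun i => e (v i)) ⊔ H.map (algebraMap B A') = ⊤ := by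
  have := congrArg (Ideal.map (e : A →+* A')) h
  rw [Ideal.map_sup, Ideal.map_top, Ideal.map_span, ← Set.range_comp, Ideal.map_map] at this
  have h2 : ((e : A →+* A').comp (algebraMap B A)) = algebraMap B A' := by
    ext x; simp
  rw [h2] at this
  exact this

theorem propP {τ σ : Type*} [Finite τ] [Fintype σ] [DecidableEq σ] [IsDomain B] (M : τ → Ideal B)
    (hmax : ∀ j, (M j).IsMaximal) (hM : Pairwise fun i j => IsCoprime (M i) (M j)) (k : ℕ) :
    ∀ (v : Fin 2 ⊕ σ → MvPolynomial (Fin k) B),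
    Ideal.span (Set.range v) ⊔ (⨅ j, M j).map C = ⊤ →
    Orb ((⨅ j, M j).map C) v (Pi.single (Sum.inl 0) 1) := by
  classical
  have : Fintype τ := Fintype.ofFinite τ
  set H := ⨅ j, M j with hH
  induction k with
  | zero =>
    intro v hv
    refine Orb.of_equiv (isEmptyAlgEquiv B (Fin 0)) H v _ ?_
    have h1 := span_equiv ((isEmptyAlgEquiv B (Fin 0) : MvPolynomial (Fin 0) B →ₐ[B] B)) H v hv
    rw [Algebra.algebraMap_self, Ideal.map_id] at h1 ⊢
    have h2 := base_case M hmax hM _ h1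
    convert! h2 using 1
    ext i
    by_cases hi : i = Sum.inl 0
    · subst hi; simp
    · simp [hi]
  | succ k ih =>
    intro v hv
    obtain ⟨c, hc1, -, hc⟩ := sr_lemma (fun j => (M j).map (C : B →+* MvPolynomial (Fin (k+1)) B)) (by
      intro i j hij
      have := hM hij
      simp only [Ideal.isCoprime_iff_sup_eq] at this ⊢
      rw [← Ideal.map_sup, this, Ideal.map_top])
      v (Sum.inl 1) Set.univ trivial (by
      intro j
      by_contra! hcon
      have h1 : (M j).map (C : B →+* MvPolynomial (Fin (k+1)) B) = ⊤ := by
        rw [eq_top_iff, ← hv]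
        refine sup_le ?_ (Ideal.map_mono (iInf_le _ j))
        rw [Ideal.span_le]
        rintro _ ⟨i, rfl⟩
        exact hcon i trivial
      rw [Ideal.eq_top_iff_one, MvPolynomial.mem_map_C_iff] at h1
      have h2 := h1 0
      rw [MvPolynomial.coeff_zero_one] at h2
      exact (hmax j).ne_top ((Ideal.eq_top_iff_one _).2 h2))
    have hstep := Orb.row (J := H.map C) v (Sum.inl 1) c hc1
    refine hstep.trans ?_
    have hu := hstep.span_top hv
    have hu1 : ∀ j, (Function.update v (Sum.inl 1) (c ⬝ᵥ v)) (Sum.inl 1) ∉ (M j).map C := by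
      intro j; simp only [Function.update_self]; exact hc j
    generalize (Function.update v (Sum.inl 1) (c ⬝ᵥ v)) = u at hu hu1
    let N := 2 + (u (Sum.inl 1)).totalDegree
    let θ := theta B N k
    have hlead := fun j => theta_lead N k (u (Sum.inl 1)) (by omega) (by omega) (M j) (hu1 j)
    choose Dj cj hcj hDj hDj' using hlead
    have hinv : ∀ j, ∃ y, y * cj j - 1 ∈ M j := by
      intro j
      obtain ⟨y, z, hz, hyz⟩ := (hmax j).exists_inv (hcj j)
      refine ⟨y, ?_⟩
      rw [← hyz]
      have : y * cj j - (y * cj j + z) = - z := by ring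
      rw [this]; exact (M j).neg_mem hz
    choose bj hbj using hinv
    have hidem : ∀ j, ∃ x : B, ∀ j', x - (if j' = j then bj j else 0) ∈ M j' := fun j =>
      Ideal.exists_forall_sub_mem_ideal hM _
    choose ej hej using hidem
    let D := (∑ j, Dj j) + (θ (u (Sum.inl 0))).natDegree + 1
    have hDle : ∀ j, Dj j ≤ D := fun j =>
      (Finset.single_le_sum (f := Dj) (fun _ _ => Nat.zero_le _) (Finset.mem_univ j)).trans
        (by simp only [D]; omega)
    let g : Polynomial (MvPolynomial (Fin k) B) :=
      ∑ j, Polynomial.C (C (ej j)) * Polynomial.X ^ (D - Dj j)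
    let p := θ (u (Sum.inl 0)) + g * θ (u (Sum.inl 1))
    have hpcoeff : ∀ j d, D ≤ d → p.coeff d - C (bj j) * (θ (u (Sum.inl 1))).coeff (d - (D - Dj j)) ∈
        (M j).map (C : B →+* MvPolynomial (Fin k) B) := by
      intro j d hd
      have h1 : (θ (u (Sum.inl 0))).coeff d = 0 :=
        Polynomial.coeff_eq_zero_of_natDegree_lt (by simp only [D] at hd; omega)
      have h2 : p.coeff d = ∑ j', C (ej j') * (θ (u (Sum.inl 1))).coeff (d - (D - Dj j')) := by
        simp only [p, g, Polynomial.coeff_add, h1, zero_add, Finset.sum_mul, Polynomial.finsetSum_coeff]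
        refine Finset.sum_congr rfl fun j' _ => ?_
        rw [mul_assoc, Polynomial.coeff_C_mul, Polynomial.coeff_X_pow_mul', if_pos (by omega)]
      have h3 : C (bj j) * (θ (u (Sum.inl 1))).coeff (d - (D - Dj j)) =
          ∑ j', C (if j = j' then bj j' else 0) * (θ (u (Sum.inl 1))).coeff (d - (D - Dj j')) := by
        rw [Finset.sum_eq_single j]
        · simp
        · intro j' _ hj'; simp [hj'.symm]
        · simp
      rw [h2, h3, ← Finset.sum_sub_distrib]
      refine Ideal.sum_mem _ fun j' _ => ?_
      rw [← sub_mul, ← map_sub]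
      exact Ideal.mul_mem_right _ _ (Ideal.mem_map_of_mem _ (hej j' j))
    have hpD : p.coeff D - 1 ∈ H.map (C : B →+* MvPolynomial (Fin k) B) := by
      rw [hH, mem_map_C_iInf]
      intro j
      have h1 := hpcoeff j D le_rfl
      rw [Nat.sub_sub_self (hDle j)] at h1
      have h2 := Ideal.mul_mem_left _ (C (bj j)) (hDj j)
      have h3 := Ideal.mem_map_of_mem (C : B →+* MvPolynomial (Fin k) B) (hbj j)
      have h4 := Ideal.add_mem _ (Ideal.add_mem _ h1 h2) h3
      convert! h4 using 1
      simp only [θ, map_sub, map_mul, map_one]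
      ring
    have hpd : ∀ d, D < d → p.coeff d ∈ H.map (C : B →+* MvPolynomial (Fin k) B) := by
      intro d hd
      rw [hH, mem_map_C_iInf]
      intro j
      have h1 := hpcoeff j d hd.le
      have h2 := Ideal.mul_mem_left _ (C (bj j)) (hDj' j (d - (D - Dj j)) (by have := hDle j; omega))
      have := Ideal.add_mem _ h1 h2
      convert! this using 1
      simp only [θ]
      ring
    let m : Polynomial (MvPolynomial (Fin k) B) := Polynomial.X ^ D +
      ∑ i ∈ Finset.range D, Polynomial.monomial i (p.coeff i)
    have hdeg : (∑ i ∈ Finset.range D, Polynomial.monomial i (p.coeff i)).degree < (D : WithBot ℕ) := by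
      rw [Polynomial.degree_lt_iff_coeff_zero]
      intro d hd
      simp [Polynomial.finsetSum_coeff, Polynomial.coeff_monomial, hd]
    have hm : m.Monic := Polynomial.monic_X_pow_add hdeg
    have hmp : p - m ∈ (H.map (C : B →+* MvPolynomial (Fin k) B)).map Polynomial.C := by
      rw [Ideal.mem_map_C_iff]
      intro d
      have hsum : (∑ i ∈ Finset.range D, Polynomial.monomial i (p.coeff i)).coeff d =
          if d < D then p.coeff d else 0 := by
        simp [Polynomial.finsetSum_coeff, Polynomial.coeff_monomial]
      rw [Polynomial.coeff_sub]
      simp only [m, Polynomial.coeff_add, hsum, Polynomial.coeff_X_pow]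
      rcases lt_trichotomy d D with h | h | h
      · simp [h, h.ne]
      · subst h; simpa using hpD
      · simpa [h.ne', h.not_gt] using hpd d h
    have hJ : H.map (algebraMap B (Polynomial (MvPolynomial (Fin k) B))) =
        (H.map (C : B →+* MvPolynomial (Fin k) B)).map Polynomial.C := by
      rw [Ideal.map_map]; rfl
    refine Orb.of_equiv θ H u _ ?_
    have h1 := span_equiv (θ : MvPolynomial (Fin (k+1)) B →ₐ[B] Polynomial (MvPolynomial (Fin k) B)) H u hu
    rw [hJ] at h1 ⊢
    have o1 := Orb.row (J := (H.map (C : B →+* MvPolynomial (Fin k) B)).map Polynomial.C)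
      (fun i => θ (u i)) (Sum.inl 0) (fun i => if i = Sum.inl 0 then 1 else if i = Sum.inl 1 then g else 0)
      (by simp)
    have hdot : ((fun i => if i = Sum.inl 0 then 1 else if i = Sum.inl 1 then g else 0) ⬝ᵥ
      (fun i => θ (u i)) : Polynomial (MvPolynomial (Fin k) B)) = p := by
      simp [dotProduct, Fin.sum_univ_two, p]
    rw [hdot] at o1
    let q : Fin 2 ⊕ σ → Polynomial (MvPolynomial (Fin k) B) :=
      Function.update (fun i => θ (u i)) (Sum.inl 0) m
    have o2 : Orb ((H.map (C : B →+* MvPolynomial (Fin k) B)).map Polynomial.C)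
      (Function.update (fun i => θ (u i)) (Sum.inl 0) p) q := Orb.of_congr fun i => by
        by_cases hi : i = Sum.inl 0
        · subst hi; simpa [q] using hmp
        · simp [q, hi]
    have o3 := suslin_lemma (H.map (C : B →+* MvPolynomial (Fin k) B)) q (by simpa [q] using hm)
      ((o1.trans o2).span_top h1)
    have h4 := (o1.trans (o2.trans o3)).span_top h1
    have h5 : Ideal.span (Set.range fun i => (q i).eval 0) ⊔ H.map C = ⊤ := by
      have := congrArg (Ideal.map (Polynomial.evalRingHom 0)) h4
      rw [Ideal.map_sup, Ideal.map_top, Ideal.map_span, ← Set.range_comp, Ideal.map_map] at this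
      have h2 : ((Polynomial.evalRingHom 0).comp Polynomial.C) = RingHom.id (MvPolynomial (Fin k) B) := by
        ext x <;> simp
      rw [h2, Ideal.map_id] at this
      simpa [Function.comp_def] using this
    have o4 := (ih _ h5).map (Polynomial.C)
    refine (o1.trans (o2.trans (o3.trans o4))).trans (Orb.of_congr fun i => ?_)
    by_cases hi : i = Sum.inl 0
    · subst hi; simp
    · simp [hi]

end PropP
end SF

set_option linter.unusedSectionVars false
set_option linter.unusedSimpArgs false

namespace SF
section Stab
variable {A : Type*} [CommRing A]

lemma mem_map_C_iff_map (I : Ideal A) (p : Polynomial A) :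
    p ∈ I.map (Polynomial.C : A →+* Polynomial A) ↔ p.map (Ideal.Quotient.mk I) = 0 := by
  rw [Ideal.mem_map_C_iff, Polynomial.ext_iff]
  simp [Ideal.Quotient.eq_zero_iff_mem]

lemma monic_mul_mem (I : Ideal A) (f w : Polynomial A) (hf : f.Monic)
    (h : f * w ∈ I.map (Polynomial.C : A →+* Polynomial A)) :
    w ∈ I.map (Polynomial.C : A →+* Polynomial A) := by
  rw [mem_map_C_iff_map] at h ⊢
  rw [Polynomial.map_mul] at h
  exact ((hf.map (Ideal.Quotient.mk I)).mul_right_eq_zero_iff).1 h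

variable {P : Type*} [AddCommGroup P] [Module (Polynomial A) P] [Module A P]
  [IsScalarTower A (Polynomial A) P]

lemma flat_quot [Module.Flat A P] {r : ℕ} (j : (Fin r → Polynomial A) →ₗ[Polynomial A] P)
    (hj : Function.Injective j) (f : Polynomial A) (hf : f.Monic)
    (hfj : ∀ x, f • x ∈ LinearMap.range j) : Module.Flat A (P ⧸ LinearMap.range j) := by
  apply Module.Flat.of_forall_isTrivialRelation
  intro l a x hx
  choose xt hxt using fun i => Submodule.mkQ_surjective (LinearMap.range j) (x i)
  have h1 : ∑ i, a i • xt i ∈ LinearMap.range j := by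
    rw [← Submodule.Quotient.mk_eq_zero, ← Submodule.mkQ_apply, map_sum]
    rw [← hx]
    refine Finset.sum_congr rfl fun i _ => ?_
    rw [← hxt i]; rfl
  obtain ⟨w, hw⟩ := h1
  choose y hy using fun i => hfj (xt i)
  have h2 : f • w = ∑ i, Polynomial.C (a i) • y i := by
    apply hj
    rw [map_smul, hw, map_sum, Finset.smul_sum]
    refine Finset.sum_congr rfl fun i _ => ?_
    rw [map_smul, hy, ← algebraMap_smul (Polynomial A) (a i) (xt i), smul_comm]
    rfl
  have h3 : ∀ s, ∃ u : Fin l → Polynomial A, ∑ i, u i * Polynomial.C (a i) = w s := by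
    intro s
    rw [← Ideal.mem_span_range_iff_exists_fun]
    have : Ideal.span (Set.range fun i => Polynomial.C (a i)) =
        (Ideal.span (Set.range a)).map (Polynomial.C : A →+* Polynomial A) := by
      rw [Ideal.map_span, ← Set.range_comp]; rfl
    rw [this]
    apply monic_mul_mem _ f _ hf
    have h4 := congrFun h2 s
    simp only [Pi.smul_apply, smul_eq_mul, Finset.sum_apply] at h4
    rw [h4]
    refine Ideal.sum_mem _ fun i _ => Ideal.mul_mem_right _ _ (Ideal.mem_map_of_mem _ ?_)
    exact Ideal.subset_span ⟨i, rfl⟩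
  choose u hu using h3
  have h5 : ∑ i, a i • (xt i - j (fun s => u s i)) = 0 := by
    simp only [smul_sub, Finset.sum_sub_distrib]
    rw [← hw, sub_eq_zero]
    have : w = ∑ i, Polynomial.C (a i) • (fun s => u s i) := by
      ext1 s
      rw [← hu s]
      simp [mul_comm]
    conv_lhs => rw [this, map_sum]
    refine Finset.sum_congr rfl fun i _ => ?_
    rw [map_smul, ← algebraMap_smul (Polynomial A) (a i)]
    rfl
  obtain ⟨k, b, z, hz, hb⟩ := Module.Flat.isTrivialRelation_of_sum_smul_eq_zero h5
  refine ⟨k, b, fun i => Submodule.mkQ (LinearMap.range j) (z i), fun i => ?_, hb⟩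
  have h6 : xt i = ∑ t, b i t • z t + j (fun s => u s i) := by rw [← hz i]; exact (sub_add_cancel _ _).symm
  rw [← hxt i]
  have h7 : Submodule.mkQ (LinearMap.range j) (j (fun s => u s i)) = 0 := by
    rw [Submodule.mkQ_apply, Submodule.Quotient.mk_eq_zero]; exact ⟨_, rfl⟩
  conv_lhs => rw [h6, map_add, h7, add_zero, map_sum]
  rfl

lemma finite_of_monic {Q : Type*} [AddCommGroup Q] [Module (Polynomial A) Q] [Module A Q]
    [IsScalarTower A (Polynomial A) Q] [Module.Finite (Polynomial A) Q] (f : Polynomial A)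
    (hf : f.Monic) (hfQ : ∀ x : Q, f • x = 0) : Module.Finite A Q := by
  nontriviality A
  obtain ⟨l, g, hg⟩ := Module.Finite.exists_fin' (Polynomial A) Q
  let φ : (Fin l → Polynomial.degreeLT A f.natDegree) →ₗ[A] Q :=
    { toFun := fun p => g (fun i => (p i : Polynomial A))
      map_add' := fun p q => by rw [← map_add]; rfl
      map_smul' := fun c p => by
        rw [RingHom.id_apply, ← algebraMap_smul (Polynomial A) c (g _), ← map_smul]
        congr 1
        ext1 i
        simp [Algebra.smul_def] }
  have : Module.Finite A (Polynomial.degreeLT A f.natDegree) :=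
    Module.Finite.equiv (Polynomial.degreeLTEquiv A f.natDegree).symm
  refine Module.Finite.of_surjective φ ?_
  intro q
  obtain ⟨p, rfl⟩ := hg q
  refine ⟨fun i => ⟨p i %ₘ f, ?_⟩, ?_⟩
  · rw [Polynomial.mem_degreeLT, ← Polynomial.degree_eq_natDegree hf.ne_zero]
    exact Polynomial.degree_modByMonic_lt _ hf
  · change g (fun i => p i %ₘ f) = g p
    have : p = (fun i => p i %ₘ f) + f • fun i => p i /ₘ f := by
      ext1 i
      simp [Polynomial.modByMonic_add_div]
    conv_rhs => rw [this, map_add, map_smul, hfQ, add_zero]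

lemma HQ.free (hQ : HQ A) {Q : Type*} [AddCommGroup Q] [Module A Q] [Module.Finite A Q]
    [Module.Projective A Q] : ∃ q : ℕ, Nonempty (Q ≃ₗ[A] (Fin q → A)) := by
  obtain ⟨l, g, hg⟩ := Module.Finite.exists_fin' A Q
  obtain ⟨s, hs⟩ := Module.projective_lifting_property g LinearMap.id hg
  have hs' : ∀ x, g (s x) = x := fun x => LinearMap.congr_fun hs x
  obtain ⟨r, C, D, h1, h2⟩ := hQ l (LinearMap.toMatrix' (s ∘ₗ g)) (by
    rw [← LinearMap.toMatrix'_comp]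
    congr 1
    apply LinearMap.ext
    intro x
    simp [hs'])
  have h1' : ∀ x, C *ᵥ (D *ᵥ x) = s (g x) := by
    intro x
    rw [Matrix.mulVec_mulVec, h1, LinearMap.toMatrix'_mulVec]; rfl
  have h2' : ∀ x, D *ᵥ (C *ᵥ x) = x := by
    intro x
    rw [Matrix.mulVec_mulVec, h2, Matrix.one_mulVec]
  refine ⟨r, ⟨LinearEquiv.ofLinearMap (Matrix.mulVecLin D ∘ₗ s) (g ∘ₗ Matrix.mulVecLin C) ?_ ?_⟩⟩
  · apply LinearMap.ext
    intro x
    simp only [LinearMap.comp_apply, Matrix.mulVecLin_apply, LinearMap.id_apply]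
    rw [← h1', h2', h2']
  · apply LinearMap.ext
    intro x
    simp only [LinearMap.comp_apply, Matrix.mulVecLin_apply, LinearMap.id_apply]
    rw [h1', hs', hs']

end Stab
end SF

set_option linter.unusedSectionVars false
set_option linter.unusedSimpArgs false

namespace SF
section Stab
variable {A : Type*} [CommRing A]

lemma resolution [IsDomain A] {Q : Type*} [AddCommGroup Q] [Module (Polynomial A) Q] [Module A Q]
    [IsScalarTower A (Polynomial A) Q] {q : ℕ} (e : Q ≃ₗ[A] (Fin q → A)) :
    ∃ (Δ : (Fin q → Polynomial A) →ₗ[Polynomial A] (Fin q → Polynomial A))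
      (φ : (Fin q → Polynomial A) →ₗ[Polynomial A] Q),
      Function.Injective Δ ∧ Function.Surjective φ ∧ Function.Exact Δ φ := by
  classical
  let c : Fin q → Q := fun i => e.symm (Pi.single i 1)
  let φ := Fintype.linearCombination (Polynomial A) c
  let Y : Matrix (Fin q) (Fin q) A := Matrix.of fun j i => e ((Polynomial.X : Polynomial A) • c i) j
  let Δ := Matrix.mulVecLin (charmatrix Y)
  have hC : ∀ a : Fin q → A, φ (fun i => Polynomial.C (a i)) = e.symm a := by
    intro a
    rw [Fintype.linearCombination_apply]
    have : a = ∑ i, a i • (Pi.single i 1 : Fin q → A) := by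
      rw [← pi_eq_sum_univ' a] 
    conv_rhs => rw [this, map_sum]
    refine Finset.sum_congr rfl fun i _ => ?_
    rw [map_smul]
    exact algebraMap_smul (Polynomial A) (a i) (c i)
  have hΔ : ∀ g, Δ g = (Polynomial.X : Polynomial A) • g - (Y.map Polynomial.C) *ᵥ g := by
    intro g
    simp only [Δ, Matrix.mulVecLin_apply, charmatrix, Matrix.sub_mulVec]
    congr 1
    ext1 i
    simp [Matrix.scalar_apply, Matrix.mulVec_diagonal]
  have hYC : ∀ a : Fin q → A, (Y.map Polynomial.C) *ᵥ (fun i => Polynomial.C (a i)) =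
      fun i => Polynomial.C ((Y *ᵥ a) i) := by
    intro a
    ext1 i
    exact (RingHom.map_mulVec (Polynomial.C : A →+* Polynomial A) Y a i).symm
  have hφΔ : ∀ g, φ (Δ g) = 0 := by
    have : φ ∘ₗ Δ = 0 := by
      apply LinearMap.pi_ext'
      intro i
      apply LinearMap.ext_ring
      simp only [LinearMap.comp_apply, LinearMap.single_apply, LinearMap.zero_apply]
      rw [hΔ, map_sub, map_smul]
      have h1 : (Pi.single i 1 : Fin q → Polynomial A) =
          fun j => Polynomial.C ((Pi.single i 1 : Fin q → A) j) := by
        ext1 j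
        by_cases h : j = i
        · subst h; simp
        · simp [h]
      rw [h1, hYC, hC, hC, sub_eq_zero]
      rw [LinearEquiv.eq_symm_apply]
      ext1 j
      simp [Y, c]
    intro g
    exact LinearMap.congr_fun this g
  let T : (Fin q → Polynomial A) → Prop := fun g =>
    ∃ a : Fin q → A, g - (fun i => Polynomial.C (a i)) ∈ LinearMap.range Δ
  have hTadd : ∀ g g', T g → T g' → T (g + g') := by
    rintro g g' ⟨a, ha⟩ ⟨a', ha'⟩
    refine ⟨a + a', ?_⟩
    convert! Submodule.add_mem _ ha ha' using 1
    ext1 i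
    simp; ring
  have hTC : ∀ (b : A) g, T g → T ((Polynomial.C b) • g) := by
    rintro b g ⟨a, ha⟩
    refine ⟨b • a, ?_⟩
    convert! Submodule.smul_mem _ (Polynomial.C b) ha using 1
    ext1 i
    simp; ring
  have hTX : ∀ g, T g → T ((Polynomial.X : Polynomial A) • g) := by
    rintro g ⟨a, ha⟩
    refine ⟨Y *ᵥ a, ?_⟩
    have h1 : Δ (fun i => Polynomial.C (a i)) ∈ LinearMap.range Δ := ⟨_, rfl⟩
    convert! Submodule.add_mem _ (Submodule.smul_mem _ (Polynomial.X : Polynomial A) ha) h1 using 1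
    rw [hΔ, hYC, smul_sub]
    abel
  have hTs : ∀ (p : Polynomial A) g, T g → T (p • g) := by
    intro p g hg
    induction p using Polynomial.induction_on with
    | C a => exact hTC a g hg
    | add p p' h h' => rw [add_smul]; exact hTadd _ _ h h'
    | monomial n a h =>
      have := hTX _ h
      rw [smul_smul] at this
      convert! this using 2
      ring
  have hT : ∀ g, T g := by
    intro g
    rw [pi_eq_sum_univ' g]
    refine Finset.sum_induction _ T hTadd ⟨0, ?_⟩ ?_
    · convert! Submodule.zero_mem _ using 1
      ext1 i; simp
    · intro i _
      apply hTs
      refine ⟨Pi.single i 1, ?_⟩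
      convert! Submodule.zero_mem _ using 1
      ext1 j
      by_cases h : j = i
      · subst h; simp
      · simp [h, Ne.symm h]
  refine ⟨Δ, φ, ?_, ?_, ?_⟩
  · rw [← LinearMap.ker_eq_bot, LinearMap.ker_eq_bot']
    intro g hg
    refine Matrix.eq_zero_of_mulVec_eq_zero (M := charmatrix Y) ?_ hg
    exact (charpoly_monic Y).ne_zero
  · intro x
    exact ⟨_, (hC (e x)).trans (by simp)⟩
  · intro g
    constructor
    · intro hg
      obtain ⟨a, ⟨y, hy⟩⟩ := hT g
      have h1 := hφΔ y
      rw [hy, map_sub, hg, zero_sub, neg_eq_zero, hC] at h1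
      have h2 : a = 0 := by simpa using h1
      refine ⟨y, ?_⟩
      rw [hy, h2]
      ext1 i; simp
    · rintro ⟨y, rfl⟩
      exact hφΔ y

lemma stably_free [IsDomain A] [IsNoetherianRing A] (hQ : HQ A)
    {P : Type*} [AddCommGroup P] [Module (Polynomial A) P] [Module A P]
    [IsScalarTower A (Polynomial A) P] [Module.Finite (Polynomial A) P]
    [Module.Projective (Polynomial A) P]
    {r : ℕ} (j : (Fin r → Polynomial A) →ₗ[Polynomial A] P)
    (hj : Function.Injective j) (f : Polynomial A) (hf : f.Monic)
    (hfj : ∀ x, f • x ∈ LinearMap.range j) :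
    ∃ q m : ℕ, Nonempty ((P × (Fin q → Polynomial A)) ≃ₗ[Polynomial A] (Fin m → Polynomial A)) := by
  have : Module.Flat A P := Module.Flat.trans A (Polynomial A) P
  have hflat := flat_quot j hj f hf hfj
  have hfin : Module.Finite A (P ⧸ LinearMap.range j) := finite_of_monic f hf (by
    intro x
    obtain ⟨x, rfl⟩ := Submodule.mkQ_surjective _ x
    rw [← map_smul, Submodule.mkQ_apply, Submodule.Quotient.mk_eq_zero]
    exact hfj x)
  have : Module.FinitePresentation A (P ⧸ LinearMap.range j) :=
    Module.finitePresentation_of_finite A _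
  have hproj : Module.Projective A (P ⧸ LinearMap.range j) :=
    Module.Flat.projective_of_finitePresentation
  obtain ⟨q, ⟨e⟩⟩ := hQ.free (Q := P ⧸ LinearMap.range j)
  obtain ⟨Δ, φ, hΔ, hφ, hex⟩ := resolution e
  obtain ⟨ψ, hψ⟩ := Module.projective_lifting_property (Submodule.mkQ (LinearMap.range j)) φ
    (Submodule.mkQ_surjective _)
  have hψ' : ∀ g, Submodule.mkQ (LinearMap.range j) (ψ g) = φ g := fun g => LinearMap.congr_fun hψ g
  have h1 : ∀ y, ∃ w, j w = ψ (Δ y) := by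
    intro y
    have : ψ (Δ y) ∈ LinearMap.range j := by
      rw [← Submodule.Quotient.mk_eq_zero, ← Submodule.mkQ_apply, hψ']
      exact hex.apply_apply_eq_zero y
    exact this
  let eN := LinearEquiv.ofInjective j hj
  let κ : (Fin q → Polynomial A) →ₗ[Polynomial A] (Fin r → Polynomial A) :=
    eN.symm.toLinearMap ∘ₗ LinearMap.codRestrict (LinearMap.range j) (ψ ∘ₗ Δ) (fun y => h1 y)
  have hκ : ∀ y, j (κ y) = ψ (Δ y) := by
    intro y
    have := LinearEquiv.apply_symm_apply eN (LinearMap.codRestrict (LinearMap.range j) (ψ ∘ₗ Δ) (fun y => h1 y) y)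
    exact congrArg Subtype.val this
  let Ψ : ((Fin r → Polynomial A) × (Fin q → Polynomial A)) →ₗ[Polynomial A] P := j.coprod ψ
  let Γ : (Fin q → Polynomial A) →ₗ[Polynomial A] ((Fin r → Polynomial A) × (Fin q → Polynomial A)) :=
    (-κ).prod Δ
  have hΓ : Function.Injective Γ := by
    intro x y hxy
    exact hΔ (congrArg Prod.snd hxy)
  have hΨ : Function.Surjective Ψ := by
    intro x
    obtain ⟨g, hg⟩ := hφ (Submodule.mkQ _ x)
    have : x - ψ g ∈ LinearMap.range j := by
      rw [← Submodule.Quotient.mk_eq_zero, ← Submodule.mkQ_apply, map_sub, hψ', hg, sub_self]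
    obtain ⟨w, hw⟩ := this
    refine ⟨(w, g), ?_⟩
    simp [Ψ, hw]
  have hexact : Function.Exact Γ Ψ := by
    rintro ⟨w, g⟩
    constructor
    · intro h
      have h2 : j w + ψ g = 0 := by simpa [Ψ] using h
      have h3 : φ g = 0 := by
        rw [← hψ', eq_neg_of_add_eq_zero_right h2, Submodule.mkQ_apply, Submodule.Quotient.mk_eq_zero]
        exact ⟨-w, by simp⟩
      obtain ⟨y, rfl⟩ := (hex g).1 h3
      refine ⟨y, ?_⟩
      have : κ y = - w := by
        apply hj
        rw [hκ, map_neg, eq_neg_of_add_eq_zero_right h2]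
      simp [Γ, this]
    · rintro ⟨y, hy⟩
      rw [← hy]
      simp [Ψ, Γ, hκ]
  obtain ⟨s, hs⟩ := Module.projective_lifting_property Ψ LinearMap.id hΨ
  let E := ((hexact.splitSurjectiveEquiv hΓ) ⟨s, hs⟩).1
  let E2 : (Fin (r + q) → Polynomial A) ≃ₗ[Polynomial A]
      ((Fin r → Polynomial A) × (Fin q → Polynomial A)) :=
    (LinearEquiv.funCongrLeft (Polynomial A) (Polynomial A) finSumFinEquiv) ≪≫ₗ
      LinearEquiv.sumArrowLequivProdArrow _ _ (Polynomial A) (Polynomial A)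
  exact ⟨q, r + q, ⟨(LinearEquiv.prodComm _ _ _) ≪≫ₗ E.symm ≪≫ₗ E2.symm⟩⟩

/-- unimodular columns are completable -/
def UC (S : Type*) [CommRing S] : Prop :=
  ∀ (m : ℕ) (v : Fin (m + 1) → S), Ideal.span (Set.range v) = ⊤ →
    ∃ U : Matrix (Fin (m + 1)) (Fin (m + 1)) S, IsUnit U.det ∧ U *ᵥ v = Pi.single 0 1

lemma UC.of_equiv {S T : Type*} [CommRing S] [CommRing T] (e : S ≃+* T) (h : UC S) : UC T := by
  intro m v hv
  obtain ⟨U, hU, hUv⟩ := h m (fun i => e.symm (v i)) (by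
    rw [Ideal.eq_top_iff_one] at hv ⊢
    obtain ⟨c, hc⟩ := Ideal.mem_span_range_iff_exists_fun.1 hv
    refine Ideal.mem_span_range_iff_exists_fun.2 ⟨fun i => e.symm (c i), ?_⟩
    simp only [← map_mul, ← map_sum, hc, map_one])
  refine ⟨U.map e, ?_, ?_⟩
  · have := hU.map (e : S →+* T)
    rwa [RingHom.map_det] at this
  · ext1 i
    have h1 := congrArg e (congrFun hUv i)
    have h2 := RingHom.map_mulVec (e : S →+* T) U (fun i => e.symm (v i)) i
    have h3 : (U.map e *ᵥ v) i = e ((U *ᵥ (fun i => e.symm (v i))) i) := by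
      rw [show e ((U *ᵥ (fun i => e.symm (v i))) i) = _ from h2]
      simp [Matrix.mulVec, dotProduct]
    rw [h3, h1]
    by_cases h : i = 0
    · subst h; simp
    · simp [h]

lemma UC.cancel {S : Type*} [CommRing S] [Nontrivial S] (hU : UC S) {M : Type*} [AddCommGroup M] [Module S M]
    {m : ℕ} (e : (M × S) ≃ₗ[S] (Fin m → S)) : ∃ m' : ℕ, Nonempty (M ≃ₗ[S] (Fin m' → S)) := by
  cases m with
  | zero =>
    exfalso
    have : (0, 1) = (0 : M × S) := e.injective (Subsingleton.elim _ _)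
    exact one_ne_zero (congrArg Prod.snd this)
  | succ m =>
    let v := e (0, 1)
    obtain ⟨U, hUd, hUv⟩ := hU m v (by
      rw [Ideal.eq_top_iff_one]
      refine Ideal.mem_span_range_iff_exists_fun.2 ⟨fun i => (e.symm (Pi.single i 1)).2, ?_⟩
      have h1 : (e.symm v).2 = 1 := by simp [v]
      rw [pi_eq_sum_univ' v, map_sum, Prod.snd_sum] at h1
      refine Eq.trans ?_ h1
      refine Finset.sum_congr rfl fun i _ => ?_
      simp [mul_comm])
    have hUi : Function.Injective (U *ᵥ ·) := Matrix.mulVec_injective_of_isUnit ((Matrix.isUnit_iff_isUnit_det U).2 hUd)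
    have hUs : Function.Surjective (U *ᵥ ·) := fun y =>
      ⟨U⁻¹ *ᵥ y, by simp only [Matrix.mulVec_mulVec, Matrix.mul_nonsing_inv U hUd, Matrix.one_mulVec]⟩
    let T : M →ₗ[S] (Fin m → S) :=
      (LinearMap.funLeft S S Fin.succ) ∘ₗ Matrix.mulVecLin U ∘ₗ e.toLinearMap ∘ₗ LinearMap.inl S M S
    have hT : ∀ x i, T x i = (U *ᵥ (e (x, 0))) i.succ := fun x i => rfl
    refine ⟨m, ⟨LinearEquiv.ofBijective T ⟨?_, ?_⟩⟩⟩
    · rw [← LinearMap.ker_eq_bot, LinearMap.ker_eq_bot']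
      intro x hx
      have h1 : U *ᵥ (e (x, 0)) = U *ᵥ (e (0, (U *ᵥ (e (x, 0))) 0)) := by
        have : ((0 : M), (U *ᵥ (e (x, 0))) 0) = (U *ᵥ (e (x, 0))) 0 • ((0 : M), (1 : S)) := by simp
        rw [this, map_smul, Matrix.mulVec_smul, hUv]
        ext1 i
        cases i using Fin.cases with
        | zero => simp
        | succ i => simpa [hT] using congrFun hx i
      have h2 := e.injective (hUi h1)
      exact congrArg Prod.fst h2
    · intro y
      obtain ⟨w, hw⟩ := hUs (Fin.cons 0 y)
      obtain ⟨⟨x, s⟩, rfl⟩ := e.surjective w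
      refine ⟨x, ?_⟩
      ext1 i
      rw [hT]
      have : (x, (0 : S)) = (x, s) - s • ((0 : M), (1 : S)) := by simp
      rw [this, map_sub, map_smul, Matrix.mulVec_sub, Matrix.mulVec_smul, hUv]
      have hw' : U *ᵥ e (x, s) = Fin.cons 0 y := hw
      rw [hw']
      simp

lemma UC.cancel' {S : Type*} [CommRing S] [Nontrivial S] (hU : UC S) {M : Type*} [AddCommGroup M] [Module S M]
    {q m : ℕ} (e : (M × (Fin q → S)) ≃ₗ[S] (Fin m → S)) : ∃ m' : ℕ, Nonempty (M ≃ₗ[S] (Fin m' → S)) := by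
  induction q generalizing m with
  | zero => exact ⟨m, ⟨LinearEquiv.prodUnique.symm ≪≫ₗ e⟩⟩
  | succ q ih =>
    let e1 : (Fin (q + 1) → S) ≃ₗ[S] (S × (Fin q → S)) := (Fin.consLinearEquiv S (fun _ => S)).symm
    let e2 : ((M × (Fin q → S)) × S) ≃ₗ[S] (M × (Fin (q+1) → S)) :=
      LinearEquiv.prodAssoc S _ _ _ ≪≫ₗ
        LinearEquiv.prodCongr (LinearEquiv.refl S M) (LinearEquiv.prodComm S _ _ ≪≫ₗ e1.symm)
    obtain ⟨m', ⟨e'⟩⟩ := hU.cancel (e2 ≪≫ₗ e)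
    exact ih e'

end Stab
end SF

set_option linter.unusedSectionVars false
set_option linter.unusedSimpArgs false

namespace SF
section QS

lemma UC_mv (K : Type*) [Field K] (n : ℕ) : UC (MvPolynomial (Fin n) K) := by
  intro m v hv
  cases m with
  | zero =>
    have hu : IsUnit (v 0) := by
      rw [← Ideal.span_singleton_eq_top]
      rw [← hv]
      congr 1
      ext x; simp [Set.mem_range, eq_comm, Fin.exists_fin_one]
    obtain ⟨u, hu⟩ := hu
    refine ⟨Matrix.of fun _ _ => ((u⁻¹ : (MvPolynomial (Fin n) K)ˣ) : MvPolynomial (Fin n) K), ?_, ?_⟩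
    · simp [Matrix.det_fin_one]
    · ext1 i
      have : i = 0 := Fin.fin_one_eq_zero i
      subst this
      simp [Matrix.mulVec, dotProduct, ← hu]
  | succ m =>
    let e : Fin 2 ⊕ Fin m ≃ Fin (m + 2) := blk (by omega)
    have h := propP (B := K) (τ := Unit) (σ := Fin m) (fun _ => (⊥ : Ideal K)) (fun _ => Ideal.bot_isMaximal)
      (fun i j h => (h (Subsingleton.elim i j)).elim) n (v ∘ e) (by
        rw [EquivLike.range_comp v e, hv]; simp)
    obtain ⟨U, hU, hUv⟩ := h
    have h0 : e (Sum.inl 0) = 0 := rfl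
    refine ⟨U.submatrix e.symm e.symm, ?_, ?_⟩
    · rw [Matrix.det_submatrix_equiv_self, hU]; exact isUnit_one
    · ext1 i
      obtain ⟨i, rfl⟩ := e.surjective i
      have h1 := hUv i
      simp only [iInf_const, Ideal.map_bot, Ideal.mem_bot, sub_eq_zero] at h1
      rw [Matrix.submatrix_mulVec_equiv]
      simp only [Equiv.symm_symm, Function.comp_apply, Equiv.symm_apply_apply]
      rw [h1, ← h0]
      by_cases h : i = Sum.inl 0
      · subst h; simp
      · rw [Pi.single_eq_of_ne h, Pi.single_eq_of_ne (by simpa using h)]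

lemma HQ_of_range {S : Type*} [CommRing S] {l : ℕ} (E : Matrix (Fin l) (Fin l) S) (hE : E * E = E) {m : ℕ}
    (e : LinearMap.range (Matrix.mulVecLin E) ≃ₗ[S] (Fin m → S)) :
    ∃ (r : ℕ) (P : Matrix (Fin l) (Fin r) S) (Q : Matrix (Fin r) (Fin l) S), P * Q = E ∧ Q * P = 1 := by
  refine ⟨m, LinearMap.toMatrix' ((LinearMap.range (Matrix.mulVecLin E)).subtype ∘ₗ e.symm.toLinearMap),
    LinearMap.toMatrix' (e.toLinearMap ∘ₗ (Matrix.mulVecLin E).rangeRestrict), ?_, ?_⟩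
  · rw [← LinearMap.toMatrix'_comp]
    conv_rhs => rw [← LinearMap.toMatrix'_toLin' E, Matrix.toLin'_apply']
    congr 1
    apply LinearMap.ext
    intro x
    simp
  · rw [← LinearMap.toMatrix'_comp, ← LinearMap.toMatrix'_id]
    congr 1
    apply LinearMap.ext
    intro x
    have : ∀ y : LinearMap.range (Matrix.mulVecLin E), (Matrix.mulVecLin E).rangeRestrict y = y := by
      rintro ⟨_, ⟨y, rfl⟩⟩
      apply Subtype.ext
      simp [hE]
    simp [this]

lemma HQ_field (K : Type*) [Field K] : HQ K := by
  intro l E hE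
  exact HQ_of_range E hE (Module.finBasis K (LinearMap.range (Matrix.mulVecLin E))).equivFun

lemma exists_rank {S : Type*} [CommRing S] [Nontrivial S] {l m : ℕ} (E : Matrix (Fin l) (Fin m) S) :
    ∃ r, detIdeal E r ≠ ⊥ ∧ detIdeal E (r + 1) = ⊥ := by
  classical
  have hex : ∃ r, detIdeal E r = ⊥ := ⟨l + 1, detIdeal_eq_bot_of_card _ (by simp)⟩
  obtain ⟨r, hr⟩ : ∃ r, Nat.find hex = r + 1 := by
    refine Nat.exists_eq_succ_of_ne_zero fun h => ?_
    have := Nat.find_spec hex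
    rw [h, detIdeal_zero] at this
    exact bot_ne_top this.symm
  refine ⟨r, Nat.find_min hex (by omega), ?_⟩
  rw [← hr]; exact Nat.find_spec hex

lemma exists_minor {S : Type*} [CommRing S] {l m r : ℕ} (E : Matrix (Fin l) (Fin m) S)
    (h : detIdeal E r ≠ ⊥) : ∃ (f : Fin r → Fin l) (g : Fin r → Fin m), (E.submatrix f g).det ≠ 0 := by
  by_contra! hc
  exact h (le_bot_iff.1 (detIdeal_le (fun f g => by simp [hc f g])))

lemma HQ_step {A : Type*} [CommRing A] [IsDomain A] [IsNoetherianRing A] (hQ : HQ A)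
    (hU : UC (Polynomial A)) {l r : ℕ} (E : Matrix (Fin l) (Fin l) (Polynomial A)) (hE : E * E = E)
    (h0 : detIdeal E (r + 1) = ⊥) (f : Fin r → Fin l) (g : Fin r → Fin l) (c : Polynomial A)
    (hc : (c * (E.submatrix f g).det).Monic) :
    ∃ (r : ℕ) (P : Matrix (Fin l) (Fin r) (Polynomial A)) (Q : Matrix (Fin r) (Fin l) (Polynomial A)),
      P * Q = E ∧ Q * P = 1 := by
  have hμ : (E.submatrix f g).det ≠ 0 := by
    intro h
    rw [h, mul_zero] at hc
    exact hc.ne_zero rfl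
  let P := LinearMap.range (Matrix.mulVecLin E)
  have hfix : ∀ y : P, (Matrix.mulVecLin E).rangeRestrict y = y := by
    rintro ⟨_, ⟨y, rfl⟩⟩
    apply Subtype.ext
    simp [hE]
  have hproj : Module.Projective (Polynomial A) P :=
    Module.Projective.of_split P.subtype (Matrix.mulVecLin E).rangeRestrict (by
      apply LinearMap.ext
      intro x
      exact hfix x)
  have hEg : E * E.submatrix id g = E.submatrix id g := by
    conv_rhs => rw [← hE]
    rfl
  let j : (Fin r → Polynomial A) →ₗ[Polynomial A] P :=
    LinearMap.codRestrict P (Matrix.mulVecLin (E.submatrix id g)) (by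
      intro x
      refine ⟨E.submatrix id g *ᵥ x, ?_⟩
      simp only [Matrix.mulVecLin_apply, Matrix.mulVec_mulVec, hEg])
  have hj : Function.Injective j := by
    rw [← LinearMap.ker_eq_bot, LinearMap.ker_eq_bot']
    intro x hx
    refine Matrix.eq_zero_of_mulVec_eq_zero hμ ?_
    ext1 i
    exact congrFun (congrArg Subtype.val hx) (f i)
  obtain ⟨q, m, ⟨e⟩⟩ := stably_free hQ j hj _ hc (by
    intro x
    rw [mul_smul]
    refine Submodule.smul_mem _ _ ?_
    have hid := rank_identity E h0 f g hμ
    refine ⟨((E.submatrix f g).adjugate * E.submatrix f id) *ᵥ (x : Fin l → Polynomial A), ?_⟩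
    apply Subtype.ext
    change E.submatrix id g *ᵥ (((E.submatrix f g).adjugate * E.submatrix f id) *ᵥ
      (x : Fin l → Polynomial A)) = (E.submatrix f g).det • (x : Fin l → Polynomial A)
    rw [Matrix.mulVec_mulVec, ← Matrix.mul_assoc, hid, Matrix.smul_mulVec]
    congr 1
    exact congrArg Subtype.val (hfix x))
  obtain ⟨m', ⟨e'⟩⟩ := hU.cancel' e
  exact HQ_of_range E hE e'

theorem HQ_mv (K : Type*) [Field K] (n : ℕ) : HQ (MvPolynomial (Fin n) K) := by
  induction n with
  | zero => exact (HQ_field K).of_equiv (isEmptyAlgEquiv K (Fin 0)).symm.toRingEquiv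
  | succ n ih =>
    intro l E hE
    obtain ⟨r, hr, hr1⟩ := exists_rank E
    obtain ⟨f, g, hμ⟩ := exists_minor E hr
    set μ := (E.submatrix f g).det with hμd
    let N := μ.totalDegree + 2
    obtain ⟨D, c, hc, hD, hD'⟩ := theta_lead (N := N) (k := n) μ (by omega) (by omega) (⊥ : Ideal K)
      (by simpa using hμ)
    simp only [Ideal.map_bot, Ideal.mem_bot, sub_eq_zero] at hc hD hD'
    let θ := (theta K N n).toRingEquiv
    have hU := (UC_mv K (n + 1)).of_equiv θ
    have hdet : ((E.map θ).submatrix f g).det = θ μ := by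
      rw [hμd]
      exact (RingHom.map_det (θ : MvPolynomial (Fin (n + 1)) K →+* Polynomial (MvPolynomial (Fin n) K)) (E.submatrix f g)).symm
    obtain ⟨s, P, Q, hPQ, hQP⟩ := HQ_step ih hU (E.map θ)
      (by rw [← Matrix.map_mul, hE])
      (by
        have := detIdeal_map (θ : MvPolynomial (Fin (n + 1)) K →+* Polynomial (MvPolynomial (Fin n) K)) E (r + 1)
        rw [hr1, Ideal.map_bot] at this
        exact this) f g (Polynomial.C (C c⁻¹)) (by
        rw [hdet]
        refine Polynomial.monic_of_natDegree_le_of_coeff_eq_one D ?_ ?_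
        · refine (Polynomial.natDegree_C_mul_le _ _).trans ?_
          rw [Polynomial.natDegree_le_iff_coeff_eq_zero]
          exact hD'
        · rw [Polynomial.coeff_C_mul]
          refine (congrArg _ hD).trans ?_
          rw [← map_mul, inv_mul_cancel₀ hc, map_one])
    refine ⟨s, P.map θ.symm, Q.map θ.symm, ?_, ?_⟩
    · rw [← Matrix.map_mul, hPQ]
      ext i j; simp
    · rw [← Matrix.map_mul, hQP]
      simp

end QS
end SF

set_option linter.unusedSectionVars false
set_option linter.unusedSimpArgs false

namespace SF
section Good
variable {A : Type*} [CommRing A]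

/-- all determinantal ideals are principal -/
def PIM {r : ℕ} (F : Matrix (Fin r) (Fin r) A) : Prop := ∀ k, ∃ d, detIdeal F k = Ideal.span {d}

/-- equivalent to the Smith form, in the strong sense -/
def Good {r : ℕ} (F : Matrix (Fin r) (Fin r) A) : Prop :=
  ∃ Φ : ℕ → A, MEq F (Matrix.diagonal fun i : Fin r => Φ i) ∧
    ∀ k ≤ r, detIdeal F k = Ideal.span {∏ i ∈ Finset.range k, Φ i}

/-- the index equivalence -/
def sE (s : ℕ) : Unit ⊕ Fin s ≃ Fin (s + 1) where
  toFun := Sum.elim (fun _ => 0) Fin.succ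
  invFun := Fin.cases (Sum.inl ()) Sum.inr
  left_inv := by rintro (_ | i) <;> simp
  right_inv := by intro i; cases i using Fin.cases <;> simp

lemma PIM.of_MEq {r : ℕ} {F G : Matrix (Fin r) (Fin r) A} (h : MEq F G) (hF : PIM F) : PIM G := by
  intro k
  obtain ⟨d, hd⟩ := hF k
  exact ⟨d, by rw [← h.detIdeal_eq, hd]⟩

lemma Good.of_MEq {r : ℕ} {F G : Matrix (Fin r) (Fin r) A} (h : MEq F G) (hG : Good G) : Good F := by
  obtain ⟨Φ, h1, h2⟩ := hG
  exact ⟨Φ, h.trans h1, fun k hk => by rw [h.detIdeal_eq, h2 k hk]⟩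

lemma Good.smul {r : ℕ} {F : Matrix (Fin r) (Fin r) A} (c : A) (h : Good F) : Good (c • F) := by
  obtain ⟨Φ, h1, h2⟩ := h
  refine ⟨fun i => c * Φ i, ?_, fun k hk => ?_⟩
  · convert! h1.smul c using 1
    ext i j
    by_cases hij : i = j
    · subst hij; simp
    · simp [hij]
  · rw [detIdeal_smul, h2 k hk, Ideal.span_singleton_mul_span_singleton, Finset.prod_mul_distrib]
    simp

lemma Good.step {s : ℕ} {F : Matrix (Fin (s + 1)) (Fin (s + 1)) A} {G : Matrix (Fin s) (Fin s) A}
    (h : MEq (F.submatrix (sE s) (sE s)) (fromBlocks 1 0 0 G)) (hG : Good G) : Good F := by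
  obtain ⟨Φ, h1, h2⟩ := hG
  refine ⟨fun i => Nat.casesOn i 1 Φ, ?_, fun k hk => ?_⟩
  · have h3 := h.trans ((MEq.refl (1 : Matrix Unit Unit A)).fromBlocks h1)
    have h4 := h3.submatrix (sE s).symm (sE s).symm
    simp only [submatrix_submatrix, Equiv.self_comp_symm, submatrix_id_id] at h4
    convert! h4 using 1
    ext i j
    obtain ⟨i, rfl⟩ := (sE s).surjective i
    obtain ⟨j, rfl⟩ := (sE s).surjective j
    rcases i with i | i <;> rcases j with j | j
    · simp [sE]
    · simp [sE, diagonal_apply, (Fin.succ_ne_zero _).symm]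
    · simp [sE, diagonal_apply]
    · simp [sE, diagonal_apply]
  · rw [← detIdeal_equiv F (sE s) (sE s), h.detIdeal_eq]
    cases k with
    | zero => rw [detIdeal_zero]; simp
    | succ k =>
      rw [detIdeal_fromBlocks_one, h2 k (by omega), Finset.prod_range_succ']
      simp

lemma PIM.step {s : ℕ} {F : Matrix (Fin (s + 1)) (Fin (s + 1)) A} {G : Matrix (Fin s) (Fin s) A}
    (h : MEq (F.submatrix (sE s) (sE s)) (fromBlocks 1 0 0 G)) (hF : PIM F) : PIM G := by
  intro k
  obtain ⟨d, hd⟩ := hF (k + 1)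
  refine ⟨d, ?_⟩
  rw [← hd, ← detIdeal_equiv F (sE s) (sE s), h.detIdeal_eq, detIdeal_fromBlocks_one]

lemma entry_mem {ι κ : Type*} (F : Matrix ι κ A) (i : ι) (j : κ) : F i j ∈ detIdeal F 1 := by
  have := minor_mem F (k := 1) (fun _ => i) (fun _ => j)
  simpa using this

lemma exists_content [IsDomain A] {s : ℕ} (F : Matrix (Fin (s + 1)) (Fin (s + 1)) A) (hF : PIM F)
    (hdet : F.det ≠ 0) :
    ∃ (c : A) (G : Matrix (Fin (s + 1)) (Fin (s + 1)) A), F = c • G ∧ PIM G ∧ detIdeal G 1 = ⊤ := by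
  obtain ⟨c, hc⟩ := hF 1
  have hdvd : ∀ i j, ∃ x, F i j = c * x := by
    intro i j
    have := entry_mem F i j
    rw [hc, Ideal.mem_span_singleton] at this
    exact this
  choose G hG using hdvd
  have hFG : F = c • (Matrix.of G) := by ext i j; simp [hG]
  have hc0 : c ≠ 0 := by
    rintro rfl
    apply hdet
    rw [hFG, zero_smul, det_zero]
  have hk : ∀ k, ∃ d, detIdeal (Matrix.of G) k = Ideal.span {d} ∧
      detIdeal F k = Ideal.span {c ^ k * d} := by
    intro k
    obtain ⟨e, he⟩ := hF k
    have h1 := detIdeal_smul c (Matrix.of G) k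
    rw [← hFG] at h1
    have h2 : e ∈ Ideal.span {c ^ k} := by
      have : e ∈ detIdeal F k := by rw [he]; exact Ideal.mem_span_singleton_self e
      rw [h1] at this
      exact (Ideal.mul_le_inf (I := Ideal.span {c ^ k}) (J := detIdeal (Matrix.of G) k) this).1
    obtain ⟨d, rfl⟩ := Ideal.mem_span_singleton.1 h2
    refine ⟨d, ?_, he⟩
    rw [he, ← Ideal.span_singleton_mul_span_singleton] at h1
    exact ((Ideal.span_singleton_mul_right_inj (pow_ne_zero k hc0)).1 h1).symm
  refine ⟨c, Matrix.of G, hFG, fun k => ?_, ?_⟩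
  · obtain ⟨d, hd, _⟩ := hk k
    exact ⟨d, hd⟩
  · obtain ⟨d, hd, hd'⟩ := hk 1
    rw [hc, pow_one, Ideal.span_singleton_eq_span_singleton] at hd'
    have : IsUnit d := by
      obtain ⟨u, hu⟩ := hd'
      have := mul_left_cancel₀ hc0 hu
      rw [← this]; exact u.isUnit
    rw [hd, Ideal.span_singleton_eq_top]; exact this

lemma block_form [Nontrivial A] (hQ : HQ A) {s : ℕ} (F : Matrix (Fin (s + 1)) (Fin (s + 1)) A)
    (U : Matrix (Fin (s + 1)) (Fin (s + 1)) A) (hU : IsUnit U.det) (v : Fin (s + 1) → A)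
    (h : U *ᵥ (F *ᵥ v) = Pi.single 0 1) :
    ∃ G : Matrix (Fin s) (Fin s) A, MEq (F.submatrix (sE s) (sE s)) (fromBlocks 1 0 0 G) := by
  have h0 : (U * F) 0 ⬝ᵥ v = 1 := by
    have := congrFun h 0
    rw [Matrix.mulVec_mulVec] at this
    simpa [Matrix.mulVec] using this
  obtain ⟨V, hV, hV0, haV⟩ := complete_aux hQ _ v h0
  let W := U * F * V
  have hcol : ∀ i, W i 0 = (Pi.single 0 1 : Fin (s + 1) → A) i := by
    intro i
    rw [← h, Matrix.mulVec_mulVec]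
    simp only [W, Matrix.mul_apply (M := U * F), hV0, Matrix.mulVec, dotProduct]
  have hrow : ∀ j, W 0 j = (Pi.single 0 1 : Fin (s + 1) → A) j := by
    intro j
    rw [← haV]
    rfl
  refine ⟨W.submatrix Fin.succ Fin.succ, ?_⟩
  have hW : MEq F W := ((MEq.right hV _).trans (MEq.left hU _)).symm
  convert! hW.submatrix (sE s) (sE s) using 1
  ext i j
  rcases i with i | i <;> rcases j with j | j
  · simp [sE, hcol]
  · simp [sE, hrow]
  · simp [sE, hcol]
  · simp [sE]

end Good
end SF

set_option linter.unusedSectionVars false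
set_option linter.unusedSimpArgs false

namespace SF
section ThmB

lemma unit_first {A : Type*} [CommRing A] {s : ℕ} (w : Fin (s + 1) → A) (hw : w 0 = 1) :
    ∃ U : Matrix (Fin (s + 1)) (Fin (s + 1)) A, U.det = 1 ∧ U *ᵥ w = Pi.single 0 1 := by
  obtain ⟨U, hU, h⟩ := Orb.col (J := (⊥ : Ideal A)) w 0 (fun j => if j = 0 then 0 else - w j) (by simp)
  refine ⟨U, hU, ?_⟩
  ext1 j
  have := h j
  rw [Ideal.mem_bot, sub_eq_zero] at this
  rw [this]
  by_cases hj : j = 0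
  · subst hj; simp [hw]
  · simp [hj, hw]

lemma sup_iInf_top {B R : Type*} [CommRing B] [CommRing R] (φ : B →+* R) {τ : Type*} [Finite τ] (M : τ → Ideal B)
    (I : Ideal R) (h : ∀ j, I ⊔ (M j).map φ = ⊤) : I ⊔ (⨅ j, M j).map φ = ⊤ := by
  classical
  have := Fintype.ofFinite τ
  by_contra hc
  obtain ⟨m, hm, hle⟩ := Ideal.exists_le_maximal _ hc
  have hp : (m.comap φ).IsPrime := Ideal.comap_isPrime φ m
  have h1 : Finset.univ.inf M ≤ m.comap φ := by
    rw [Finset.inf_univ_eq_iInf, ← Ideal.map_le_iff_le_comap]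
    exact le_sup_right.trans hle
  obtain ⟨j, _, hj⟩ := (Ideal.IsPrime.inf_le' hp).1 h1
  apply hm.ne_top
  rw [eq_top_iff, ← h j]
  exact sup_le (le_sup_left.trans hle) (Ideal.map_le_iff_le_comap.2 hj)

lemma finish {A : Type*} [CommRing A] {s : ℕ} (F Y : Matrix (Fin (s + 1)) (Fin (s + 1)) A)
    (hY : Y.det = 1) (v : Fin (s + 1) → A) (H b c t : A)
    (ht : 1 - H * b = (Y *ᵥ (F *ᵥ v)) 0 * t) (hc : H = F.det * c) :
    ∃ (U : Matrix (Fin (s + 1)) (Fin (s + 1)) A)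
      (v : Fin (s + 1) → A), IsUnit U.det ∧ U *ᵥ (F *ᵥ v) = Pi.single 0 1 := by
  obtain ⟨w, hw⟩ : ∃ w, w = Y *ᵥ (F *ᵥ v) := ⟨_, rfl⟩
  rw [← hw] at ht
  obtain ⟨z, hz⟩ : ∃ z : Fin (s + 1) → A, Y *ᵥ (F *ᵥ z) = F.det • Pi.single 0 1 := by
    refine ⟨F.adjugate *ᵥ (Y.adjugate *ᵥ Pi.single 0 1), ?_⟩
    have h1 : F *ᵥ (F.adjugate *ᵥ (Y.adjugate *ᵥ Pi.single 0 1)) =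
        F.det • (Y.adjugate *ᵥ Pi.single 0 1) := by
      rw [Matrix.mulVec_mulVec _ F, Matrix.mul_adjugate, Matrix.smul_mulVec, Matrix.one_mulVec]
    have h2 : Y *ᵥ (Y.adjugate *ᵥ Pi.single 0 1) = (Pi.single 0 1 : Fin (s + 1) → A) := by
      rw [Matrix.mulVec_mulVec, Matrix.mul_adjugate, hY, one_smul, Matrix.one_mulVec]
    rw [h1, Matrix.mulVec_smul, h2]
  have hv' : Y *ᵥ (F *ᵥ (t • v + (c * b) • z)) = t • w + (c * b) • (F.det • Pi.single 0 1) := by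
    rw [Matrix.mulVec_add, Matrix.mulVec_smul, Matrix.mulVec_smul, Matrix.mulVec_add, Matrix.mulVec_smul,
      Matrix.mulVec_smul, hz, ← hw]
  obtain ⟨U, hU, hUw⟩ := unit_first (Y *ᵥ (F *ᵥ (t • v + (c * b) • z))) (by
    rw [hv']
    simp only [Pi.add_apply, Pi.smul_apply, Pi.single_eq_same, smul_eq_mul, mul_one]
    rw [mul_comm t, ← ht, hc]; ring)
  refine ⟨U * Y, t • v + (c * b) • z, (by rw [det_mul, hU, hY]; simp), ?_⟩
  rw [← Matrix.mulVec_mulVec]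
  exact hUw

variable {B : Type*} [CommRing B] [IsDomain B] [IsPrincipalIdealRing B]

lemma local_image {k r : ℕ} (F : Matrix (Fin r) (Fin r) (MvPolynomial (Fin k) B)) (hF : PIM F)
    (h1 : detIdeal F 1 = ⊤) (h : B) (hh : h ≠ 0) (hdet : F.det ∣ C h) (M : Ideal B) (hM : M.IsMaximal) :
    ∃ v : Fin r → MvPolynomial (Fin k) (B ⧸ M),
      Ideal.span (Set.range ((F.map (MvPolynomial.map (Ideal.Quotient.mk M))) *ᵥ v)) = ⊤ := by
  let _ : Field (B ⧸ M) := Ideal.Quotient.field M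
  set φ := (MvPolynomial.map (σ := Fin k) (Ideal.Quotient.mk M)) with hφ
  obtain ⟨ρ, hρ, hρ1⟩ := exists_rank (F.map φ)
  cases ρ with
  | zero =>
    exfalso
    rw [detIdeal_map, h1, Ideal.map_top] at hρ1
    exact bot_ne_top hρ1.symm
  | succ ρ =>
    refine unimodular_image (HQ_mv (B ⧸ M) k) (F.map φ) (r := ρ) ?_ hρ1
    obtain ⟨d, hd⟩ := hF (ρ + 1)
    have hle : ρ + 1 ≤ r := by
      by_contra hc
      exact hρ (detIdeal_eq_bot_of_card _ (by simpa using hc))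
    have h2 : d ∣ C h := by
      refine dvd_trans ?_ hdet
      rw [← Ideal.mem_span_singleton, ← hd]
      apply detIdeal_anti F hle
      rw [detIdeal_card]
      exact Ideal.mem_span_singleton_self _
    obtain ⟨δ, _, rfl⟩ := (MvPolynomial.dvd_C_iff_exists hh).1 h2
    rw [detIdeal_map, hd, Ideal.map_span, Set.image_singleton] at hρ ⊢
    have h3 : φ (C δ) = C (Ideal.Quotient.mk M δ) := by simp [hφ]
    rw [h3] at hρ ⊢
    rw [Ideal.span_singleton_eq_top]
    refine IsUnit.map C (isUnit_iff_ne_zero.2 fun h0 => hρ ?_)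
    rw [h0, map_zero, Ideal.span_singleton_eq_bot]

lemma image_e0 {k s : ℕ} (F : Matrix (Fin (s + 1)) (Fin (s + 1)) (MvPolynomial (Fin k) B)) (hF : PIM F)
    (h1 : detIdeal F 1 = ⊤) (h : B) (hh : h ≠ 0) (hdet : F.det ∣ C h) :
    ∃ (U : Matrix (Fin (s + 1)) (Fin (s + 1)) (MvPolynomial (Fin k) B))
      (v : Fin (s + 1) → MvPolynomial (Fin k) B), IsUnit U.det ∧ U *ᵥ (F *ᵥ v) = Pi.single 0 1 := by
  classical
  cases s with
  | zero =>
    have hu : IsUnit F.det := by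
      rw [← Ideal.span_singleton_eq_top, ← detIdeal_card, ← h1]
    refine ⟨1, F⁻¹ *ᵥ Pi.single 0 1, by simp, ?_⟩
    rw [Matrix.one_mulVec, Matrix.mulVec_mulVec, Matrix.mul_nonsing_inv _ hu, Matrix.one_mulVec]
  | succ s =>
    let _ : StrongNormalizationMonoid B := UniqueFactorizationMonoid.strongNormalizationMonoid
    let fs := UniqueFactorizationMonoid.normalizedFactors h
    let τ := {π // π ∈ fs.toFinset}
    have hmemf : ∀ π : τ, π.1 ∈ fs := fun π => Multiset.mem_toFinset.1 π.2
    let M : τ → Ideal B := fun π => Ideal.span {π.1}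
    have hirr : ∀ π : τ, Irreducible π.1 := fun π =>
      UniqueFactorizationMonoid.irreducible_of_normalized_factor _ (hmemf π)
    have hmax : ∀ π, (M π).IsMaximal := fun π => PrincipalIdealRing.isMaximal_of_irreducible (hirr π)
    have hcop : Pairwise fun i j => IsCoprime (M i) (M j) := by
      intro i j hij
      rw [Ideal.isCoprime_iff_sup_eq]
      refine (hmax i).coprime_of_ne (hmax j) fun heq => hij ?_
      rw [Ideal.span_singleton_eq_span_singleton] at heq
      have e1 := UniqueFactorizationMonoid.normalize_normalized_factor _ (hmemf i)
      have e2 := UniqueFactorizationMonoid.normalize_normalized_factor _ (hmemf j)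
      apply Subtype.ext
      rw [← e1, ← e2]
      exact normalize_eq_normalize_iff_associated.2 heq
    choose vb hvb using fun π => local_image F hF h1 h hh hdet (M π) (hmax π)
    let φ := fun π => (MvPolynomial.map (σ := Fin k) (Ideal.Quotient.mk (M π)))
    have hφs : ∀ π, Function.Surjective (φ π) := fun π =>
      MvPolynomial.map_surjective _ Ideal.Quotient.mk_surjective
    have hker : ∀ π x, φ π x = 0 ↔ x ∈ (M π).map (C : B →+* MvPolynomial (Fin k) B) := by
      intro π x
      rw [MvPolynomial.mem_map_C_iff, MvPolynomial.ext_iff]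
      simp only [φ, MvPolynomial.coeff_map, MvPolynomial.coeff_zero, Ideal.Quotient.eq_zero_iff_mem]
    choose vl hvl using fun π i => hφs π (vb π i)
    have hcop' : Pairwise fun i j => IsCoprime ((M i).map (C : B →+* MvPolynomial (Fin k) B))
        ((M j).map (C : B →+* MvPolynomial (Fin k) B)) := by
      intro i j hij
      rw [Ideal.isCoprime_iff_sup_eq, ← Ideal.map_sup, Ideal.isCoprime_iff_sup_eq.1 (hcop hij), Ideal.map_top]
    choose v hv using fun i => Ideal.exists_forall_sub_mem_ideal hcop' (fun π => vl π i)
    have hφv : ∀ π i, φ π (v i) = vb π i := by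
      intro π i
      have := (hker π _).2 (hv i π)
      rwa [map_sub, sub_eq_zero, hvl] at this
    have hspan : Ideal.span (Set.range (F *ᵥ v)) ⊔ (⨅ j, M j).map (C : B →+* MvPolynomial (Fin k) B) = ⊤ := by
      apply sup_iInf_top
      intro π
      have h2 := hvb π
      rw [Ideal.eq_top_iff_one] at h2 ⊢
      obtain ⟨c, hc⟩ := Ideal.mem_span_range_iff_exists_fun.1 h2
      choose cl hcl using fun i => hφs π (c i)
      have h3 : ∑ i, cl i * (F *ᵥ v) i ∈ Ideal.span (Set.range (F *ᵥ v)) :=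
        Ideal.mem_span_range_iff_exists_fun.2 ⟨cl, rfl⟩
      have h4 : 1 - ∑ i, cl i * (F *ᵥ v) i ∈ (M π).map (C : B →+* MvPolynomial (Fin k) B) := by
        rw [← hker, map_sub, map_one, ← hc, map_sum, sub_eq_zero]
        refine Finset.sum_congr rfl fun i _ => ?_
        rw [map_mul, hcl, RingHom.map_mulVec]
        congr 2
        congr 1
        ext1 i
        exact (hφv π i).symm
      have := Ideal.add_mem _ (Ideal.mem_sup_left h3) (Ideal.mem_sup_right h4)
      simpa using this
    let e : Fin 2 ⊕ Fin s ≃ Fin (s + 2) := blk (by omega)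
    have he0 : e (Sum.inl 0) = 0 := rfl
    obtain ⟨X, hX, hXv⟩ := propP M hmax hcop k ((F *ᵥ v) ∘ e) (by rwa [EquivLike.range_comp])
    let Y := X.submatrix e.symm e.symm
    have hY : Y.det = 1 := by simp only [Y]; rw [Matrix.det_submatrix_equiv_self, hX]
    let w := Y *ᵥ (F *ᵥ v)
    have hw : w 0 - 1 ∈ (⨅ j, M j).map (C : B →+* MvPolynomial (Fin k) B) := by
      have h2 := hXv (Sum.inl 0)
      have h3 : w 0 = (X *ᵥ ((F *ᵥ v) ∘ e)) (Sum.inl 0) := by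
        simp only [w, Y]
        rw [Matrix.submatrix_mulVec_equiv, ← he0]
        simp
      rw [h3]
      simpa using h2
    obtain ⟨g, hg⟩ := (IsPrincipalIdealRing.principal (⨅ j, M j)).principal
    have hgN : h ∣ g ^ (Multiset.card fs) := by
      have h2 : Associated fs.prod h := UniqueFactorizationMonoid.prod_normalizedFactors hh
      refine h2.symm.dvd.trans ?_
      have h3 : ∀ π ∈ fs, π ∣ g := by
        intro π hπ
        rw [← Ideal.mem_span_singleton]
        have : g ∈ ⨅ j, M j := by rw [hg]; exact Ideal.mem_span_singleton_self g
        rw [Ideal.mem_iInf] at this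
        exact this ⟨π, Multiset.mem_toFinset.2 hπ⟩
      have h4 := Multiset.prod_dvd_prod_of_dvd (S := fs) (fun x => x) (fun _ => g) h3
      simpa using h4
    have hw2 : C h ∣ (1 - w 0) ^ (Multiset.card fs) := by
      rw [hg] at hw
      have hw' : w 0 - 1 ∈ (Ideal.span {g}).map (C : B →+* MvPolynomial (Fin k) B) := hw
      rw [Ideal.map_span, Set.image_singleton, Ideal.mem_span_singleton] at hw'
      refine dvd_trans (map_dvd C hgN) ?_
      rw [map_pow]
      exact pow_dvd_pow_of_dvd ((dvd_sub_comm).1 hw') _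
    obtain ⟨b, hb⟩ := hw2
    obtain ⟨t, ht⟩ : w 0 ∣ 1 - C h * b := by
      have := sub_dvd_pow_sub_pow 1 (1 - w 0) (Multiset.card fs)
      rw [one_pow, hb, sub_sub_cancel] at this
      exact this
    obtain ⟨c, hc⟩ := hdet
    exact finish F Y hY v (C h) b c t ht hc

theorem thmB (k : ℕ) (hQ : HQ (MvPolynomial (Fin k) B)) (h : B) (hh : h ≠ 0) :
    ∀ (r : ℕ) (F : Matrix (Fin r) (Fin r) (MvPolynomial (Fin k) B)), PIM F → F.det ∣ C h → Good F := by
  intro r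
  induction r with
  | zero =>
    intro F _ _
    refine ⟨fun _ => 1, ?_, ?_⟩
    · rw [Subsingleton.elim F (diagonal _)]; exact MEq.refl _
    · intro k hk
      obtain rfl : k = 0 := by omega
      simp [detIdeal_zero]
  | succ s ih =>
    intro F hF hdet
    have hd0 : F.det ≠ 0 := by
      rintro h0
      rw [h0, zero_dvd_iff, MvPolynomial.C_eq_zero] at hdet
      exact hh hdet
    obtain ⟨c, G, rfl, hG, hG1⟩ := exists_content F hF hd0
    apply Good.smul
    have hdG : G.det ∣ C h := by
      refine dvd_trans ?_ hdet
      rw [det_smul]; exact Dvd.intro_left _ rfl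
    obtain ⟨U, v, hU, hUv⟩ := image_e0 G hG hG1 h hh hdG
    obtain ⟨G', hG'⟩ := block_form hQ G U hU v hUv
    refine Good.step hG' (ih G' (PIM.step hG' hG) ?_)
    refine dvd_trans ?_ hdG
    rw [← Ideal.mem_span_singleton, ← detIdeal_card, ← detIdeal_fromBlocks_one, ← hG'.detIdeal_eq,
      detIdeal_equiv, detIdeal_card]
    exact Ideal.mem_span_singleton_self _

end ThmB
end SF

set_option linter.unusedSectionVars false
set_option linter.unusedSimpArgs false

namespace SF
section Step
variable {R : Type*} [CommRing R] [IsDomain R]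

lemma lower_good {s : ℕ} (F : Matrix (Fin (s + 1)) (Fin (s + 1)) R) (Φ : ℕ → R)
    (g : Matrix (Fin 1) (Fin s) R) (c : Matrix (Fin 1) (Fin 1) R)
    (hM : MEq (F.submatrix (blk rfl) (blk rfl)) (fromBlocks (diagonal fun i : Fin s => Φ i) 0 g c))
    (hI : ∀ k ≤ s, detIdeal F k = Ideal.span {∏ i ∈ Finset.range k, Φ i})
    (hne : ∏ i ∈ Finset.range s, Φ i ≠ 0) : Good F := by
  have hdvd : ∀ j : Fin s, ∃ x, g 0 j = Φ j * x := by
    intro j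
    let f : Fin (j + 1) → Fin s ⊕ Fin 1 := fun i =>
      if h : i.1 < j.1 then Sum.inl ⟨i, by omega⟩ else Sum.inr 0
    let f' : Fin (j + 1) → Fin s ⊕ Fin 1 := fun i => Sum.inl ⟨i, by omega⟩
    have h1 := minor_mem (fromBlocks (diagonal fun i : Fin s => Φ i) 0 g c) f f'
    rw [← hM.detIdeal_eq, detIdeal_equiv, hI _ (by omega), Matrix.det_of_isLowerTriangular,
      Fin.prod_univ_castSucc] at h1
    · have h2 : ∀ i : Fin j, (fromBlocks (diagonal fun i : Fin s => Φ i) 0 g c).submatrix f f'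
          i.castSucc i.castSucc = Φ i := by
        intro i
        simp [f, f']
      have h3 : (fromBlocks (diagonal fun i : Fin s => Φ i) 0 g c).submatrix f f'
          (Fin.last _) (Fin.last _) = g 0 j := by
        simp [f, f']
      rw [h3, Finset.prod_congr rfl (fun i _ => h2 i), Fin.prod_univ_eq_prod_range (fun i => Φ i),
        Ideal.mem_span_singleton, Finset.prod_range_succ] at h1
      refine (mul_dvd_mul_iff_left ?_).1 h1
      intro h0
      apply hne
      rw [Finset.prod_eq_zero_iff] at h0 ⊢
      obtain ⟨a, ha, h⟩ := h0
      exact ⟨a, by simp at ha ⊢; omega, h⟩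
    · intro i i' hii
      have hii' : i < i' := hii
      have hi : i.1 < j.1 := by have := i'.2; have : i.1 < i'.1 := hii'; omega
      simp only [submatrix_apply, f, f', hi, dif_pos, fromBlocks_apply₁₁]
      rw [diagonal_apply_ne]
      intro h
      have := congrArg Fin.val h
      simp at this
      exact absurd this (by have : i.1 < i'.1 := hii'; omega)
  choose x hx using hdvd
  have hfac : fromBlocks (diagonal fun i : Fin s => Φ i) 0 g c =
      fromBlocks 1 0 (Matrix.of fun _ j => x j) 1 * fromBlocks (diagonal fun i : Fin s => Φ i) 0 0 c := by
    rw [fromBlocks_multiply]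
    simp only [one_mul, Matrix.zero_mul, add_zero, Matrix.mul_zero, zero_add, Matrix.one_mul]
    congr 1
    ext i j
    rw [Subsingleton.elim i 0, hx j]
    simp [mul_comm]
  have hM2 := hM.trans (hfac ▸ MEq.left (by rw [det_fromBlocks_zero₁₂]; simp) _)
  let Ψ : ℕ → R := fun i => if i < s then Φ i else c 0 0
  have hΨ : ∀ k ≤ s, ∏ i ∈ Finset.range k, Ψ i = ∏ i ∈ Finset.range k, Φ i := by
    intro k hk
    refine Finset.prod_congr rfl fun i hi => ?_
    rw [Finset.mem_range] at hi
    simp [Ψ, show i < s by omega]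
  have hM3 : MEq F (diagonal fun i : Fin (s + 1) => Ψ i) := by
    have h4 := hM2.submatrix (blk rfl).symm (blk rfl).symm
    simp only [submatrix_submatrix, Equiv.self_comp_symm, submatrix_id_id] at h4
    convert! h4 using 1
    ext i j
    obtain ⟨i, rfl⟩ := (blk (rfl : s + 1 = s + 1)).surjective i
    obtain ⟨j, rfl⟩ := (blk (rfl : s + 1 = s + 1)).surjective j
    have hd : diagonal (fun i : Fin (s + 1) => Ψ i) (blk rfl i) (blk rfl j) =
        if i = j then Ψ (blk (rfl : s + 1 = s + 1) i) else 0 := by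
      rw [diagonal_apply]; simp
    rw [hd]
    rcases i with i | i <;> rcases j with j | j
    · by_cases h : i = j
      · subst h; simp [blk, Ψ]
      · simp [h]
    · simp
    · simp
    · rw [Subsingleton.elim i 0, Subsingleton.elim j 0]
      simp [blk, Ψ]
  refine ⟨Ψ, hM3, fun k hk => ?_⟩
  rcases Nat.lt_or_ge s k with h | h
  · obtain rfl : k = s + 1 := by omega
    rw [hM3.detIdeal_eq, detIdeal_card, det_diagonal, Fin.prod_univ_eq_prod_range (fun i => Ψ i)]
  · rw [hI k h, hΨ k h]

/-- the diagonal matrix with last entry `p` -/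
def PD (s : ℕ) (p : R) : Matrix (Fin (s + 1)) (Fin (s + 1)) R :=
  diagonal fun i => if i = Fin.last s then p else 1

lemma PD_det (s : ℕ) (p : R) : (PD s p).det = p := by
  rw [PD, det_diagonal, Finset.prod_ite_eq' Finset.univ (Fin.last s) (fun _ => p)]
  simp

lemma conj_PD {s : ℕ} {p : R} (hp : p ≠ 0) (N : Matrix (Fin (s + 1)) (Fin (s + 1)) R)
    (hN : ∀ i j, p ∣ (N - 1) i j) (hu : IsUnit N.det) :
    ∃ Y : Matrix (Fin (s + 1)) (Fin (s + 1)) R, IsUnit Y.det ∧ PD s p * N = Y * PD s p := by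
  choose N' hN' using hN
  let Y : Matrix (Fin (s + 1)) (Fin (s + 1)) R := Matrix.of fun i j =>
    if i = Fin.last s then (if j = Fin.last s then N i j else p * N i j)
    else (if j = Fin.last s then N' i j else N i j)
  have hY : PD s p * N = Y * PD s p := by
    ext i j
    rw [PD, diagonal_mul, mul_diagonal]
    simp only [Y, of_apply]
    by_cases hi : i = Fin.last s <;> by_cases hj : j = Fin.last s
    · simp [hi, hj, mul_comm]
    · simp [hi, hj]
    · have := hN' i j
      rw [Matrix.sub_apply, one_apply_ne (by rw [hj]; exact hi), sub_zero] at this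
      rw [if_neg hi, if_neg hi, if_pos hj, if_pos hj, this]
      ring
    · simp [hi, hj]
  refine ⟨Y, ?_, hY⟩
  have := congrArg Matrix.det hY
  rw [det_mul, det_mul, PD_det, mul_comm] at this
  rw [← mul_right_cancel₀ hp this]
  exact hu

/-- the data used for the elimination of one linear factor -/
structure Eps (ε : R →+* R) (p q : R) : Prop where
  ep : ε p = 0
  sub : ∀ x, p ∣ x - ε x
  fix : ∀ d, d ∣ q → ε d = d
  p0 : p ≠ 0
  q0 : q ≠ 0

variable {ε : R →+* R} {p q : R}

lemma Eps.dvd_iff (h : Eps ε p q) (x : R) : p ∣ x ↔ ε x = 0 := by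
  constructor
  · rintro ⟨y, rfl⟩; rw [map_mul, h.ep, zero_mul]
  · intro hx; simpa [hx] using h.sub x

lemma Eps.idem (h : Eps ε p q) (x : R) : ε (ε x) = ε x := by
  have := (h.dvd_iff _).1 (h.sub x)
  rw [map_sub, sub_eq_zero] at this
  exact this.symm

lemma Eps.prime (h : Eps ε p q) {x y : R} (hxy : p ∣ x * y) : p ∣ x ∨ p ∣ y := by
  rw [h.dvd_iff, map_mul, mul_eq_zero] at hxy
  rwa [h.dvd_iff, h.dvd_iff]

lemma Eps.cancel (h : Eps ε p q) {d x : R} (hd : ¬ p ∣ d) (a : ℕ) (hx : d ∣ p ^ a * x) : d ∣ x := by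
  induction a with
  | zero => simpa using hx
  | succ a ih =>
    apply ih
    obtain ⟨y, hy⟩ := hx
    have : p ∣ d * y := ⟨p ^ a * x, by rw [← hy]; ring⟩
    rcases h.prime this with h1 | ⟨z, rfl⟩
    · exact absurd h1 hd
    · refine ⟨z, mul_left_cancel₀ h.p0 ?_⟩
      linear_combination hy

lemma Eps.not_dvd_one (h : Eps ε p q) : ¬ p ∣ 1 := by
  rw [h.dvd_iff, map_one]; exact one_ne_zero

lemma Eps.not_dvd_q (h : Eps ε p q) {d : R} (hd : d ∣ q) : ¬ p ∣ d := by
  rw [h.dvd_iff, h.fix d hd]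
  rintro rfl
  exact h.q0 (zero_dvd_iff.1 hd)

end Step
end SF

set_option linter.unusedSectionVars false
set_option linter.unusedSimpArgs false

namespace SF
section Step
variable {R : Type*} [CommRing R] [IsDomain R]
variable {ε : R →+* R} {p q : R}

lemma detIdeal_fromCols_zero {ι κ ν : Type*} [Fintype κ] (F : Matrix ι κ R) (k : ℕ) :
    detIdeal (fromCols F (0 : Matrix ι ν R)) k = detIdeal F k := by
  rw [← detIdeal_transpose, transpose_fromCols, transpose_zero, detIdeal_fromRows_zero,
    detIdeal_transpose]

lemma PD_minor (s : ℕ) (p : R) (F : Matrix (Fin (s + 1)) (Fin (s + 1)) R) {k : ℕ}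
    (f g : Fin k → Fin (s + 1)) :
    ∃ a, ((PD s p * F).submatrix f g).det = p ^ a * (F.submatrix f g).det := by
  have h1 : (PD s p * F).submatrix f g =
      diagonal (fun i => if f i = Fin.last s then p else 1) * F.submatrix f g := by
    ext i j
    rw [PD, submatrix_apply, diagonal_mul, diagonal_mul, submatrix_apply]
  rw [h1, det_mul, det_diagonal, Finset.prod_ite]
  simp only [Finset.prod_const, one_pow, mul_one]
  exact ⟨_, rfl⟩

lemma PD_detIdeal (hE : Eps ε p q) {s : ℕ} (F : Matrix (Fin (s + 1)) (Fin (s + 1)) R) {k : ℕ} {d : R}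
    (hd : detIdeal (PD s p * F) k = Ideal.span {d}) (hpd : ¬ p ∣ d) :
    detIdeal F k = Ideal.span {d} := by
  apply le_antisymm
  · refine detIdeal_le fun f g => ?_
    obtain ⟨a, ha⟩ := PD_minor s p F f g
    have h1 := minor_mem (PD s p * F) f g
    rw [hd, Ideal.mem_span_singleton, ha] at h1
    rw [Ideal.mem_span_singleton]
    exact hE.cancel hpd a h1
  · rw [← hd]; exact detIdeal_mul_le_right _ _ _

/-- second half: the matrix already has the form `PD * G` with `G` fixed by `ε` -/
lemma step_fixed (hQ : HQ R) (hE : Eps ε p q)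
    (IH : ∀ r (F : Matrix (Fin r) (Fin r) R), PIM F → F.det ∣ q → Good F)
    {s : ℕ} (G : Matrix (Fin (s + 1)) (Fin (s + 1)) R) (hG : G.map ε = G) (d : ℕ → R)
    (hd : ∀ k ≤ s, detIdeal (PD s p * G) k = Ideal.span {d k}) (hdq : ∀ k ≤ s, d k ∣ q) :
    Good (PD s p * G) := by
  have hds : d s ≠ 0 := fun h0 => hE.q0 (zero_dvd_iff.1 (h0 ▸ hdq s le_rfl))
  let T : Matrix (Fin s) (Fin (s + 1)) R := G.submatrix Fin.castSucc id
  have hb1 : ∀ i : Fin s, blk (rfl : s + 1 = s + 1) (Sum.inl i) = i.castSucc := by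
    intro i; ext; simp [blk]
  have hb2 : ∀ i : Fin 1, blk (rfl : s + 1 = s + 1) (Sum.inr i) = Fin.last s := by
    intro i; ext; simp [blk]
  have hT : ((PD s p * G).map ε).submatrix (blk (rfl : s + 1 = s + 1)) id = fromRows T 0 := by
    ext i j
    rcases i with i | i
    · have := congrFun (congrFun hG i.castSucc) j
      rw [map_apply] at this
      rw [submatrix_apply, map_apply, PD, diagonal_mul, hb1, if_neg (Fin.castSucc_ne_last i),
        one_mul, fromRows_apply_inl]
      exact this
    · rw [submatrix_apply, map_apply, PD, diagonal_mul, hb2, if_pos rfl, map_mul, hE.ep, zero_mul]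
      rfl
  have hTk : ∀ k ≤ s, detIdeal T k = Ideal.span {d k} := by
    intro k hk
    rw [← detIdeal_fromRows_zero (ν := Fin 1), ← hT]
    have := detIdeal_equiv ((PD s p * G).map ε) (blk (rfl : s + 1 = s + 1)) (Equiv.refl _) k
    rw [Equiv.coe_refl] at this
    rw [this, detIdeal_map, hd k hk, Ideal.map_span, Set.image_singleton, hE.fix _ (hdq k hk)]
  obtain ⟨s', hs', V, G1, hV, hVG⟩ := right_form hQ T (hTk s le_rfl) hds
    (detIdeal_eq_bot_of_card _ (by simp))
  obtain rfl : s' = 1 := by omega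
  have hG1 : ∀ k, detIdeal G1 k = detIdeal T k := by
    intro k
    rw [← detIdeal_fromCols_zero (ν := Fin 1), ← hVG]
    have := detIdeal_equiv (T * V) (Equiv.refl _) (blk hs') k
    rw [Equiv.coe_refl] at this
    rw [this, (MEq.right hV T).detIdeal_eq]
  have hPIM : PIM G1 := by
    intro k
    rcases Nat.lt_or_ge s k with h | h
    · exact ⟨0, by rw [detIdeal_eq_bot_of_card _ (by simpa using h)]; simp⟩
    · exact ⟨d k, by rw [hG1, hTk k h]⟩
  have hdet : G1.det ∣ q := by
    have h1 := hG1 s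
    rw [detIdeal_card, hTk s le_rfl] at h1
    refine dvd_trans ?_ (hdq s le_rfl)
    rw [← Ideal.mem_span_singleton, h1]
    exact Ideal.mem_span_singleton_self _
  obtain ⟨Φ, ⟨U2, V2, hU2, hV2, hG1e⟩, hΦ⟩ := IH s G1 hPIM hdet
  have hΦ' : ∀ k ≤ s, detIdeal (PD s p * G) k = Ideal.span {∏ i ∈ Finset.range k, Φ i} := by
    intro k hk
    rw [hd k hk, ← hTk k hk, ← hG1, hΦ k hk]
  let M := (PD s p * G * V).submatrix (blk (rfl : s + 1 = s + 1)) (blk (rfl : s + 1 = s + 1))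
  have hM11 : M.toBlocks₁₁ = G1 := by
    ext i j
    have := congrFun (congrFun hVG i) (Sum.inl j)
    rw [fromCols_apply_inl] at this
    rw [← this]
    simp only [M, toBlocks₁₁, of_apply, submatrix_apply, Matrix.mul_assoc, PD, diagonal_mul, hb1,
      if_neg (Fin.castSucc_ne_last i), one_mul]
    rfl
  have hM12 : M.toBlocks₁₂ = 0 := by
    ext i j
    have := congrFun (congrFun hVG i) (Sum.inr j)
    rw [fromCols_apply_inr] at this
    rw [← this]
    simp only [M, toBlocks₁₂, of_apply, submatrix_apply, Matrix.mul_assoc, PD, diagonal_mul, hb1,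
      if_neg (Fin.castSucc_ne_last i), one_mul]
    rfl
  have hMb : M = fromBlocks U2 0 0 1 *
      fromBlocks (diagonal fun i : Fin s => Φ i) 0 (M.toBlocks₂₁ * V2⁻¹) M.toBlocks₂₂ *
      fromBlocks V2 0 0 1 := by
    rw [fromBlocks_multiply, fromBlocks_multiply]
    simp only [Matrix.mul_zero, Matrix.zero_mul, add_zero, zero_add, Matrix.one_mul, Matrix.mul_one,
      Matrix.mul_assoc, nonsing_inv_mul _ hV2]
    rw [← Matrix.mul_assoc, ← hG1e]
    conv_lhs => rw [← fromBlocks_toBlocks M]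
    rw [hM11, hM12]
  refine lower_good _ Φ (M.toBlocks₂₁ * V2⁻¹) M.toBlocks₂₂ ?_ hΦ' ?_
  · have h1 := ((MEq.right hV (PD s p * G)).symm).submatrix (blk (rfl : s + 1 = s + 1))
      (blk (rfl : s + 1 = s + 1))
    refine h1.trans ⟨fromBlocks U2 0 0 1, fromBlocks V2 0 0 1, ?_, ?_, hMb⟩
    · rw [det_fromBlocks_zero₂₁]; simpa using hU2
    · rw [det_fromBlocks_zero₂₁]; simpa using hV2
  · intro h0
    have h1 := hΦ' s le_rfl
    rw [hd s le_rfl, h0] at h1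
    exact hds (by simpa using h1)

lemma step_PD (hQ : HQ R) (hE : Eps ε p q)
    (IH : ∀ r (F : Matrix (Fin r) (Fin r) R), PIM F → F.det ∣ q → Good F)
    {s : ℕ} (F1 : Matrix (Fin (s + 1)) (Fin (s + 1)) R) (d : ℕ → R)
    (hd : ∀ k ≤ s, detIdeal (PD s p * F1) k = Ideal.span {d k}) (hdq : ∀ k ≤ s, d k ∣ q)
    (hdet : F1.det ∣ q) :
    Good (PD s p * F1) := by
  have hPIM : PIM F1 := by
    intro k
    rcases Nat.lt_or_ge s k with h | h
    · rcases Nat.lt_or_ge (s + 1) k with h' | h'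
      · exact ⟨0, by rw [detIdeal_eq_bot_of_card _ (by simpa using h')]; simp⟩
      · obtain rfl : k = s + 1 := by omega
        exact ⟨_, detIdeal_card _⟩
    · exact ⟨d k, PD_detIdeal hE F1 (hd k h) (hE.not_dvd_q (hdq k h))⟩
  obtain ⟨Φ, ⟨W, V, hW, hV, hF1⟩, hΦ⟩ := IH _ F1 hPIM hdet
  have hΦq : ∀ i : Fin (s + 1), Φ i ∣ q := by
    intro i
    have h1 : Φ i ∣ F1.det := by
      rw [hF1, det_mul, det_mul, det_diagonal]
      exact ((Finset.dvd_prod_of_mem _ (Finset.mem_univ i)).mul_left _).mul_right _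
    exact h1.trans hdet
  have hW' : IsUnit (W.map ε).det := by
    have := hW.map ε; rwa [RingHom.map_det] at this
  have hN : ∀ i j, p ∣ (W * (W.map ε)⁻¹ - 1) i j := by
    intro i j
    have h1 : W * (W.map ε)⁻¹ - 1 = (W - W.map ε) * (W.map ε)⁻¹ := by
      rw [Matrix.sub_mul, mul_nonsing_inv _ hW']
    rw [h1, Matrix.mul_apply]
    refine Finset.dvd_sum fun x _ => Dvd.dvd.mul_right ?_ _
    exact hE.sub _
  have hNu : IsUnit (W * (W.map ε)⁻¹).det := by
    rw [det_mul]; exact hW.mul (Matrix.isUnit_nonsing_inv_det _ hW')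
  obtain ⟨Y, hY, hPY⟩ := conj_PD hE.p0 _ hN hNu
  let G := W.map ε * diagonal fun i : Fin (s + 1) => Φ i
  have hG : G.map ε = G := by
    ext i j
    simp only [G, map_apply, mul_diagonal, map_mul, hE.idem, hE.fix _ (hΦq j)]
  have hMEq : MEq (PD s p * F1) (PD s p * G) := by
    refine ⟨Y, V, hY, hV, ?_⟩
    rw [← Matrix.mul_assoc Y, ← hPY, hF1]
    simp only [G, Matrix.mul_assoc]
    rw [← Matrix.mul_assoc (W.map ε)⁻¹, nonsing_inv_mul _ hW', Matrix.one_mul]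
  refine Good.of_MEq hMEq (step_fixed hQ hE IH G hG d (fun k hk => ?_) hdq)
  rw [← hMEq.detIdeal_eq, hd k hk]

theorem step (hQ : HQ R) (hE : Eps ε p q)
    (IH : ∀ r (F : Matrix (Fin r) (Fin r) R), PIM F → F.det ∣ q → Good F)
    (r : ℕ) (F : Matrix (Fin r) (Fin r) R) (hF : PIM F) (hdet : F.det ∣ p * q) : Good F := by
  by_cases hp : p ∣ F.det
  swap
  · exact IH r F hF (hE.cancel hp 1 (by simpa using hdet))
  obtain ⟨d', hd'⟩ := hp
  have hd'q : d' ∣ q := by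
    rw [hd'] at hdet
    exact (mul_dvd_mul_iff_left hE.p0).1 hdet
  have hd'0 : d' ≠ 0 := fun h => hE.q0 (zero_dvd_iff.1 (h ▸ hd'q))
  obtain rfl | ⟨s, rfl⟩ : r = 0 ∨ ∃ s, r = s + 1 := by
    rcases r with _ | s
    · exact Or.inl rfl
    · exact Or.inr ⟨s, rfl⟩
  · exact absurd ⟨d', by rw [← hd', det_fin_zero]⟩ hE.not_dvd_one
  choose d hd using hF
  -- `p` does not divide `d s`
  have hps : ¬ p ∣ d s := by
    intro hps
    have hadj : ∀ i j, p ∣ F.adjugate i j := by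
      intro i j
      rw [adjugate_fin_succ_eq_det_submatrix]
      refine Dvd.dvd.mul_left (hps.trans ?_) _
      rw [← Ideal.mem_span_singleton, ← hd]
      exact minor_mem _ _ _
    choose A' hA' using hadj
    have hA : F.adjugate = p • (Matrix.of A') := by ext i j; simp [hA']
    have h1 := det_adjugate F
    rw [hA, det_smul, hd'] at h1
    simp only [Fintype.card_fin, Nat.add_sub_cancel] at h1
    rw [mul_pow, pow_succ, mul_assoc] at h1
    have h2 := mul_left_cancel₀ (pow_ne_zero s hE.p0) h1
    have h3 : p ∣ d' ^ s := ⟨_, h2.symm⟩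
    rw [hE.dvd_iff, map_pow, hE.fix _ hd'q] at h3
    exact hd'0 (by by_contra hc; exact pow_ne_zero s hc h3)
  have hdsq : d s ∣ q := by
    have h1 : F.det ∈ detIdeal F s := by
      apply detIdeal_succ_le
      rw [detIdeal_card]; exact Ideal.mem_span_singleton_self _
    rw [hd, Ideal.mem_span_singleton, hd'] at h1
    exact (hE.cancel hps 1 (by simpa using h1)).trans hd'q
  have hdq : ∀ k ≤ s, d k ∣ q := by
    intro k hk
    refine dvd_trans ?_ hdsq
    have := detIdeal_anti F hk
    rwa [hd, hd, Ideal.span_singleton_le_span_singleton] at this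
  have hds : d s ≠ 0 := fun h => hE.q0 (zero_dvd_iff.1 (h ▸ hdsq))
  obtain ⟨s', hs', U, F0, hU, hUF⟩ := left_form hQ (F.map ε) (r := s) (d := d s)
    (by rw [detIdeal_map, hd, Ideal.map_span, Set.image_singleton, hE.fix _ hdsq]) hds
    (by rw [detIdeal_card, ← RingHom.mapMatrix_apply, ← RingHom.map_det, (hE.dvd_iff _).1 ⟨d', hd'⟩]; simp)
  obtain rfl : s' = 1 := by omega
  have hUε : IsUnit (U.map ε).det := by
    have := hU.map ε; rwa [RingHom.map_det] at this
  have hlast : ∀ j, p ∣ (U.map ε * F) (Fin.last s) j := by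
    intro j
    have h1 := congrFun (congrFun hUF (Sum.inr 0)) j
    have hb : blk hs' (Sum.inr 0) = Fin.last s := by ext; simp [blk]
    rw [submatrix_apply, hb, fromRows_apply_inr, id, Matrix.zero_apply] at h1
    rw [hE.dvd_iff]
    have h2 := congrArg ε h1
    rw [map_zero] at h2
    rw [← h2, Matrix.mul_apply, Matrix.mul_apply, map_sum, map_sum]
    refine Finset.sum_congr rfl fun x _ => ?_
    rw [map_mul, map_mul, map_apply, map_apply, hE.idem, hE.idem]
  choose w hw using hlast
  let F1 : Matrix (Fin (s + 1)) (Fin (s + 1)) R := Matrix.of fun i j =>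
    if i = Fin.last s then w j else (U.map ε * F) i j
  have hF1 : U.map ε * F = PD s p * F1 := by
    ext i j
    rw [PD, diagonal_mul]
    simp only [F1, of_apply]
    by_cases hi : i = Fin.last s
    · rw [if_pos hi, if_pos hi, hi, hw]
    · rw [if_neg hi, if_neg hi, one_mul]
  have hMEq : MEq F (PD s p * F1) := by rw [← hF1]; exact (MEq.left hUε F).symm
  refine Good.of_MEq hMEq (step_PD hQ hE IH F1 d (fun k hk => ?_) hdq ?_)
  · rw [← hMEq.detIdeal_eq, hd]
  · have h1 := congrArg Matrix.det hF1
    rw [det_mul, det_mul, PD_det, hd', mul_left_comm] at h1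
    rw [← mul_left_cancel₀ hE.p0 h1]
    exact ((hUε.mul_left_dvd).2 dvd_rfl).trans hd'q
end Step
end SF

set_option linter.unusedSectionVars false
set_option linter.unusedSimpArgs false

namespace SF
section Trans
variable {A B : Type*} [CommRing A] [CommRing B]

lemma PIM.map (φ : A →+* B) {r : ℕ} {F : Matrix (Fin r) (Fin r) A} (hF : PIM F) : PIM (F.map φ) := by
  intro k
  obtain ⟨d, hd⟩ := hF k
  exact ⟨φ d, by rw [detIdeal_map, hd, Ideal.map_span, Set.image_singleton]⟩

lemma Good.map (φ : A →+* B) {r : ℕ} {F : Matrix (Fin r) (Fin r) A} (hF : Good F) :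
    Good (F.map φ) := by
  obtain ⟨Φ, h1, h2⟩ := hF
  refine ⟨fun i => φ (Φ i), ?_, fun k hk => ?_⟩
  · have h3 := h1.map φ
    rw [diagonal_map (map_zero φ)] at h3
    exact h3
  · rw [detIdeal_map, h2 k hk, Ideal.map_span, Set.image_singleton, map_prod]

lemma transport (e : A ≃+* B) (q : A)
    (hB : ∀ r (F : Matrix (Fin r) (Fin r) B), PIM F → F.det ∣ e q → Good F)
    (r : ℕ) (F : Matrix (Fin r) (Fin r) A) (hF : PIM F) (hd : F.det ∣ q) : Good F := by
  have h1 := hB r (F.map (e : A →+* B)) (hF.map _) (by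
    rw [← RingHom.mapMatrix_apply, ← RingHom.map_det]
    exact map_dvd (e : A →+* B) hd)
  have h2 := h1.map (e.symm : B →+* A)
  have h3 : (F.map (e : A →+* B)).map (e.symm : B →+* A) = F := by ext i j; simp
  rwa [h3] at h2
end Trans

section Conc
variable {K : Type*} [Field K]

/-- the change of rings making the last variable a coefficient -/
noncomputable def Om (K : Type*) [Field K] (k : ℕ) :
    MvPolynomial (Fin (k + 1)) K ≃ₐ[K] MvPolynomial (Fin k) (Polynomial K) :=
  (renameEquiv K finSuccEquivLast).trans (optionEquivRight K (Fin k))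

lemma Om_last (k : ℕ) : Om K k (X (Fin.last k)) = C Polynomial.X := by
  simp [Om, optionEquivRight_X_none]

lemma base (k : ℕ) (h : MvPolynomial (Fin (k + 1)) K) (hh : h ∈ supported K {Fin.last k})
    (h0 : h ≠ 0) (r : ℕ) (F : Matrix (Fin r) (Fin r) (MvPolynomial (Fin (k + 1)) K))
    (hF : PIM F) (hd : F.det ∣ h) : Good F := by
  rw [supported, Set.image_singleton, Algebra.adjoin_singleton_eq_range_aeval] at hh
  obtain ⟨p, hp⟩ := hh
  have hp' : Polynomial.aeval (X (Fin.last k)) p = h := hp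
  have hOm : Om K k h = C p := by
    rw [← hp']
    refine (Polynomial.aeval_algHom_apply (Om K k).toAlgHom (X (Fin.last k)) p).symm.trans ?_
    change Polynomial.aeval (Om K k (X (Fin.last k))) p = _
    rw [Om_last]
    have h1 : Polynomial.aeval (C (σ := Fin k) (Polynomial.X : Polynomial K)) p =
        IsScalarTower.toAlgHom K (Polynomial K) (MvPolynomial (Fin k) (Polynomial K))
          (Polynomial.aeval Polynomial.X p) := by
      rw [← Polynomial.aeval_algHom_apply]; rfl
    rw [h1, Polynomial.aeval_X_left_apply]; rfl
  have hp0 : p ≠ 0 := by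
    rintro rfl
    rw [map_zero] at hp'
    exact h0 hp'.symm
  have hQ : HQ (MvPolynomial (Fin k) (Polynomial K)) :=
    HQ.of_equiv (Om K k).toRingEquiv (HQ_mv K (k + 1))
  refine transport (Om K k).toRingEquiv h ?_ r F hF hd
  intro r F hF hd
  refine thmB k hQ p hp0 r F hF ?_
  rw [← hOm]; exact hd

/-- substitution of `g` for the variable `a` -/
noncomputable def sb {k : ℕ} (a : Fin k) (g : MvPolynomial (Fin k) K) :
    MvPolynomial (Fin k) K →ₐ[K] MvPolynomial (Fin k) K :=
  aeval fun i => if i = a then g else X i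

lemma sb_fix {k : ℕ} (a : Fin k) (g : MvPolynomial (Fin k) K) {S : Set (Fin k)} (hS : a ∉ S)
    {x : MvPolynomial (Fin k) K} (hx : x ∈ supported K S) : sb a g x = x := by
  rw [supported] at hx
  induction hx using Algebra.adjoin_induction with
  | mem x hx =>
    obtain ⟨i, hi, rfl⟩ := hx
    rw [sb, aeval_X, if_neg]
    rintro rfl
    exact hS hi
  | algebraMap r => exact AlgHom.commutes _ _
  | add x y _ _ hx hy => rw [map_add, hx, hy]
  | mul x y _ _ hx hy => rw [map_mul, hx, hy]

lemma sb_sub {k : ℕ} (a : Fin k) (g x : MvPolynomial (Fin k) K) : X a - g ∣ x - sb a g x := by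
  rw [← Ideal.mem_span_singleton, ← Ideal.Quotient.eq]
  have h : (Ideal.Quotient.mkₐ K (Ideal.span {X a - g})) =
      (Ideal.Quotient.mkₐ K (Ideal.span {X a - g})).comp (sb a g) := by
    apply MvPolynomial.algHom_ext
    intro i
    rw [AlgHom.comp_apply, sb, aeval_X]
    split_ifs with hi
    · subst hi
      exact Ideal.Quotient.eq.2 (Ideal.mem_span_singleton_self _)
    · rfl
  exact congrArg (fun φ : _ →ₐ[K] _ => φ x) h

lemma mk_Eps {k : ℕ} (a : Fin k) (g q : MvPolynomial (Fin k) K) {S : Set (Fin k)} (hS : a ∉ S)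
    (hg : g ∈ supported K S) (hq : q ∈ supported K S) (hq0 : q ≠ 0) :
    Eps (sb a g : MvPolynomial (Fin k) K →+* MvPolynomial (Fin k) K) (X a - g) q where
  ep := by
    change sb a g (X a - g) = 0
    rw [map_sub, sb_fix a g hS hg, sb, aeval_X, if_pos rfl, sub_self]
  sub := sb_sub a g
  fix := by
    rintro d ⟨e, rfl⟩
    have hd := left_ne_zero_of_mul hq0
    have he := right_ne_zero_of_mul hq0
    have h1 := degreeOf_mul_eq (n := a) hd he
    have h2 : (d * e).degreeOf a = 0 := by
      by_contra hc
      rw [← ne_eq, ← mem_vars_iff_degreeOf_ne_zero] at hc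
      exact hS (mem_supported.1 hq hc)
    have h3 : d.degreeOf a = 0 := by omega
    refine sb_fix a g (S := d.vars) ?_ (mem_supported_vars d)
    intro hc
    exact (mem_vars_iff_degreeOf_ne_zero.1 hc) h3
  p0 := by
    intro h0
    have h1 := sub_eq_zero.1 h0
    rw [← h1, X_mem_supported] at hg
    exact hS hg
  q0 := hq0

theorem thmZ (k : ℕ) (f : Fin (k + 1) → MvPolynomial (Fin (k + 1)) K)
    (hf : ∀ t, t ≠ Fin.last k → f t ∈ supported K {u | t < u})
    (h : MvPolynomial (Fin (k + 1)) K) (hh : h ∈ supported K {Fin.last k}) (h0 : h ≠ 0)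
    (T : Finset (Fin (k + 1))) : (∀ t ∈ T, t ≠ Fin.last k) → ∀ (r : ℕ)
    (F : Matrix (Fin r) (Fin r) (MvPolynomial (Fin (k + 1)) K)), PIM F →
    F.det ∣ (∏ t ∈ T, (X t - f t)) * h → Good F := by
  induction T using Finset.induction_on_min with
  | empty =>
    intro _ r F hF hd
    exact base k h hh h0 r F hF (by simpa using hd)
  | insert a s has ih =>
    intro hT r F hF hd
    have ha : a ∉ s := fun hc => lt_irrefl _ (has a hc)
    have hal : a ≠ Fin.last k := hT a (Finset.mem_insert_self _ _)
    rw [Finset.prod_insert ha, mul_assoc] at hd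
    have hXne : ∀ t, t ≠ Fin.last k → X t - f t ≠ 0 := by
      intro t ht hc
      have h1 := hf t ht
      rw [← sub_eq_zero.1 hc, X_mem_supported] at h1
      exact lt_irrefl t h1
    refine step (HQ_mv K (k + 1)) (mk_Eps a (f a) ((∏ t ∈ s, (X t - f t)) * h)
      (S := {u | a < u}) (by simp) (hf a hal) ?_ ?_)
      (ih fun t ht => hT t (Finset.mem_insert_of_mem ht)) r F hF hd
    · refine Subalgebra.mul_mem _ (Subalgebra.prod_mem _ fun t ht => Subalgebra.sub_mem _ ?_ ?_) ?_
      · exact X_mem_supported.2 (has t ht)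
      · refine supported_mono ?_ (hf t (hT t (Finset.mem_insert_of_mem ht)))
        intro u hu
        exact lt_trans (has t ht) hu
      · refine supported_mono ?_ hh
        rintro u rfl
        exact lt_of_le_of_ne (Fin.le_last a) hal
    · refine mul_ne_zero (Finset.prod_ne_zero_iff.2 fun t ht => ?_) h0
      exact hXne t (hT t (Finset.mem_insert_of_mem ht))
end Conc
end SF

set_option linter.unusedSectionVars false
set_option linter.unusedSimpArgs false

namespace SF
section Final
variable {A : Type*} [CommRing A]

lemma span_minors {l m : ℕ} (F : Matrix (Fin l) (Fin m) A) (k : ℕ) :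
    Ideal.span (minorsSet F k) = detIdeal F k := by
  apply le_antisymm
  · refine Ideal.span_le.2 ?_
    rintro _ ⟨r, c, rfl⟩
    exact minor_mem _ _ _
  · refine detIdeal_le fun f g => ?_
    by_cases hf : Function.Injective f
    · by_cases hg : Function.Injective g
      · exact Ideal.subset_span ⟨⟨f, hf⟩, ⟨g, hg⟩, rfl⟩
      · rw [Function.Injective] at hg
        push Not at hg
        obtain ⟨i, j, hij, hne⟩ := hg
        rw [det_zero_of_column_eq hne (by intro x; simp [hij])]
        exact Ideal.zero_mem _
    · rw [Function.Injective] at hf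
      push Not at hf
      obtain ⟨i, j, hij, hne⟩ := hf
      rw [det_zero_of_row_eq hne (by ext x; simp [hij])]
      exact Ideal.zero_mem _

lemma isGcd_of_span {l m : ℕ} {F : Matrix (Fin l) (Fin m) A} {k : ℕ} {d : A}
    (h : detIdeal F k = Ideal.span {d}) : IsGcdMinors F k d := by
  rw [← span_minors] at h
  constructor
  · intro p hp
    rw [← Ideal.mem_span_singleton, ← h]
    exact Ideal.subset_span hp
  · intro e he
    rw [← Ideal.mem_span_singleton]
    have h1 : Ideal.span (minorsSet F k) ≤ Ideal.span {e} :=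
      Ideal.span_le.2 fun p hp => Ideal.mem_span_singleton.2 (he p hp)
    rw [h] at h1
    exact h1 (Ideal.mem_span_singleton_self d)

lemma le_of_isGcd {l m : ℕ} {F : Matrix (Fin l) (Fin m) A} {k : ℕ} {d : A}
    (h : IsGcdMinors F k d) : detIdeal F k ≤ Ideal.span {d} := by
  rw [← span_minors]
  exact Ideal.span_le.2 fun p hp => Ideal.mem_span_singleton.2 (h.1 p hp)

lemma span_of_JkUnit {l m : ℕ} {F : Matrix (Fin l) (Fin m) A} {k : ℕ} {d : A}
    (h : IsGcdMinors F k d) (hJ : JkUnit F k) : detIdeal F k = Ideal.span {d} := by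
  obtain ⟨d', h1, h2⟩ := hJ
  apply le_antisymm (le_of_isGcd h)
  have h3 : Ideal.span {d'} * reducedIdeal F k d' ≤ detIdeal F k := by
    rw [reducedIdeal, Ideal.span_mul_span', ← span_minors, Set.singleton_mul]
    refine Ideal.span_mono ?_
    rintro _ ⟨v, hv, rfl⟩
    exact hv
  rw [h2, Ideal.mul_top] at h3
  refine le_trans ?_ h3
  rw [Ideal.span_singleton_le_span_singleton]
  exact h.2 _ h1.1

lemma JkUnit_of_span [IsDomain A] {l m : ℕ} {F : Matrix (Fin l) (Fin m) A} {k : ℕ} {d : A}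
    (h : detIdeal F k = Ideal.span {d}) (hd : d ≠ 0) : JkUnit F k := by
  have hg := isGcd_of_span h
  refine ⟨d, hg, ?_⟩
  have h1 : Ideal.span (minorsSet F k) ≤ Ideal.span {d} * reducedIdeal F k d := by
    refine Ideal.span_le.2 fun p hp => ?_
    obtain ⟨v, rfl⟩ := hg.1 p hp
    exact Ideal.mul_mem_mul (Ideal.mem_span_singleton_self d) (Ideal.subset_span hp)
  rw [span_minors, h] at h1
  have h2 := h1 (Ideal.mem_span_singleton_self d)
  rw [Ideal.mem_span_singleton_mul] at h2
  obtain ⟨u, hu, hdu⟩ := h2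
  rw [Ideal.eq_top_iff_one]
  have : u = 1 := mul_left_cancel₀ hd (by rw [hdu, mul_one])
  rwa [this] at hu

lemma prodIic (Ψ : ℕ → A) {l : ℕ} (i : Fin l) :
    ∏ j ∈ Finset.Iic i, Ψ j = ∏ j ∈ Finset.range (i + 1), Ψ j := by
  have h : Finset.range ((i : ℕ) + 1) = (Finset.Iic i).map Fin.valEmbedding := by
    rw [Fin.map_valEmbedding_Iic]
    ext x; simp [Nat.lt_succ_iff]
  rw [h, Finset.prod_map]
  rfl

lemma rank_ne {l m r : ℕ} {F : Matrix (Fin l) (Fin m) A} (h : HasRank F r) : detIdeal F r ≠ ⊥ := by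
  obtain ⟨⟨p, hp, hp0⟩, _⟩ := h
  intro hb
  have h1 : p ∈ detIdeal F r := by rw [← span_minors]; exact Ideal.subset_span hp
  rw [hb] at h1
  exact hp0 h1

lemma rank_bot {l m r : ℕ} {F : Matrix (Fin l) (Fin m) A} (h : HasRank F r) :
    detIdeal F (r + 1) = ⊥ := by
  rw [← span_minors, Ideal.span_eq_bot]
  exact h.2

lemma forward [IsDomain A] {l m r : ℕ} (hlm : l < m) (hrl : r ≤ l) (F : Matrix (Fin l) (Fin m) A)
    (hr : HasRank F r) (hS : SmithEquivAt F r) (k : ℕ) (hk1 : 1 ≤ k) (hkr : k ≤ r) :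
    JkUnit F k := by
  obtain ⟨Φ, h1, _, h3⟩ := hS
  have h3' : MEq F (smithDiag Φ) := h3
  obtain ⟨i, rfl⟩ : ∃ i, k = i + 1 := ⟨k - 1, by omega⟩
  have hil : i < l := by omega
  have hg := h1 ⟨i, hil⟩ (by simp; omega)
  simp only at hg
  let Ψ : ℕ → A := fun j => if h : j < l then Φ ⟨j, h⟩ else 0
  have hΨ : ∀ j : Fin l, Φ j = Ψ j := by intro j; simp [Ψ]
  have hprod : ∏ j ∈ Finset.Iic (⟨i, hil⟩ : Fin l), Φ j = ∏ j ∈ Finset.range (i + 1), Ψ j := by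
    rw [← prodIic Ψ ⟨i, hil⟩]
    exact Finset.prod_congr rfl fun j _ => hΨ j
  rw [hprod] at hg
  have hmem : ∏ j ∈ Finset.range (i + 1), Ψ j ∈ detIdeal F (i + 1) := by
    rw [h3'.detIdeal_eq]
    have h4 := minor_mem (smithDiag Φ : Matrix (Fin l) (Fin m) A) (k := i + 1)
      (Fin.castLE (by omega)) (Fin.castLE (by omega))
    have h5 : (smithDiag Φ : Matrix (Fin l) (Fin m) A).submatrix
        (Fin.castLE (show i + 1 ≤ l by omega)) (Fin.castLE (show i + 1 ≤ m by omega)) =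
        diagonal fun j : Fin (i + 1) => Ψ j := by
      ext a b
      simp only [submatrix_apply, smithDiag, of_apply, diagonal_apply, Fin.ext_iff, hΨ,
        Fin.val_castLE]
    rw [h5, det_diagonal, Fin.prod_univ_eq_prod_range (fun j => Ψ j)] at h4
    exact h4
  have heq : detIdeal F (i + 1) = Ideal.span {∏ j ∈ Finset.range (i + 1), Ψ j} := by
    apply le_antisymm (le_of_isGcd hg)
    rw [Ideal.span_singleton_le_iff_mem]
    exact hmem
  refine JkUnit_of_span heq ?_
  intro h0
  rw [h0, Ideal.span_singleton_eq_bot.2 rfl] at heq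
  apply rank_ne hr
  rw [eq_bot_iff, ← heq]
  exact detIdeal_anti F hkr

lemma backward [IsDomain A] (hQ : HQ A) {l m r : ℕ} (F : Matrix (Fin l) (Fin m) A) (hr : HasRank F r)
    (hP : ∀ k, ∃ d, detIdeal F k = Ideal.span {d}) (D : A) (hD : detIdeal F r = Ideal.span {D})
    (hZ : ∀ G : Matrix (Fin r) (Fin r) A, PIM G → G.det ∣ D → Good G) : SmithEquivAt F r := by
  have hD0 : D ≠ 0 := by
    rintro rfl
    apply rank_ne hr
    rw [hD]; simp
  obtain ⟨s, hs, U, F1, hU, hUF⟩ := left_form hQ F hD hD0 (rank_bot hr)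
  have hF1 : ∀ k, detIdeal F1 k = detIdeal F k := by
    intro k
    rw [← detIdeal_fromRows_zero (ν := Fin s), ← hUF]
    have := detIdeal_equiv (U * F) (blk hs) (Equiv.refl _) k
    rw [Equiv.coe_refl] at this
    rw [this, (MEq.left hU F).detIdeal_eq]
  obtain ⟨s', hs', V, F2, hV, hVF⟩ := right_form hQ F1 (by rw [hF1, hD]) hD0
    (by rw [hF1, rank_bot hr])
  have hF2 : ∀ k, detIdeal F2 k = detIdeal F k := by
    intro k
    rw [← detIdeal_fromCols_zero (ν := Fin s'), ← hVF]
    have := detIdeal_equiv (F1 * V) (Equiv.refl _) (blk hs') k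
    rw [Equiv.coe_refl] at this
    rw [this, (MEq.right hV F1).detIdeal_eq, hF1]
  obtain ⟨Φ, hM, hI⟩ := hZ F2 (fun k => by rw [hF2]; exact hP k) (by
    have h1 := hF2 r
    rw [detIdeal_card, hD] at h1
    rw [← Ideal.mem_span_singleton, h1]
    exact Ideal.mem_span_singleton_self _)
  have hblock : (U * F * V).submatrix (blk hs) (blk hs') =
      fromBlocks F2 0 0 (0 : Matrix (Fin s) (Fin s') A) := by
    have h1 : (U * F * V).submatrix (blk hs) id = fromRows (F1 * V) 0 := by
      have h2 : (U * F * V).submatrix (blk hs) id = (U * F).submatrix (blk hs) id * V := by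
        ext i j; rfl
      rw [h2, hUF, fromRows_mul, Matrix.zero_mul]
    have h3 : (U * F * V).submatrix (blk hs) (blk hs') =
        ((U * F * V).submatrix (blk hs) id).submatrix id (blk hs') := rfl
    rw [h3, h1]
    have h4 : (fromRows (F1 * V) (0 : Matrix (Fin s) (Fin m) A)).submatrix id (blk hs') =
        fromRows ((F1 * V).submatrix id (blk hs')) 0 := by
      ext i j; rcases i with i | i <;> rfl
    rw [h4, hVF]
    ext i j
    rcases i with i | i <;> rcases j with j | j <;> rfl
  have hMF : MEq F (U * F * V) := (((MEq.left hU F).symm).trans ((MEq.right hV (U * F)).symm))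
  have hM2 : MEq (F.submatrix (blk hs) (blk hs')) (fromBlocks (diagonal fun i : Fin r => Φ i) 0 0
      (0 : Matrix (Fin s) (Fin s') A)) := by
    have h1 := hMF.submatrix (blk hs) (blk hs')
    rw [hblock] at h1
    exact h1.trans (hM.fromBlocks (MEq.refl 0))
  have hM3 := hM2.submatrix (blk hs).symm (blk hs').symm
  simp only [submatrix_submatrix, Equiv.self_comp_symm, submatrix_id_id] at hM3
  let Ψ : ℕ → A := fun i => if i < r then Φ i else 0
  have hsm : (fromBlocks (diagonal fun i : Fin r => Φ i) 0 0
      (0 : Matrix (Fin s) (Fin s') A)).submatrix (blk hs).symm (blk hs').symm =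
      smithDiag fun i : Fin l => Ψ i := by
    ext i j
    obtain ⟨i, rfl⟩ := (blk hs).surjective i
    obtain ⟨j, rfl⟩ := (blk hs').surjective j
    rw [submatrix_apply, Equiv.symm_apply_apply, Equiv.symm_apply_apply]
    rcases i with i | i <;> rcases j with j | j
    · simp [smithDiag, blk, Ψ, diagonal_apply, Fin.ext_iff]
    · have : (i : ℕ) ≠ r + j := by omega
      simp [smithDiag, blk, Ψ, this]
    · simp [smithDiag, blk, Ψ]
    · simp [smithDiag, blk, Ψ]
  rw [hsm] at hM3
  refine ⟨fun i => Ψ i, ?_, ?_, hM3⟩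
  · intro i hi
    rw [prodIic Ψ i]
    apply isGcd_of_span
    rw [← hF2, hI _ (by omega)]
    congr 2
    refine Finset.prod_congr rfl fun j hj => ?_
    rw [Finset.mem_range] at hj
    simp [Ψ, show j < r by omega]
  · intro i hi
    simp [Ψ]; omega
end Final
end SF

/-- Here `z_i` is `X ⟨i-1⟩`; the product `(z_1-f_1)⋯(z_{n-1}-f_{n-1})` is written
as a product over the indices `t : Fin n` with `(t : ℕ) < n - 1`. -/
theorem statement7 {K : Type*} [Field K] (n : ℕ) (hn : 2 ≤ n) (l m r : ℕ) (hlm : l < m)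
    (hr1 : 1 ≤ r) (hrl : r ≤ l)
    (f : ℕ → MvPolynomial (Fin n) K)
    (hfsup : ∀ i : ℕ, 1 ≤ i → i ≤ n - 1 →
      f i ∈ MvPolynomial.supported K {t : Fin n | i ≤ (t : ℕ)})
    (h : MvPolynomial (Fin n) K)
    (hh : h ∈ MvPolynomial.supported K {(⟨n - 1, by omega⟩ : Fin n)})
    (F : Matrix (Fin l) (Fin m) (MvPolynomial (Fin n) K))
    (hrank : HasRank F r)
    (hd : IsGcdMinors F r ((∏ t ∈ Finset.univ.filter (fun t : Fin n => (t : ℕ) < n - 1),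
      (MvPolynomial.X t - f ((t : ℕ) + 1))) * h)) :
    SmithEquivAt F r ↔ ∀ k : ℕ, 1 ≤ k → k ≤ r → JkUnit F k := by
  constructor
  · intro hS k hk1 hkr
    exact SF.forward hlm hrl F hrank hS k hk1 hkr
  · intro hJ
    obtain ⟨k, rfl⟩ : ∃ k, n = k + 1 := ⟨n - 1, by omega⟩
    have hD := SF.span_of_JkUnit hd (hJ r hr1 le_rfl)
    have hlast : (⟨k + 1 - 1, by omega⟩ : Fin (k + 1)) = Fin.last k := by ext; simp
    rw [hlast] at hh
    refine SF.backward (SF.HQ_mv K (k + 1)) F hrank ?_ _ hD ?_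
    · intro j
      rcases Nat.eq_zero_or_pos j with rfl | hj
      · exact ⟨1, by rw [SF.detIdeal_zero, Ideal.span_singleton_one]⟩
      · rcases Nat.lt_or_ge r j with h1 | h1
        · refine ⟨0, ?_⟩
          rw [Ideal.span_singleton_eq_bot.2 rfl, eq_bot_iff, ← SF.rank_bot hrank]
          exact SF.detIdeal_anti F h1
        · obtain ⟨d, hd1, hd2⟩ := hJ j hj h1
          exact ⟨d, SF.span_of_JkUnit hd1 ⟨d, hd1, hd2⟩⟩
    · have h0 : h ≠ 0 := by
        rintro rfl
        apply SF.rank_ne hrank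
        rw [hD]; simp
      refine SF.thmZ k (fun t => f ((t : ℕ) + 1)) ?_ h hh h0 _ ?_ r
      · intro t ht
        have ht' : (t : ℕ) < k := by
          rcases lt_or_eq_of_le (Nat.lt_succ_iff.1 t.2) with h1 | h1
          · exact h1
          · exact absurd (Fin.ext (by simpa using h1)) ht
        exact hfsup ((t : ℕ) + 1) (by omega) (by omega)
      · intro t ht
        rw [Finset.mem_filter] at ht
        rintro rfl
        simp at ht
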